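/- arXiv:1212.1392 — 3 statements merged into one kernel-verified Lean document; each statement's English description precedes it below -/
import Mathlib

section
/- Let p be a prime with p ≡ 1 (mod 4) and 2^{p−1} ≡ 1 (mod p^2), and let q1 be a prime factor of p − 2 such that q1^{p−1} ≢ 1 (mod p^2). If n1 and n2 are positive composite numbers such that ℚ(√(4q1^2 − p^{n1})) ≠ ℚ(√(−1)), ℚ(√(4q1^2 − p^{n2})) ≠ ℚ(√(−1)), and ℚ(√(4q1^2 − p^{n1})) = ℚ(√(4q1^2 − p^{n2})) (equivalently, the squarefree parts of 4q1^2 − p^{n1} and 4q1^2 − p^{n2} coincide and neither equals −1), then n1 = n2. -/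
/-- `allBelow P d a` tests `P` on the `2 ^ d` numbers `i` with `i / 2 ^ d = a`. It is written with
recursors so that the kernel evaluates it quickly. -/
def allBelow (P : ℕ → Bool) (d : ℕ) : ℕ → Bool :=
  Nat.rec (motive := fun _ => ℕ → Bool) P
    (fun _ r a => Bool.rec false (r (Nat.succ (Nat.mul a (nat_lit 2))))
      (r (Nat.mul a (nat_lit 2)))) d

theorem allBelow_succ (P : ℕ → Bool) (d a : ℕ) :
    allBelow P (d + 1) a = (allBelow P d (a * 2) && allBelow P d (a * 2 + 1)) := by
  change Bool.rec (motive := fun _ => Bool) false (allBelow P d (a * 2 + 1))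
    (allBelow P d (a * 2)) = _
  cases allBelow P d (a * 2) <;> rfl

theorem allBelow_spec {P : ℕ → Bool} {d a : ℕ} (h : allBelow P d a = true) {i : ℕ}
    (hi : i / 2 ^ d = a) : P i = true := by
  induction d generalizing a with
  | zero =>
    obtain rfl : i = a := by simpa using hi
    exact h
  | succ d ih =>
    rw [allBelow_succ, Bool.and_eq_true] at h
    rw [pow_succ, ← Nat.div_div_eq_div_mul] at hi
    rcases Nat.even_or_odd' (i / 2 ^ d) with ⟨k, hk | hk⟩
    · exact ih h.1 (by omega)
    · exact ih h.2 (by omega)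

/-- `2 ^ (4 * a)` modulo `m`. -/
def powTwoMod (a m : ℕ) : ℕ :=
  Nat.mod (Nat.mul (Nat.pow (Nat.mod (Nat.pow (nat_lit 2) (Nat.div a (nat_lit 128))) m)
    (nat_lit 512)) (Nat.pow (nat_lit 16) (Nat.mod a (nat_lit 128)))) m

set_option exponentiation.threshold 512 in
theorem powTwoMod_eq (a m : ℕ) : powTwoMod a m = 2 ^ (4 * a) % m := by
  change ((2 ^ (a / 128) % m) ^ 512 * 16 ^ (a % 128)) % m = _
  have h : 2 ^ (4 * a) = (2 ^ (a / 128)) ^ 512 * 16 ^ (a % 128) := by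
    rw [show 16 = 2 ^ 4 from rfl, ← pow_mul, ← pow_mul, ← pow_add]
    congr 1
    omega
  rw [h, Nat.mul_mod, ← Nat.pow_mod, ← Nat.mul_mod]

/-- The number `4 * a + 1` has a small prime factor or is not a Wieferich number. -/
def nonWieferich (a : ℕ) : Bool :=
  Bool.rec true
    (Bool.rec true false (Nat.beq
      (powTwoMod a (Nat.pow (Nat.succ (Nat.mul (nat_lit 4) a)) (nat_lit 2))) (nat_lit 1)))
    (Nat.beq (Nat.gcd (Nat.succ (Nat.mul (nat_lit 4) a)) (nat_lit 15015)) (nat_lit 1))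

theorem ne_of_nonWieferich {a : ℕ} (h : nonWieferich a = true)
    (hg : Nat.gcd (4 * a + 1) 15015 = 1) : 2 ^ (4 * a) % (4 * a + 1) ^ 2 ≠ 1 := by
  intro hc
  have h1 : Nat.beq (Nat.gcd (Nat.succ (Nat.mul 4 a)) 15015) 1 = true := Nat.beq_eq.mpr hg
  have h2 : Nat.beq (powTwoMod a (Nat.pow (Nat.succ (Nat.mul 4 a)) 2)) 1 = true := by
    rw [Nat.beq_eq, powTwoMod_eq]
    exact hc
  unfold nonWieferich at h
  rw [h1, h2] at h
  exact Bool.noConfusion h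

set_option maxRecDepth 10000 in
theorem allBelow_nonWieferich :
    allBelow (fun a => or (nonWieferich a) (or (Nat.beq a 0) (Nat.beq a 273))) 17 0 = true := by
  decide +kernel

theorem wieferich_eq_1093 {p : ℕ} (hp : p.Prime) (hmod : p % 4 = 1)
    (hw : 2 ^ (p - 1) ≡ 1 [MOD p ^ 2]) (hlt : p < 2 ^ 19) : p = 1093 := by
  obtain ⟨a, rfl⟩ : ∃ a, p = 4 * a + 1 := ⟨p / 4, by omega⟩
  have h := allBelow_spec allBelow_nonWieferich (i := a) (Nat.div_eq_of_lt (by omega))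
  have hw' : 2 ^ (4 * a) % (4 * a + 1) ^ 2 = 1 := by
    have h1 : 1 % (4 * a + 1) ^ 2 = 1 := Nat.mod_eq_of_lt (Nat.one_lt_pow two_ne_zero hp.one_lt)
    exact Eq.trans hw h1
  by_cases hg : Nat.gcd (4 * a + 1) 15015 = 1
  · simp only [Bool.or_eq_true, Nat.beq_eq] at h
    rcases h with h | h | h
    · exact absurd hw' (ne_of_nonWieferich h hg)
    · subst h
      exact absurd hp Nat.not_prime_one
    · subst h
      rfl
  · have hd : 4 * a + 1 ∣ 15015 := by
      by_contra hc
      exact hg ((Nat.Prime.coprime_iff_not_dvd hp).mpr hc)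
    have hd' : 4 * a + 1 ∣ 3 * 5 * 7 * 11 * 13 := hd
    simp only [hp.dvd_mul, Nat.prime_dvd_prime_iff_eq hp Nat.prime_three,
      Nat.prime_dvd_prime_iff_eq hp Nat.prime_five, Nat.prime_dvd_prime_iff_eq hp Nat.prime_seven,
      Nat.prime_dvd_prime_iff_eq hp Nat.prime_eleven,
      Nat.prime_dvd_prime_iff_eq hp (by norm_num : Nat.Prime 13)] at hd'
    rcases hd' with (((h | h) | h) | h) | h
    · omega
    · obtain rfl : a = 1 := by omega
      norm_num at hw'
    · omega
    · omega
    · obtain rfl : a = 3 := by omega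
      norm_num at hw'

namespace Zsqrtd

variable {D : ℕ}

theorem norm_neg_natCast (z : ℤ√(-(D : ℤ))) : z.norm = z.re ^ 2 + D * z.im ^ 2 := by
  rw [norm_def]; ring

theorem eq_one_or_neg_one_of_norm_eq_one (hD : 1 < D) {z : ℤ√(-(D : ℤ))} (hz : z.norm = 1) :
    z = 1 ∨ z = -1 := by
  rw [norm_neg_natCast] at hz
  have him : z.im = 0 := by
    by_contra h
    have h1 : 1 ≤ z.im ^ 2 := by have := sq_nonneg z.im; have := pow_ne_zero 2 h; omega
    have h2 : (2 : ℤ) ≤ D := by exact_mod_cast hD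
    nlinarith [sq_nonneg z.re]
  have hre : z.re ^ 2 = 1 ^ 2 := by rw [him] at hz; simpa using hz
  rcases sq_eq_sq_iff_eq_or_eq_neg.mp hre with h | h
  · left; ext <;> simp [h, him]
  · right; ext <;> simp [h, him]

/-- Divisibility between elements of prime power norm that are not divisible by the prime. -/
theorem exists_mul_of_norm_eq_prime_pow {p : ℕ} (hp : p.Prime) (hp2 : p ≠ 2) (hD : ¬ p ∣ D)
    {x y : ℤ√(-(D : ℤ))} {m n : ℕ} (hm : 0 < m) (hmn : m ≤ n) (hx : x.norm = p ^ m)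
    (hy : y.norm = p ^ n) (hpx : ¬ (p : ℤ) ∣ x.re) (hpy : ¬ (p : ℤ) ∣ y.re) :
    ∃ w : ℤ√(-(D : ℤ)), w.norm = p ^ (n - m) ∧ (y = x * w ∨ star y = x * w) := by
  have hP : Prime (p : ℤ) := Nat.prime_iff_prime_int.mp hp
  have hpD : ¬ (p : ℤ) ∣ D := fun h => hD (by exact_mod_cast h)
  have key : ∀ y : ℤ√(-(D : ℤ)), y.norm = p ^ n → (p : ℤ) ^ m ∣ y.im * x.re - y.re * x.im →
      ∃ w : ℤ√(-(D : ℤ)), w.norm = p ^ (n - m) ∧ y = x * w := by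
    intro y hy him
    have hnorm : (y * star x).norm = p ^ n * p ^ m := by rw [norm_mul, hy, norm_conj, hx]
    have him' : (p : ℤ) ^ m ∣ (y * star x).im := by
      have : (y * star x).im = y.im * x.re - y.re * x.im := by simp; ring
      rwa [this]
    have hre' : (p : ℤ) ^ m ∣ (y * star x).re := by
      rw [norm_neg_natCast] at hnorm
      rw [← Int.pow_dvd_pow_iff two_ne_zero]
      have h1 : ((p : ℤ) ^ m) ^ 2 ∣ (p : ℤ) ^ n * p ^ m := by
        rw [sq]; exact mul_dvd_mul_right (pow_dvd_pow _ hmn) _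
      have h2 : ((p : ℤ) ^ m) ^ 2 ∣ D * (y * star x).im ^ 2 :=
        Dvd.dvd.mul_left (pow_dvd_pow_of_dvd him' 2) _
      have h3 := dvd_sub h1 h2
      rwa [← hnorm, add_sub_cancel_right] at h3
    obtain ⟨w, hw⟩ := (intCast_dvd ((p : ℤ) ^ m) (y * star x)).mpr ⟨hre', him'⟩
    have hpm : ((p : ℤ) ^ m) ≠ 0 := pow_ne_zero _ hP.ne_zero
    have hxx : x * star x = (((p : ℤ) ^ m : ℤ) : ℤ√(-(D : ℤ))) := by
      rw [← norm_eq_mul_conj, hx]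
    have hyw : y = x * w := by
      have h0 : (((p : ℤ) ^ m : ℤ) : ℤ√(-(D : ℤ))) * y =
          (((p : ℤ) ^ m : ℤ) : ℤ√(-(D : ℤ))) * (x * w) := by
        calc _ = x * (y * star x) := by rw [← hxx]; ring
          _ = _ := by rw [hw]; ring
      have h1 := congrArg re h0
      have h2 := congrArg im h0
      rw [re_smul, re_smul] at h1
      rw [im_smul, im_smul] at h2
      ext
      · exact mul_left_cancel₀ hpm h1
      · exact mul_left_cancel₀ hpm h2
    refine ⟨w, ?_, hyw⟩
    have h1 := hy
    rw [hyw, norm_mul, hx, ← Nat.add_sub_cancel' hmn, pow_add] at h1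
    simpa using mul_left_cancel₀ hpm h1
  have hpyim : ¬ (p : ℤ) ∣ y.im := by
    intro h
    rw [norm_neg_natCast] at hy
    have h1 : (p : ℤ) ∣ (p : ℤ) ^ n := dvd_pow_self _ (by omega)
    rw [← hy] at h1
    have h2 := (Int.dvd_add_left (Dvd.dvd.mul_left (Dvd.dvd.pow h two_ne_zero) _)).mp h1
    exact hpy (hP.dvd_of_dvd_pow h2)
  have hprod : (p : ℤ) ^ m ∣ (y.im * x.re - y.re * x.im) * (y.im * x.re + y.re * x.im) := by
    have hcop : IsCoprime ((p : ℤ) ^ m) (D : ℤ) :=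
      IsCoprime.pow_left ((Prime.coprime_iff_not_dvd hP).mpr hpD)
    refine hcop.dvd_of_dvd_mul_left ?_
    rw [norm_neg_natCast] at hx hy
    have : (D : ℤ) * ((y.im * x.re - y.re * x.im) * (y.im * x.re + y.re * x.im)) =
        (p : ℤ) ^ n * x.re ^ 2 - p ^ m * y.re ^ 2 := by
      rw [← hx, ← hy]; ring
    rw [this]
    exact dvd_sub (Dvd.dvd.mul_right (pow_dvd_pow _ hmn) _) (dvd_mul_right _ _)
  by_cases h1 : (p : ℤ) ∣ y.im * x.re - y.re * x.im
  · have h2 : ¬ (p : ℤ) ∣ y.im * x.re + y.re * x.im := by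
      intro h2
      have h3 := dvd_add h1 h2
      have e : 2 * (y.im * x.re) =
          (y.im * x.re - y.re * x.im) + (y.im * x.re + y.re * x.im) := by ring
      have h4 : (p : ℤ) ∣ 2 * (y.im * x.re) := by rw [e]; exact h3
      rcases hP.dvd_or_dvd h4 with h | h
      · have : p ∣ 2 := by exact_mod_cast h
        exact hp2 ((Nat.prime_dvd_prime_iff_eq hp Nat.prime_two).mp this)
      · rcases hP.dvd_or_dvd h with h | h
        · exact hpyim h
        · exact hpx h
    have hcop : IsCoprime ((p : ℤ) ^ m) (y.im * x.re + y.re * x.im) :=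
      IsCoprime.pow_left ((Prime.coprime_iff_not_dvd hP).mpr h2)
    obtain ⟨w, hw, h⟩ := key y hy (hcop.dvd_of_dvd_mul_right hprod)
    exact ⟨w, hw, Or.inl h⟩
  · have hcop : IsCoprime ((p : ℤ) ^ m) (y.im * x.re - y.re * x.im) :=
      IsCoprime.pow_left ((Prime.coprime_iff_not_dvd hP).mpr h1)
    obtain ⟨w, hw, h⟩ := key (star y) (by rw [norm_conj, hy]) (by
      have e : (star y).im * x.re - (star y).re * x.im =
          -(y.im * x.re + y.re * x.im) := by rw [re_star, im_star]; ring
      rw [e, dvd_neg]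
      exact hcop.dvd_of_dvd_mul_left hprod)
    exact ⟨w, hw, Or.inr h⟩

/-- Elements of prime power norm are powers of one of minimal norm, up to sign and conjugation. -/
theorem eq_pow_of_norm_eq_prime_pow {p : ℕ} (hp : p.Prime) (hp2 : p ≠ 2) (hD1 : 1 < D)
    (hD : ¬ p ∣ D) {g : ℕ} (hg : 0 < g) {a : ℤ√(-(D : ℤ))} (ha : a.norm = p ^ g)
    (hpa : ¬ (p : ℤ) ∣ a.re)
    (hmin : ∀ n, 0 < n → ∀ y : ℤ√(-(D : ℤ)), y.norm = p ^ n → ¬ (p : ℤ) ∣ y.re → g ≤ n)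
    {n : ℕ} (hn : 0 < n) {y : ℤ√(-(D : ℤ))} (hy : y.norm = p ^ n) (hpy : ¬ (p : ℤ) ∣ y.re) :
    ∃ m, n = g * m ∧ (y = a ^ m ∨ y = -a ^ m ∨ star y = a ^ m ∨ star y = -a ^ m) := by
  have hP : Prime (p : ℤ) := Nat.prime_iff_prime_int.mp hp
  have hpD : ¬ (p : ℤ) ∣ D := fun h => hD (by exact_mod_cast h)
  induction n using Nat.strong_induction_on generalizing y with
  | _ n ih =>
  have hgn := hmin n hn y hy hpy
  obtain ⟨w, hw, hyw⟩ := exists_mul_of_norm_eq_prime_pow hp hp2 hD hg hgn ha hy hpa hpy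
  have hsuff : ∀ z : ℤ√(-(D : ℤ)), ¬ (p : ℤ) ∣ z.re → z = a * w →
      ∃ m, n = g * m ∧ (z = a ^ m ∨ z = -a ^ m) := by
    intro z hpz hz
    rcases hgn.eq_or_lt with h | h
    · subst h
      rw [Nat.sub_self, pow_zero] at hw
      refine ⟨1, (mul_one g).symm, ?_⟩
      rcases eq_one_or_neg_one_of_norm_eq_one hD1 hw with h | h
      · left; rw [hz, h]; ring
      · right; rw [hz, h]; ring
    · have hpw : ¬ (p : ℤ) ∣ w.re := by
        intro hpw
        have h1 : (p : ℤ) ∣ w.re ^ 2 + D * w.im ^ 2 := by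
          rw [← norm_neg_natCast, hw]; exact dvd_pow_self _ (by omega)
        have h2 := (Int.dvd_add_right (Dvd.dvd.pow hpw two_ne_zero)).mp h1
        have h3 : (p : ℤ) ∣ w.im := hP.dvd_of_dvd_pow ((hP.dvd_or_dvd h2).resolve_left hpD)
        apply hpz
        rw [hz, re_mul]
        exact dvd_add (Dvd.dvd.mul_left hpw _) (Dvd.dvd.mul_left h3 _)
      obtain ⟨m, hm, hwm⟩ := ih (n - g) (by omega) (by omega) hw hpw
      have hm0 : m ≠ 0 := by rintro rfl; simp at hm; omega
      have hbad : ∀ v : ℤ√(-(D : ℤ)), w = star a * v → False := by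
        intro v hv
        apply hpz
        have : a * w = (((p : ℤ) ^ g : ℤ) : ℤ√(-(D : ℤ))) * v := by
          rw [hv, ← mul_assoc, ← norm_eq_mul_conj, ha]
        rw [hz, this, re_smul]
        exact Dvd.dvd.mul_right (dvd_pow_self _ hg.ne') _
      obtain ⟨m', rfl⟩ := Nat.exists_eq_add_one_of_ne_zero hm0
      refine ⟨m' + 2, by rw [mul_add, mul_two]; rw [mul_add] at hm; omega, ?_⟩
      rcases hwm with h | h | h | h
      · left; rw [hz, h]; ring
      · right; rw [hz, h]; ring
      · refine (hbad (star a ^ m') ?_).elim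
        rw [← star_star w, h, star_pow, pow_succ']
      · refine (hbad (-star a ^ m') ?_).elim
        rw [← star_star w, h, star_neg, star_pow, pow_succ']; ring
  rcases hyw with h | h
  · obtain ⟨m, hm, h⟩ := hsuff y hpy h
    exact ⟨m, hm, h.elim Or.inl (fun h => Or.inr (Or.inl h))⟩
  · obtain ⟨m, hm, h⟩ := hsuff (star y) (by rwa [re_star]) h
    exact ⟨m, hm, h.elim (fun h => Or.inr (Or.inr (Or.inl h)))
      (fun h => Or.inr (Or.inr (Or.inr h)))⟩

end Zsqrtd

open Finset in
theorem Matrix.norm_det_le_factorial_mul_prod {M : ℕ} (G : Matrix (Fin M) (Fin M) ℂ) (B : Fin M → ℝ)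
    (h : ∀ i j, ‖G i j‖ ≤ B i) : ‖G.det‖ ≤ M.factorial * ∏ i, B i := by
  rw [← det_transpose, det_apply']
  refine (norm_sum_le _ _).trans ?_
  have : ∀ σ ∈ (univ : Finset (Equiv.Perm (Fin M))),
      ‖((Equiv.Perm.sign σ : ℤ) : ℂ) * ∏ i, G.transpose (σ i) i‖ ≤ ∏ i, B i := by
    intro σ _
    rw [norm_mul, norm_prod]
    have h1 : ‖((Equiv.Perm.sign σ : ℤ) : ℂ)‖ = 1 := by
      rcases Int.units_eq_one_or (Equiv.Perm.sign σ) with h | h <;> simp [h]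
    rw [h1, one_mul]
    exact prod_le_prod (fun _ _ => norm_nonneg _) (fun i _ => h i _)
  refine (sum_le_card_nsmul _ _ _ this).trans ?_
  simp [Fintype.card_perm]

theorem Differentiable.exists_eq_sum_add_pow_mul {f : ℂ → ℂ} (hf : Differentiable ℂ f) (M : ℕ) :
    ∃ (a : ℕ → ℂ) (h : ℂ → ℂ), Differentiable ℂ h ∧
      ∀ z, f z = ∑ n ∈ Finset.range M, a n * z ^ n + z ^ M * h z := by
  induction M with
  | zero => exact ⟨0, f, hf, by simp⟩
  | succ M ih =>
    obtain ⟨a, h, hh, hz⟩ := ih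
    refine ⟨fun n => if n < M then a n else h 0, dslope h 0, ?_, fun z => ?_⟩
    · rw [← differentiableOn_univ] at hh ⊢
      exact (Complex.differentiableOn_dslope Filter.univ_mem).mpr hh
    · have h1 : z * dslope h 0 z = h z - h 0 := by
        simpa using sub_smul_dslope h 0 z
      rw [hz z, Finset.sum_range_succ]
      simp only [lt_irrefl, if_false]
      rw [pow_succ, mul_assoc, h1]
      have h2 : ∑ n ∈ Finset.range M, (if n < M then a n else h 0) * z ^ n =
          ∑ n ∈ Finset.range M, a n * z ^ n :=
        Finset.sum_congr rfl fun n hn => by rw [if_pos (Finset.mem_range.mp hn)]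
      rw [h2]
      ring

theorem Differentiable.matrix_det {M : ℕ} {G : ℂ → Matrix (Fin M) (Fin M) ℂ}
    (h : ∀ i j, Differentiable ℂ fun z => G z i j) : Differentiable ℂ fun z => (G z).det := by
  simp only [Matrix.det_apply']
  refine Differentiable.fun_sum fun σ _ => ?_
  refine (differentiable_const _).mul (Differentiable.fun_finsetProd fun i _ => h _ _)

/-- An upper bound for a perturbed interpolation determinant. -/
theorem norm_interpolation_det_le {M : ℕ} {f : Fin M → ℂ → ℂ} (hf : ∀ i, Differentiable ℂ (f i))
    {u : Fin M → ℂ} (hu : Function.Injective u) {ρ : ℝ} (hρ : 1 ≤ ρ) {B : Fin M → ℝ}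
    (hB : ∀ i j z, ‖z‖ = ρ → ‖f i (z * u j)‖ ≤ B i) {ε : Fin M → Fin M → ℂ}
    (hε : ∀ i j, ρ ^ M * ‖ε i j‖ ≤ B i) :
    ‖(Matrix.of fun i j => f i (u j) + ε i j).det‖ * ρ ^ (∑ n : Fin M, (n : ℕ)) ≤
      M.factorial * ∏ i, (2 * B i) := by
  choose a h hh hfa using fun i => (hf i).exists_eq_sum_add_pow_mul M
  set U : Matrix (Fin M) (Fin M) ℂ := (Matrix.vandermonde u).transpose with hU
  have hUdet : IsUnit U.det := by
    rw [hU, Matrix.det_transpose, isUnit_iff_ne_zero]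
    exact Matrix.det_vandermonde_ne_zero_iff.mpr hu
  set A : Matrix (Fin M) (Fin M) ℂ := Matrix.of fun i n => a i n with hA
  set H : ℂ → Matrix (Fin M) (Fin M) ℂ :=
    fun z => Matrix.of fun i j => u j ^ M * h i (z * u j) + ε i j with hH
  set G : ℂ → Matrix (Fin M) (Fin M) ℂ :=
    fun z => Matrix.of fun i j => f i (z * u j) + z ^ M * ε i j with hG
  set W : ℂ → Matrix (Fin M) (Fin M) ℂ :=
    fun z => A + H z * U⁻¹ * Matrix.diagonal (fun n : Fin M => z ^ (M - (n : ℕ))) with hW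
  have hGz : ∀ z, G z = W z * Matrix.diagonal (fun n : Fin M => z ^ (n : ℕ)) * U := by
    intro z
    have h1 : Matrix.diagonal (fun n : Fin M => z ^ (M - (n : ℕ))) *
        Matrix.diagonal (fun n : Fin M => z ^ (n : ℕ)) = z ^ M • 1 := by
      rw [Matrix.diagonal_mul_diagonal, Matrix.smul_one_eq_diagonal]
      congr 1
      funext n
      rw [← pow_add, Nat.sub_add_cancel n.isLt.le]
    have h2 : W z * Matrix.diagonal (fun n : Fin M => z ^ (n : ℕ)) * U =
        A * Matrix.diagonal (fun n : Fin M => z ^ (n : ℕ)) * U + z ^ M • H z := by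
      simp only [hW]
      rw [Matrix.add_mul, Matrix.add_mul, Matrix.mul_assoc (H z * U⁻¹), h1, Matrix.mul_smul,
        Matrix.mul_one, Matrix.smul_mul, Matrix.mul_assoc (H z), Matrix.nonsing_inv_mul _ hUdet,
        Matrix.mul_one]
    rw [h2]
    ext i j
    rw [Matrix.add_apply, Matrix.mul_apply]
    simp only [hG, hH, hA, hU, Matrix.of_apply, Matrix.smul_apply, smul_eq_mul,
      Matrix.mul_diagonal, Matrix.transpose_apply, Matrix.vandermonde_apply]
    rw [hfa i (z * u j), Finset.sum_range]
    simp only [mul_pow]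
    rw [mul_add, add_assoc]
    congr 1
    · exact Finset.sum_congr rfl fun n _ => by ring
    · ring
  set Φ : ℂ → ℂ := fun z => (W z).det * U.det with hΦ
  have hΦd : Differentiable ℂ Φ := by
    refine Differentiable.mul_const (Differentiable.matrix_det fun i j => ?_) _
    simp only [hW, hH, Matrix.add_apply, Matrix.mul_diagonal]
    simp only [Matrix.mul_apply, Matrix.of_apply]
    have hh' : ∀ j, Differentiable ℂ fun z => h i (z * u j) :=
      fun j => (hh i).comp (differentiable_id.mul_const _)
    fun_prop
  have hdet : ∀ z, (G z).det = z ^ (∑ n : Fin M, (n : ℕ)) * Φ z := by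
    intro z
    rw [hGz, Matrix.det_mul, Matrix.det_mul, Matrix.det_diagonal, Finset.prod_pow_eq_pow_sum]
    simp only [hΦ]
    ring
  have hρ0 : 0 < ρ := by linarith
  have hρs : 0 < ρ ^ (∑ n : Fin M, (n : ℕ)) := pow_pos hρ0 _
  have hbd : ∀ z ∈ frontier (Metric.ball (0 : ℂ) ρ), ‖Φ z‖ ≤
      (M.factorial * ∏ i, (2 * B i)) / ρ ^ (∑ n : Fin M, (n : ℕ)) := by
    intro z hz
    rw [frontier_ball _ hρ0.ne', mem_sphere_zero_iff_norm] at hz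
    rw [le_div_iff₀ hρs]
    have h1 := Matrix.norm_det_le_factorial_mul_prod (G z) (fun i => 2 * B i) (fun i j => by
      simp only [hG, Matrix.of_apply]
      refine (norm_add_le _ _).trans ?_
      rw [norm_mul, norm_pow, hz]
      linarith [hB i j z hz, hε i j])
    rw [hdet, norm_mul, norm_pow, hz] at h1
    linarith
  have h1 := Complex.norm_le_of_forall_mem_frontier_norm_le (U := Metric.ball (0 : ℂ) ρ)
    Metric.isBounded_ball hΦd.diffContOnCl hbd (z := 1) (by
      rw [closure_ball _ hρ0.ne']; simpa using hρ)
  rw [le_div_iff₀ hρs] at h1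
  have h2 : Φ 1 = (Matrix.of fun i j => f i (u j) + ε i j).det := by
    have := hdet 1
    rw [one_pow, one_mul] at this
    rw [← this]
    simp [hG]
  rwa [h2] at h1

theorem Matrix.exists_det_submatrix_ne_zero {m n : Type*} [Fintype m] [DecidableEq m] [Fintype n]
    {F : Type*} [Field F] {V : Matrix m n F} (h : ∀ c, Matrix.vecMul c V = 0 → c = 0) :
    ∃ g : m → n, Function.Injective g ∧ (V.submatrix id g).det ≠ 0 := by
  have hrow : LinearIndependent F V.row := by
    rw [← Matrix.vecMul_injective_iff]
    intro c d hcd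
    rw [← sub_eq_zero]
    exact h _ (by rw [Matrix.sub_vecMul, sub_eq_zero]; exact hcd)
  have hrank := hrow.rank_matrix
  obtain ⟨κ, a, ha, hspan, hli⟩ := exists_linearIndependent' F V.col
  have htop : Submodule.span F (Set.range V.col) = ⊤ := by
    apply Submodule.eq_top_of_finrank_eq
    rw [← Matrix.rank_eq_finrank_span_cols, hrank, Module.finrank_fintype_fun_eq_card]
  have : Finite κ := Finite.of_injective a ha
  have := Fintype.ofFinite κ
  have hcard : Fintype.card m = Fintype.card κ := by
    rw [← finrank_span_eq_card hli, hspan, htop, finrank_top,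
      Module.finrank_fintype_fun_eq_card]
  let e := Fintype.equivOfCardEq hcard
  refine ⟨a ∘ e, ha.comp e.injective, ?_⟩
  have h1 : LinearIndependent F (V.submatrix id (a ∘ e)).col := hli.comp e e.injective
  exact ((Matrix.isUnit_iff_isUnit_det _).mp
    (Matrix.linearIndependent_cols_iff_isUnit.mp h1)).ne_zero

open Polynomial in
theorem Polynomial.coeff_prod_sum_of_natDegree_le {ι R : Type*} [CommSemiring R] (s : Finset ι)
    (f : ι → R[X]) (d : ι → ℕ) (h : ∀ i ∈ s, (f i).natDegree ≤ d i) :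
    (∏ i ∈ s, f i).coeff (∑ i ∈ s, d i) = ∏ i ∈ s, (f i).coeff (d i) := by
  classical
  induction s using Finset.induction_on with
  | empty => simp
  | insert i s hi ih =>
    rw [Finset.prod_insert hi, Finset.sum_insert hi, Finset.prod_insert hi,
      coeff_mul_add_eq_of_natDegree_le (h i (Finset.mem_insert_self i s)), ih]
    · exact fun k hk => h k (Finset.mem_insert_of_mem hk)
    · refine (natDegree_prod_le _ _).trans (Finset.sum_le_sum fun k hk => ?_)
      exact h k (Finset.mem_insert_of_mem hk)

open Polynomial in
/-- A zero estimate for exponential polynomials at points of a two-dimensional grid. -/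
theorem eq_zero_of_exponential_sum_eq_zero {K L R n S : ℕ} (hS : L + n ≤ S + 1) {ω : ℂ}
    (hω0 : ω ≠ 0)
    (hω : Set.InjOn (fun l : ℕ => ω ^ l) (Set.Iio L)) {j : ℂ} {τ : Fin R → ℂ}
    (hinj : Function.Injective fun q : Fin R × Fin n => τ q.1 + j * (q.2 : ℕ))
    (hcard : (K - 1) * L < R * n) {P : Fin L → ℂ[X]} (hP : ∀ l, (P l).natDegree ≤ K - 1)
    (hv : ∀ r, ∀ s < S, ∑ l, (P l).eval (τ r + j * s) * ω ^ ((l : ℕ) * s) = 0) : P = 0 := by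
  classical
  by_contra hP0
  let Λ := {l // P l ≠ 0}
  obtain ⟨l₀, hl₀⟩ : ∃ l, P l ≠ 0 := by
    by_contra h
    push Not at h
    exact hP0 (funext h)
  set m := Fintype.card Λ with hm
  have hm0 : 0 < m := Fintype.card_pos_iff.mpr ⟨⟨l₀, hl₀⟩⟩
  have hmL : m ≤ L := (Fintype.card_subtype_le _).trans (Fintype.card_fin L).le
  let e : Fin m ≃ Λ := (Fintype.equivFin Λ).symm
  set Q : Matrix (Fin m) (Fin m) ℂ[X] := Matrix.of fun i k =>
    (P (e k)).comp (X + C (j * (i : ℕ))) * C (ω ^ (((e k : Fin L) : ℕ) * i)) with hQ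
  have hdeg : ∀ i k, (Q i k).natDegree ≤ (P (e k)).natDegree := by
    intro i k
    simp only [hQ, Matrix.of_apply]
    refine (natDegree_mul_C_le _ _).trans ?_
    rw [natDegree_comp, natDegree_X_add_C, mul_one]
  have hcoeff : ∀ i k, (Q i k).coeff (P (e k)).natDegree =
      (P (e k)).leadingCoeff * ω ^ (((e k : Fin L) : ℕ) * i) := by
    intro i k
    simp only [hQ, Matrix.of_apply]
    rw [coeff_mul_C]
    congr 1
    have h1 := leadingCoeff_comp (p := P (e k)) (q := X + C (j * (i : ℕ)))
      (by rw [natDegree_X_add_C]; exact one_ne_zero)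
    rw [leadingCoeff, natDegree_comp, natDegree_X_add_C, mul_one, leadingCoeff_X_add_C, one_pow,
      mul_one] at h1
    exact h1
  have hlead : Q.det.coeff (∑ k, (P (e k)).natDegree) ≠ 0 := by
    have h1 : Q.det.coeff (∑ k, (P (e k)).natDegree) =
        (Matrix.of fun i k : Fin m => (P (e k)).leadingCoeff *
          ω ^ (((e k : Fin L) : ℕ) * i)).det := by
      rw [Matrix.det_apply', Matrix.det_apply', finsetSum_coeff]
      refine Finset.sum_congr rfl fun σ _ => ?_
      rw [← Polynomial.C_eq_intCast, coeff_C_mul,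
        coeff_prod_sum_of_natDegree_le _ _ _ (fun i _ => hdeg _ i)]
      congr 1
      exact Finset.prod_congr rfl fun i _ => hcoeff _ i
    have h2 : (Matrix.of fun i k : Fin m => (P (e k)).leadingCoeff *
        ω ^ (((e k : Fin L) : ℕ) * i)) =
        (Matrix.vandermonde fun k : Fin m => ω ^ ((e k : Fin L) : ℕ)).transpose *
          Matrix.diagonal fun k => (P (e k)).leadingCoeff := by
      ext i k
      rw [Matrix.mul_diagonal, Matrix.transpose_apply, Matrix.vandermonde_apply, Matrix.of_apply,
        pow_mul, mul_comm]
    rw [h1, h2, Matrix.det_mul, Matrix.det_transpose, Matrix.det_diagonal]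
    refine mul_ne_zero (Matrix.det_vandermonde_ne_zero_iff.mpr ?_)
      (Finset.prod_ne_zero_iff.mpr fun k _ => leadingCoeff_ne_zero.mpr (e k).2)
    intro k k' h
    exact e.injective (Subtype.ext (Fin.ext (hω (e k : Fin L).2 (e k' : Fin L).2 h)))
  have hroot : ∀ q : Fin R × Fin n, Q.det.eval (τ q.1 + j * (q.2 : ℕ)) = 0 := by
    rintro ⟨r, s⟩
    rw [← coe_evalRingHom, RingHom.map_det]
    refine Matrix.exists_mulVec_eq_zero_iff.mp ⟨fun k => ω ^ (((e k : Fin L) : ℕ) * s), ?_, ?_⟩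
    · intro h
      exact pow_ne_zero _ hω0 (congrFun h ⟨0, hm0⟩)
    · funext i
      have h1 := hv r (s + i) (by omega)
      have h2 : ∑ l, (P l).eval (τ r + j * ((s + i : ℕ) : ℂ)) * ω ^ ((l : ℕ) * (s + i)) =
          ∑ l : Λ, (P l).eval (τ r + j * ((s + i : ℕ) : ℂ)) * ω ^ (((l : Fin L) : ℕ) * (s + i)) := by
        rw [← Finset.sum_subtype (Finset.univ.filter fun l => P l ≠ 0) (by simp)
          fun l => (P l).eval (τ r + j * ((s + i : ℕ) : ℂ)) * ω ^ ((l : ℕ) * (s + i))]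
        refine (Finset.sum_filter_of_ne fun l _ h => ?_).symm
        rintro h0
        exact h (by rw [h0, eval_zero, zero_mul])
      rw [h2, ← e.sum_comp] at h1
      rw [Pi.zero_apply, ← h1, Matrix.mulVec, dotProduct]
      refine Finset.sum_congr rfl fun k _ => ?_
      simp only [hQ, RingHom.mapMatrix_apply, Matrix.map_apply, Matrix.of_apply, coe_evalRingHom,
        eval_mul, eval_comp, eval_add, eval_X, eval_C]
      push_cast
      rw [mul_add ((e k : Fin L) : ℕ), pow_add, mul_add j, ← add_assoc]
      ring
  have hdet0 : Q.det = 0 := by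
    refine eq_zero_of_natDegree_lt_card_of_eval_eq_zero Q.det hinj hroot ?_
    rw [Fintype.card_prod, Fintype.card_fin, Fintype.card_fin]
    refine lt_of_le_of_lt ?_ hcard
    rw [Matrix.det_apply']
    refine natDegree_sum_le_of_forall_le _ _ fun σ _ => ?_
    rw [← Polynomial.C_eq_intCast]
    refine (natDegree_C_mul_le _ _).trans ((natDegree_prod_le _ _).trans ?_)
    refine (Finset.sum_le_card_nsmul _ _ (K - 1) fun i _ => (hdeg _ _).trans (hP _)).trans ?_
    rw [Finset.card_univ, Fintype.card_fin, smul_eq_mul, mul_comm]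
    exact Nat.mul_le_mul_left _ hmL
  exact hlead (by rw [hdet0, coeff_zero])

open Complex in
theorem norm_exp_I_mul_sub_exp_I_mul_le (x y : ℝ) : ‖exp (I * x) - exp (I * y)‖ ≤ |x - y| := by
  have h : exp (I * x) - exp (I * y) = exp (I * y) * (exp (I * (x - y : ℝ)) - 1) := by
    rw [mul_sub, ← exp_add, mul_one]
    congr 2
    push_cast
    ring
  rw [h, norm_mul, norm_exp_I_mul_ofReal, one_mul]
  exact Real.norm_exp_I_mul_ofReal_sub_one_le

theorem Subring.one_le_norm_det {O : Subring ℂ} (hO : ∀ x ∈ O, x ≠ 0 → 1 ≤ ‖x‖) {M : ℕ}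
    {G : Matrix (Fin M) (Fin M) ℂ} (hG : ∀ i j, G i j ∈ O) (h : G.det ≠ 0) : 1 ≤ ‖G.det‖ := by
  refine hO _ ?_ h
  rw [Matrix.det_apply']
  exact sum_mem fun σ _ => mul_mem (intCast_mem _ _) (prod_mem fun i _ => hG _ _)

theorem injective_mul_add_mul {j ℓ R S : ℕ} (hj : IsCoprime (j : ℤ) ℓ) (hℓ : 0 < ℓ) (hS : S ≤ ℓ)
    {a b : ℤ} : Function.Injective fun p : Fin R × Fin S =>
      (j : ℤ) * ((p.2 : ℕ) - a) + 2 * ℓ * ((p.1 : ℕ) - b) := by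
  rintro ⟨r, s⟩ ⟨r', s'⟩ h
  simp only at h
  have h1 : (ℓ : ℤ) ∣ j * ((s : ℕ) - (s' : ℕ)) := ⟨2 * ((r' : ℕ) - (r : ℕ)), by linarith⟩
  have h2 : (ℓ : ℤ) ∣ (s : ℕ) - (s' : ℕ) := hj.symm.dvd_of_dvd_mul_left h1
  have h3 : ((s : ℕ) : ℤ) - (s' : ℕ) = 0 := by
    apply Int.eq_zero_of_abs_lt_dvd h2
    have := s.isLt
    have := s'.isLt
    rw [abs_lt]
    constructor <;> omega
  have h4 : ((s : ℕ) : ℤ) = (s' : ℕ) := by omega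
  have hs : s = s' := Fin.ext (by exact_mod_cast h4)
  subst hs
  have h5 : (2 * (ℓ : ℤ)) * ((r : ℕ) - b) = (2 * (ℓ : ℤ)) * ((r' : ℕ) - b) := by linarith
  have h6 := mul_left_cancel₀ (by positivity) h5
  have hr : r = r' := Fin.ext (by omega)
  rw [hr]

open Complex in
theorem mem_subring_of_pow_mul_exp {O : Subring ℂ} {s φ : ℝ} {N : ℕ} (hsN : s ^ 2 = N)
    (h1 : (s : ℂ) * exp (I * φ) ∈ O) (h2 : (s : ℂ) * exp (-(I * φ)) ∈ O) {n : ℕ} {m : ℤ}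
    (hm : |m| ≤ n) : (N : ℂ) ^ n * exp (I * ((2 * φ * m : ℝ) : ℂ)) ∈ O := by
  rw [abs_le] at hm
  obtain ⟨a, ha⟩ := Int.eq_ofNat_of_zero_le (a := n + m) (by omega)
  obtain ⟨b, hb⟩ := Int.eq_ofNat_of_zero_le (a := n - m) (by omega)
  have h : (N : ℂ) ^ n * exp (I * ((2 * φ * m : ℝ) : ℂ)) =
      ((s : ℂ) * exp (I * φ)) ^ a * ((s : ℂ) * exp (-(I * φ))) ^ b := by
    have hN : (N : ℂ) = (s : ℂ) ^ 2 := by exact_mod_cast hsN.symm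
    rw [mul_pow, mul_pow, mul_mul_mul_comm, ← pow_add, ← exp_nat_mul, ← exp_nat_mul, ← exp_add,
      hN, ← pow_mul, show 2 * n = a + b by omega]
    congr 2
    have h3 : (2 * m : ℂ) = a - b := by
      have : 2 * m = (a : ℤ) - b := by omega
      exact_mod_cast this
    push_cast
    linear_combination (I * φ) * h3
  rw [h]
  exact mul_mem (pow_mem h1 _) (pow_mem h2 _)

open Complex Polynomial in
theorem eq_zero_of_vecMul_exponential_eq_zero {K L S R : ℕ} {c a b : ℤ} {j ℓ : ℕ} {θ : ℝ}
    (hj : IsCoprime (j : ℤ) ℓ) (hℓ : 0 < ℓ) (hSℓ : S ≤ ℓ)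
    (hω : Set.InjOn (fun l : ℕ => exp (I * θ) ^ l) (Set.Iio L)) (hL : 0 < L) (hLS : L ≤ S + 1)
    (hcard : (K - 1) * L < R * (S + 1 - L)) {x : Fin K × Fin L → ℂ}
    (hx : ∀ p : Fin R × Fin S, ∑ q : Fin K × Fin L, x q *
      ((((j : ℤ) * ((p.2 : ℕ) - a) + 2 * ℓ * ((p.1 : ℕ) - b) : ℤ) : ℂ) ^ (q.1 : ℕ) *
        exp (I * ((θ * (((q.2 : ℕ) - c) * ((p.2 : ℕ) - a) : ℤ) : ℝ) : ℂ))) = 0) : x = 0 := by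
  set P : Fin L → ℂ[X] := fun l => ∑ k : Fin K,
    Polynomial.C (x (k, l) * exp (I * (-θ * (l : ℕ) * a))) * X ^ (k : ℕ) with hP
  have hP0 : P = 0 := by
    refine eq_zero_of_exponential_sum_eq_zero (K := K) (R := R) (n := S + 1 - L) (S := S)
      (by omega) (exp_ne_zero _) hω (j := j) (τ := fun r => 2 * ℓ * ((r : ℕ) - b) - j * a) ?_
      hcard ?_ ?_
    · intro q q' h
      have h1 : (fun p : Fin R × Fin (S + 1 - L) =>
          (j : ℤ) * ((p.2 : ℕ) - a) + 2 * ℓ * ((p.1 : ℕ) - b)) q =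
          (fun p : Fin R × Fin (S + 1 - L) =>
          (j : ℤ) * ((p.2 : ℕ) - a) + 2 * ℓ * ((p.1 : ℕ) - b)) q' := by
        simp only at h ⊢
        have h2 : ((((j : ℤ) * ((q.2 : ℕ) - a) + 2 * ℓ * ((q.1 : ℕ) - b) : ℤ) : ℂ)) =
          (((j : ℤ) * ((q'.2 : ℕ) - a) + 2 * ℓ * ((q'.1 : ℕ) - b) : ℤ) : ℂ) := by
          push_cast
          linear_combination h
        exact_mod_cast h2
      exact injective_mul_add_mul hj hℓ (by omega) h1
    · intro l
      refine natDegree_sum_le_of_forall_le _ _ fun k _ => ?_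
      refine (natDegree_C_mul_X_pow_le _ _).trans ?_
      have := k.isLt
      omega
    · intro r s hs
      have h1 := hx (r, ⟨s, hs⟩)
      rw [Fintype.sum_prod_type_right] at h1
      have h2 : ∑ l, (P l).eval (2 * ℓ * ((r : ℕ) - b) - j * a + j * s : ℂ) *
          exp (I * θ) ^ ((l : ℕ) * s) = exp (I * (θ * c * (s - a))) * 0 := by
        rw [← h1, Finset.mul_sum]
        refine Finset.sum_congr rfl fun l _ => ?_
        simp only [hP]
        rw [eval_finsetSum, Finset.sum_mul, Finset.mul_sum]
        refine Finset.sum_congr rfl fun k _ => ?_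
        rw [eval_mul, eval_C, eval_pow, eval_X, ← exp_nat_mul]
        have h3 : exp (I * (-θ * (l : ℕ) * a)) * exp (((((l : ℕ) * s : ℕ)) : ℂ) * (I * θ)) =
            exp (I * (θ * c * (s - a))) *
              exp (I * ((θ * ((((l : ℕ) : ℤ) - c) * ((s : ℤ) - a) : ℤ) : ℝ) : ℂ)) := by
          rw [← exp_add, ← exp_add]
          congr 1
          push_cast
          ring
        have h4 : (2 * ℓ * ((r : ℕ) - b) - j * a + j * s : ℂ) =
            (((j : ℤ) * ((s : ℕ) - a) + 2 * ℓ * ((r : ℕ) - b) : ℤ) : ℂ) := by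
          push_cast
          ring
        rw [h4]
        linear_combination (x (k, l) *
          (((j : ℤ) * ((s : ℕ) - a) + 2 * ℓ * ((r : ℕ) - b) : ℤ) : ℂ) ^ (k : ℕ)) * h3
      rw [mul_zero] at h2
      exact h2
  funext q
  have h1 : (P q.2).coeff (q.1 : ℕ) = 0 := by rw [hP0]; simp
  simp only [hP, finsetSum_coeff, coeff_C_mul, coeff_X_pow] at h1
  rw [Finset.sum_eq_single q.1] at h1
  · simpa using h1
  · intro k _ hk
    rw [if_neg (fun h => hk (Fin.ext h.symm)), mul_zero]
  · simp

open Complex in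
/-- The comparison of upper and lower bounds for the interpolation determinant. -/
theorem interpolation_inequality {O : Subring ℂ} (hO : ∀ x ∈ O, x ≠ 0 → 1 ≤ ‖x‖) {s φ : ℝ} {N : ℕ}
    (hsN : s ^ 2 = N) (hN0 : N ≠ 0) (h1 : (s : ℂ) * exp (I * φ) ∈ O)
    (h2 : (s : ℂ) * exp (-(I * φ)) ∈ O)
    {j ℓ c S R K : ℕ} (hj : IsCoprime (j : ℤ) ℓ) (hjℓ : j ≤ ℓ) (hℓ : 0 < ℓ) (hSℓ : 2 * S + 1 ≤ ℓ)
    (hcS : c ≤ S)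
    (hω : Set.InjOn (fun l : ℕ => exp (I * ((2 * φ : ℝ) : ℂ)) ^ l) (Set.Iio (2 * c + 1)))
    (hcard : (K - 1) * (2 * c + 1) < (2 * R + 1) * (2 * S + 1 + 1 - (2 * c + 1))) {ρ : ℝ}
    (hρ : 1 ≤ ρ)
    (hclose : ρ ^ (K * (2 * c + 1)) * (c * S * |2 * φ - Real.pi / ℓ * j|) ≤ 1) :
    ρ ^ (∑ n : Fin (K * (2 * c + 1)), (n : ℕ)) ≤ (N : ℝ) ^ (c * S * (K * (2 * c + 1))) *
      ((K * (2 * c + 1)).factorial * ∏ i : Fin (K * (2 * c + 1)),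
        (2 * ((ρ * (ℓ * (S + 2 * R))) ^ ((finProdFinEquiv.symm i).1 : ℕ) *
          Real.exp (c * (Real.pi * ρ * (S + 2 * R)))))) := by
  set M := K * (2 * c + 1) with hM
  set e : Fin M ≃ Fin K × Fin (2 * c + 1) := finProdFinEquiv.symm with he
  set Y : ℝ := S + 2 * R with hY
  have hℓ0 : (0 : ℝ) < ℓ := by exact_mod_cast hℓ
  have hℓ1 : (1 : ℝ) ≤ ℓ := by exact_mod_cast hℓ
  have hY0 : 0 ≤ Y := by positivity
  have hρ0 : 0 < ρ := by linarith
  let z : Fin (2 * R + 1) × Fin (2 * S + 1) → ℤ := fun p =>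
    (j : ℤ) * ((p.2 : ℕ) - (S : ℕ)) + 2 * ℓ * ((p.1 : ℕ) - (R : ℕ))
  have hzinj : Function.Injective z := injective_mul_add_mul hj hℓ hSℓ
  have hpS : ∀ p : Fin (2 * R + 1) × Fin (2 * S + 1), |(((p.2 : ℕ) : ℤ) - (S : ℕ))| ≤ S := by
    intro p
    have := p.2.isLt
    rw [abs_le]
    omega
  have hpR : ∀ p : Fin (2 * R + 1) × Fin (2 * S + 1), |(((p.1 : ℕ) : ℤ) - (R : ℕ))| ≤ R := by
    intro p
    have := p.1.isLt
    rw [abs_le]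
    omega
  have hqc : ∀ l : Fin (2 * c + 1), |(((l : ℕ) : ℤ) - (c : ℕ))| ≤ c := by
    intro l
    have := l.isLt
    rw [abs_le]
    omega
  have hz : ∀ p, |(z p : ℝ)| ≤ ℓ * Y := by
    intro p
    have h3 : |z p| ≤ (ℓ : ℤ) * (S + 2 * R) := by
      refine (abs_add_le _ _).trans ?_
      rw [abs_mul, abs_mul, abs_mul, Nat.abs_cast, Nat.abs_cast, abs_two]
      have h4 : (j : ℤ) * |(((p.2 : ℕ) : ℤ) - (S : ℕ))| ≤ ℓ * S :=
        mul_le_mul (by exact_mod_cast hjℓ) (hpS p) (abs_nonneg _) (by positivity)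
      have h5 := mul_le_mul_of_nonneg_left (hpR p) (by positivity : (0 : ℤ) ≤ 2 * ℓ)
      linarith
    rw [hY]
    exact_mod_cast h3
  let a : Fin K × Fin (2 * c + 1) → Fin (2 * R + 1) × Fin (2 * S + 1) → ℂ := fun q p =>
    (z p : ℂ) ^ (q.1 : ℕ) *
      exp (I * ((2 * φ * ((((q.2 : ℕ) : ℤ) - (c : ℕ)) * (((p.2 : ℕ) : ℤ) - (S : ℕ)) : ℤ) : ℝ) : ℂ))
  obtain ⟨g, hg, hdet⟩ := Matrix.exists_det_submatrix_ne_zero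
    (V := Matrix.of fun (i : Fin M) p => a (e i) p) (by
      intro x hx
      have hx0 : (fun q => x (e.symm q)) = 0 := by
        refine eq_zero_of_vecMul_exponential_eq_zero (R := 2 * R + 1) (S := 2 * S + 1) (a := (S : ℕ))
          (b := (R : ℕ)) (c := (c : ℕ)) (θ := 2 * φ) hj hℓ hSℓ hω (by omega) (by omega) hcard ?_
        intro p
        have h3 := congrFun hx p
        rw [Matrix.vecMul, dotProduct, ← e.symm.sum_comp] at h3
        rw [Pi.zero_apply] at h3
        rw [← h3]
        refine Finset.sum_congr rfl fun q _ => ?_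
        rw [Matrix.of_apply, e.apply_symm_apply]
      funext i
      have := congrFun hx0 (e i)
      simpa using this)
  -- the arithmetic lower bound
  have hlow : 1 ≤ (N : ℝ) ^ (c * S * M) *
      ‖((Matrix.of fun (i : Fin M) p => a (e i) p).submatrix id g).det‖ := by
    have h3 := Subring.one_le_norm_det hO
      (G := (N : ℂ) ^ (c * S) • (Matrix.of fun (i : Fin M) p => a (e i) p).submatrix id g) (by
        intro i k
        simp only [Matrix.smul_apply, Matrix.submatrix_apply, Matrix.of_apply, id, smul_eq_mul, a]
        rw [mul_left_comm]
        refine mul_mem (pow_mem (intCast_mem _ _) _) ?_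
        refine mem_subring_of_pow_mul_exp hsN h1 h2 ?_
        rw [abs_mul]
        push_cast
        exact mul_le_mul (hqc _) (hpS _) (abs_nonneg _) (by positivity)) (by
        rw [Matrix.det_smul]
        exact mul_ne_zero (pow_ne_zero _ (pow_ne_zero _ (Nat.cast_ne_zero.mpr hN0))) hdet)
    rw [Matrix.det_smul, norm_mul, Fintype.card_fin, ← pow_mul, norm_pow, Complex.norm_natCast] at h3
    exact h3
  -- the analytic upper bound
  have hup : ‖((Matrix.of fun (i : Fin M) p => a (e i) p).submatrix id g).det‖ *
      ρ ^ (∑ n : Fin M, (n : ℕ)) ≤ M.factorial * ∏ i : Fin M,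
        (2 * ((ρ * (ℓ * Y)) ^ ((e i).1 : ℕ) * Real.exp (c * (Real.pi * ρ * Y)))) := by
    let f : Fin M → ℂ → ℂ := fun i x =>
      (ℓ / Real.pi * x) ^ ((e i).1 : ℕ) * exp (I * ((((((e i).2 : ℕ) : ℤ) - (c : ℕ) : ℤ) : ℂ) * x))
    let u : Fin M → ℂ := fun i => Real.pi / ℓ * z (g i)
    have hπ : (Real.pi : ℂ) ≠ 0 := ofReal_ne_zero.mpr Real.pi_ne_zero
    have hℓC : (ℓ : ℂ) ≠ 0 := Nat.cast_ne_zero.mpr hℓ.ne'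
    have hfu : ∀ i k, f i (u k) = (z (g k) : ℂ) ^ ((e i).1 : ℕ) * exp (I *
        ((Real.pi / ℓ * j * (((((e i).2 : ℕ) : ℤ) - (c : ℕ)) * ((((g k).2 : ℕ) : ℤ) - (S : ℕ)) : ℤ)
          : ℝ) : ℂ)) := by
      intro i k
      simp only [f, u]
      congr 1
      · congr 1
        field_simp
      · rw [exp_eq_exp_iff_exists_int]
        refine ⟨((((e i).2 : ℕ) : ℤ) - (c : ℕ)) * (((g k).1 : ℕ) - (R : ℕ)), ?_⟩
        simp only [z]
        push_cast
        field_simp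
    have hnu : ∀ k, ‖u k‖ ≤ Real.pi * Y := by
      intro k
      simp only [u]
      rw [norm_mul, norm_div, norm_intCast, Complex.norm_natCast, norm_real, Real.norm_eq_abs,
        abs_of_pos Real.pi_pos]
      calc Real.pi / ℓ * |(z (g k) : ℝ)| ≤ Real.pi / ℓ * (ℓ * Y) :=
            mul_le_mul_of_nonneg_left (hz _) (by positivity)
        _ = Real.pi * Y := by field_simp
    have h3 := norm_interpolation_det_le (f := f) (u := u) (ρ := ρ)
      (B := fun i => (ρ * (ℓ * Y)) ^ ((e i).1 : ℕ) * Real.exp (c * (Real.pi * ρ * Y)))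
      (ε := fun i k => a (e i) (g k) - f i (u k)) ?_ ?_ hρ ?_ ?_
    · have h4 : (Matrix.of fun i k => f i (u k) + (a (e i) (g k) - f i (u k))) =
          (Matrix.of fun (i : Fin M) p => a (e i) p).submatrix id g := by
        ext i k
        simp
      rw [h4] at h3
      exact h3
    · intro i
      simp only [f]
      fun_prop
    · intro k k' h
      have h5 : (z (g k) : ℂ) = z (g k') := mul_left_cancel₀ (div_ne_zero hπ hℓC) h
      exact hg (hzinj (by exact_mod_cast h5))
    · intro i k w hw
      have hwu : ‖w * u k‖ ≤ Real.pi * ρ * Y := by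
        rw [norm_mul, hw]
        calc ρ * ‖u k‖ ≤ ρ * (Real.pi * Y) := mul_le_mul_of_nonneg_left (hnu k) hρ0.le
          _ = _ := by ring
      simp only [f]
      rw [norm_mul, norm_pow, norm_mul, norm_div, Complex.norm_natCast, norm_real, Real.norm_eq_abs,
        abs_of_pos Real.pi_pos, norm_exp]
      refine mul_le_mul (pow_le_pow_left₀ (by positivity) ?_ _) (Real.exp_le_exp.mpr ?_)
        (Real.exp_pos _).le (by positivity)
      · calc ℓ / Real.pi * ‖w * u k‖ ≤ ℓ / Real.pi * (Real.pi * ρ * Y) :=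
              mul_le_mul_of_nonneg_left hwu (by positivity)
          _ = ρ * (ℓ * Y) := by field_simp [Real.pi_ne_zero]
      · refine (re_le_norm _).trans ?_
        rw [norm_mul, norm_I, one_mul, norm_mul, norm_intCast]
        refine mul_le_mul ?_ hwu (norm_nonneg _) (by positivity)
        exact_mod_cast hqc (e i).2
    · intro i k
      rw [hfu]
      simp only [a]
      rw [← mul_sub, norm_mul, norm_pow, norm_intCast]
      set m : ℤ := ((((e i).2 : ℕ) : ℤ) - (c : ℕ)) * ((((g k).2 : ℕ) : ℤ) - (S : ℕ)) with hm
      have hmle : |(m : ℝ)| ≤ c * S := by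
        have : |m| ≤ (c : ℤ) * S := by
          rw [hm, abs_mul]
          exact mul_le_mul (hqc _) (hpS _) (abs_nonneg _) (by positivity)
        exact_mod_cast this
      have h4 := norm_exp_I_mul_sub_exp_I_mul_le (2 * φ * m) (Real.pi / ℓ * j * m)
      rw [← sub_mul, abs_mul] at h4
      have h5 : |2 * φ - Real.pi / ℓ * j| * |(m : ℝ)| ≤ |2 * φ - Real.pi / ℓ * j| * (c * S) :=
        mul_le_mul_of_nonneg_left hmle (abs_nonneg _)
      have h6 : |(z (g k) : ℝ)| ^ ((e i).1 : ℕ) ≤ (ρ * (ℓ * Y)) ^ ((e i).1 : ℕ) := by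
        refine pow_le_pow_left₀ (abs_nonneg _) ((hz _).trans ?_) _
        exact le_mul_of_one_le_left (by positivity) hρ
      have h7 : 1 ≤ Real.exp (c * (Real.pi * ρ * Y)) := Real.one_le_exp (by positivity)
      set X := ‖exp (I * ((2 * φ * m : ℝ) : ℂ)) - exp (I * ((Real.pi / ℓ * j * m : ℝ) : ℂ))‖
      calc ρ ^ M * (|(z (g k) : ℝ)| ^ ((e i).1 : ℕ) * X)
          = |(z (g k) : ℝ)| ^ ((e i).1 : ℕ) * (ρ ^ M * X) := by ring
        _ ≤ (ρ * (ℓ * Y)) ^ ((e i).1 : ℕ) * 1 := by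
          refine mul_le_mul h6 ?_ (by positivity) (by positivity)
          refine le_trans (mul_le_mul_of_nonneg_left (h4.trans h5) (by positivity)) ?_
          rw [mul_comm |2 * φ - Real.pi / ℓ * j|]
          exact hclose
        _ ≤ _ := mul_le_mul_of_nonneg_left h7 (by positivity)
  have hpos : 0 ≤ ρ ^ (∑ n : Fin M, (n : ℕ)) := by positivity
  calc ρ ^ (∑ n : Fin M, (n : ℕ)) ≤ ((N : ℝ) ^ (c * S * M) *
      ‖((Matrix.of fun (i : Fin M) p => a (e i) p).submatrix id g).det‖) *
        ρ ^ (∑ n : Fin M, (n : ℕ)) := le_mul_of_one_le_left hpos hlow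
    _ = (N : ℝ) ^ (c * S * M) *
      (‖((Matrix.of fun (i : Fin M) p => a (e i) p).submatrix id g).det‖ *
        ρ ^ (∑ n : Fin M, (n : ℕ))) := by ring
    _ ≤ _ := mul_le_mul_of_nonneg_left hup (by positivity)

theorem size_bound_one {t : ℕ} (ht : 20 ≤ t) : (21 + 2 * t) * (2 * t + 1) * 2 ^ 8 ≤ 2 ^ t := by
  induction t, ht using Nat.le_induction with
  | base => norm_num
  | succ t ht ih =>
    obtain ⟨u, rfl⟩ := Nat.exists_eq_add_of_le ht
    rw [pow_succ]
    have h : (21 + 2 * (20 + u + 1)) * (2 * (20 + u + 1) + 1) * 2 ^ 8 ≤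
        (21 + 2 * (20 + u)) * (2 * (20 + u) + 1) * 2 ^ 8 * 2 := by
      ring_nf
      linarith [Nat.zero_le u, Nat.zero_le (u ^ 2)]
    exact h.trans (Nat.mul_le_mul_right 2 ih)

theorem size_bound_two {t : ℕ} (ht : 20 ≤ t) :
    246 * t * (2 * t + 1) ^ 2 + t + 15 ≤ 15 * 2 ^ t := by
  induction t, ht using Nat.le_induction with
  | base => norm_num
  | succ t ht ih =>
    obtain ⟨u, rfl⟩ := Nat.exists_eq_add_of_le ht
    have h : 246 * (20 + u + 1) * (2 * (20 + u + 1) + 1) ^ 2 + (20 + u + 1) + 15 ≤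
        (246 * (20 + u) * (2 * (20 + u) + 1) ^ 2 + (20 + u) + 15) * 2 := by
      ring_nf
      linarith [Nat.zero_le u, Nat.zero_le (u ^ 2), Nat.zero_le (u ^ 3)]
    have h' : 15 * 2 ^ (20 + u + 1) = 15 * 2 ^ (20 + u) * 2 := by rw [pow_succ 2, mul_assoc]
    rw [h']
    exact h.trans (Nat.mul_le_mul_right 2 ih)

theorem Real.exp_eight_mul_pi_le : Real.exp (8 * Real.pi) ≤ 2 ^ 37 := by
  rw [← Real.exp_log (show (0 : ℝ) < 2 ^ 37 by positivity), Real.exp_le_exp, Real.log_pow]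
  have := Real.pi_lt_d2
  have := Real.log_two_gt_d9
  norm_num
  linarith

/-- The inequality between the bounds for the interpolation determinant fails for these
parameters. -/
theorem interpolation_parameters_lt {t ℓ N : ℕ} (ht : 20 ≤ t) (hℓ : ℓ ≤ 2 ^ (t + 1))
    (hN : N ≤ 2 ^ (2 * t)) {S R K : ℕ} (hS : S = 42 * t + 20) (hR : R = t * (2 * t + 1))
    (hK : K = 82 * t * (2 * t + 1)) :
    (N : ℝ) ^ (t * S * (K * (2 * t + 1))) *
      ((K * (2 * t + 1)).factorial * ∏ i : Fin (K * (2 * t + 1)),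
        (2 * (((8 : ℝ) * (ℓ * (S + 2 * R))) ^ ((finProdFinEquiv.symm i).1 : ℕ) *
          Real.exp (t * (Real.pi * 8 * (S + 2 * R)))))) <
      8 ^ (∑ n : Fin (K * (2 * t + 1)), (n : ℕ)) := by
  set M := K * (2 * t + 1) with hM
  set Y := S + 2 * R with hY
  have hYcast : ((S : ℝ) + 2 * R) = (Y : ℕ) := by rw [hY]; push_cast; ring
  rw [hYcast]
  have hMval : M = 82 * t * (2 * t + 1) ^ 2 := by rw [hM, hK]; ring
  have hYle : 8 * (ℓ * Y) ≤ 2 ^ (2 * t - 4) := by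
    have h1 := size_bound_one ht
    have h2 : Y * 2 ^ 8 ≤ 2 ^ t := by
      refine le_trans (Nat.mul_le_mul_right _ ?_) h1
      rw [hY, hS, hR]; nlinarith
    have h3 : 8 * (ℓ * Y) * 2 ^ 8 ≤ 2 ^ (2 * t - 4) * 2 ^ 8 := by
      calc 8 * (ℓ * Y) * 2 ^ 8 = 8 * (ℓ * (Y * 2 ^ 8)) := by ring
        _ ≤ 8 * (2 ^ (t + 1) * 2 ^ t) := by gcongr
        _ = 2 ^ (2 * t - 4) * 2 ^ 8 := by
          rw [show (8 : ℕ) = 2 ^ 3 by norm_num, ← pow_add, ← pow_add, ← pow_add]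
          congr 1
          omega
    exact Nat.le_of_mul_le_mul_right h3 (by positivity)
  have hMle : M ≤ 2 ^ (2 * t) := by
    have h1 := size_bound_two ht
    have h2 : 15 * 2 ^ t ≤ 2 ^ (2 * t) := by
      rw [two_mul t, pow_add]
      have : 2 ^ 20 ≤ 2 ^ t := Nat.pow_le_pow_right (by norm_num) ht
      gcongr
      omega
    rw [hMval]
    nlinarith
  have hfact : M.factorial ≤ 2 ^ (2 * t * M) := by
    rw [pow_mul]
    exact (Nat.factorial_le_pow M).trans (Nat.pow_le_pow_left hMle M)
  have hexp : Real.exp (t * (Real.pi * 8 * Y)) ≤ 2 ^ (37 * (t * Y)) := by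
    have h1 : (t : ℝ) * (Real.pi * 8 * Y) = (t * Y : ℕ) * (8 * Real.pi) := by push_cast; ring
    rw [h1, Real.exp_nat_mul, pow_mul 2 37]
    exact pow_le_pow_left₀ (Real.exp_pos _).le Real.exp_eight_mul_pi_le _
  have hsumk : (∑ i : Fin M, ((finProdFinEquiv.symm i).1 : ℕ)) * 2 = M * (K - 1) := by
    have h1 : ∑ i : Fin M, ((finProdFinEquiv.symm i).1 : ℕ) =
        ∑ q : Fin K × Fin (2 * t + 1), (q.1 : ℕ) :=
      finProdFinEquiv.symm.sum_comp fun q : Fin K × Fin (2 * t + 1) => (q.1 : ℕ)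
    rw [h1, Fintype.sum_prod_type]
    simp only [Finset.sum_const, Finset.card_univ, Fintype.card_fin, smul_eq_mul]
    rw [← Finset.mul_sum, Fin.sum_univ_eq_sum_range (fun k => k), mul_assoc,
      Finset.sum_range_id_mul_two, hM]
    ring
  have hsumn : (∑ n : Fin M, (n : ℕ)) * 2 = M * (M - 1) := by
    rw [Fin.sum_univ_eq_sum_range (fun k => k), Finset.sum_range_id_mul_two]
  have hprod : ∏ i : Fin M, (2 * (((8 : ℝ) * (ℓ * Y)) ^ ((finProdFinEquiv.symm i).1 : ℕ) *
      Real.exp (t * (Real.pi * 8 * Y)))) ≤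
      2 ^ (M * (1 + 37 * (t * Y)) +
        (2 * t - 4) * ∑ i : Fin M, ((finProdFinEquiv.symm i).1 : ℕ)) := by
    have h1 : ∀ i ∈ (Finset.univ : Finset (Fin M)),
        (2 * (((8 : ℝ) * (ℓ * Y)) ^ ((finProdFinEquiv.symm i).1 : ℕ) *
          Real.exp (t * (Real.pi * 8 * Y)))) ≤
        2 ^ ((1 + 37 * (t * Y)) + (2 * t - 4) * ((finProdFinEquiv.symm i).1 : ℕ)) := by
      intro i _
      rw [pow_add, pow_add, pow_one, pow_mul 2 (2 * t - 4), mul_assoc (2 : ℝ) (2 ^ _)]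
      have h2 : ((8 : ℝ) * (ℓ * Y)) ≤ 2 ^ (2 * t - 4) := by exact_mod_cast hYle
      rw [mul_comm ((2 : ℝ) ^ (37 * (t * Y)))]
      gcongr
    refine (Finset.prod_le_prod (fun i _ => by positivity) h1).trans_eq ?_
    rw [Finset.prod_pow_eq_pow_sum, Finset.sum_add_distrib, ← Finset.mul_sum]
    simp
  have hexponent : 2 * t * (t * S * M) + (2 * t * M + (M * (1 + 37 * (t * Y)) +
      (2 * t - 4) * ∑ i : Fin M, ((finProdFinEquiv.symm i).1 : ℕ))) <
      3 * ∑ n : Fin M, (n : ℕ) := by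
    obtain ⟨u, hu⟩ := Nat.exists_eq_add_of_le ht
    have hM0 : 0 < M := by rw [hMval, hu]; positivity
    have h1 : 4 * t * (t * S) + 4 * t + 2 * (1 + 37 * (t * Y)) + (2 * t - 4) * (K - 1) <
        3 * (M - 1) := by
      have h2 : (2 * t - 4) * (K - 1) ≤ (2 * t - 4) * K := Nat.mul_le_mul_left _ (by omega)
      have h3 : 2 * t - 4 = 36 + 2 * u := by omega
      have h4 : 4 * t * (t * S) + 4 * t + 2 * (1 + 37 * (t * Y)) + (36 + 2 * u) * K + 3 <
          3 * M := by
        rw [hMval, hY, hK, hR, hS, hu]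
        ring_nf
        linarith [Nat.zero_le u, Nat.zero_le (u ^ 2), Nat.zero_le (u ^ 3)]
      rw [h3] at h2 ⊢
      omega
    have h5 := mul_lt_mul_of_pos_left h1 hM0
    have h6 := congrArg ((2 * t - 4) * ·) hsumk
    generalize 2 * t - 4 = a, K - 1 = k, M - 1 = m, ∑ n : Fin M, (n : ℕ) = s₁,
      ∑ i : Fin M, ((finProdFinEquiv.symm i).1 : ℕ) = s₂ at h5 h6 hsumn ⊢
    linarith
  have h8 : (8 : ℝ) = 2 ^ 3 := by norm_num
  have hNr : (N : ℝ) ^ (t * S * M) ≤ 2 ^ (2 * t * (t * S * M)) := by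
    rw [pow_mul 2 (2 * t)]
    exact pow_le_pow_left₀ (Nat.cast_nonneg N) (by exact_mod_cast hN) _
  have hfr : (M.factorial : ℝ) ≤ 2 ^ (2 * t * M) := by exact_mod_cast hfact
  calc _ ≤ (2 : ℝ) ^ (2 * t * (t * S * M)) * (2 ^ (2 * t * M) * 2 ^ (M * (1 + 37 * (t * Y)) +
        (2 * t - 4) * ∑ i : Fin M, ((finProdFinEquiv.symm i).1 : ℕ))) := by
        gcongr
    _ = 2 ^ (2 * t * (t * S * M) + (2 * t * M + (M * (1 + 37 * (t * Y)) +
      (2 * t - 4) * ∑ i : Fin M, ((finProdFinEquiv.symm i).1 : ℕ)))) := by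
        rw [pow_add 2 (2 * t * (t * S * M)), pow_add 2 (2 * t * M)]
    _ < 2 ^ (3 * ∑ n : Fin M, (n : ℕ)) := pow_lt_pow_right₀ (by norm_num) hexponent
    _ = _ := by rw [pow_mul, ← h8]

theorem exists_odd_mul_pi_div_near {s φ : ℝ} {ℓ : ℕ} (hodd : Odd ℓ) (hℓ : 4 ≤ ℓ) (hs : 1 ≤ s)
    (hφ0 : 0 ≤ φ) (hφ : φ < Real.pi / 2) (h : s ^ ℓ * |Real.cos (ℓ * φ)| ≤ s) :
    ∃ j : ℕ, 0 < j ∧ j ≤ ℓ ∧ s ^ (ℓ - 1) * |2 * φ - Real.pi / ℓ * j| ≤ 1 := by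
  have hπ := Real.pi_pos
  have hℓ0 : (4 : ℝ) ≤ ℓ := by exact_mod_cast hℓ
  set m := ⌊ℓ * φ / Real.pi⌋₊ with hm
  have hm1 : m * Real.pi ≤ ℓ * φ := by
    rw [← le_div_iff₀ hπ]; exact Nat.floor_le (by positivity)
  have hm2 : ℓ * φ < (m + 1) * Real.pi := by
    rw [← div_lt_iff₀ hπ]; exact Nat.lt_floor_add_one _
  set δ := ℓ * φ - (m + 1 / 2) * Real.pi with hδ
  have hδ1 : |δ| ≤ Real.pi / 2 := by
    rw [abs_le]; constructor <;> rw [hδ] <;> linarith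
  have hcos : |Real.cos (ℓ * φ)| = |Real.sin δ| := by
    have h1 : ℓ * φ = (δ + Real.pi / 2) + m * Real.pi := by rw [hδ]; ring
    rw [h1, Real.cos_add_nat_mul_pi, abs_mul, abs_pow, abs_neg, abs_one, one_pow, one_mul,
      Real.cos_add_pi_div_two, abs_neg]
  have hsin := Real.mul_abs_le_abs_sin hδ1
  refine ⟨2 * m + 1, by omega, ?_, ?_⟩
  · obtain ⟨k, hk⟩ := hodd
    have h2 : (m : ℝ) < k + 1 := by
      have h3 : m * Real.pi < (ℓ / 2) * Real.pi := by nlinarith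
      have h4 := lt_of_mul_lt_mul_right h3 hπ.le
      have h5 : (ℓ : ℝ) = 2 * k + 1 := by exact_mod_cast hk
      linarith
    have : m < k + 1 := by exact_mod_cast h2
    omega
  · have h2 : 2 * φ - Real.pi / ℓ * ((2 * m + 1 : ℕ) : ℝ) = 2 / ℓ * δ := by
      rw [hδ]; push_cast; field_simp
    rw [h2, abs_mul, abs_of_pos (by positivity)]
    have h3 : s ^ ℓ = s * s ^ (ℓ - 1) := by rw [← pow_succ']; congr 1; omega
    rw [h3, hcos, mul_assoc] at h
    have h4 : s ^ (ℓ - 1) * |Real.sin δ| ≤ 1 := by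
      by_contra hc
      push Not at hc
      nlinarith
    have h5 : s ^ (ℓ - 1) * (2 / Real.pi * |δ|) ≤ 1 :=
      (mul_le_mul_of_nonneg_left hsin (by positivity)).trans h4
    have h6 : 2 / (ℓ : ℝ) ≤ 2 / Real.pi :=
      div_le_div_of_nonneg_left (by norm_num) hπ (by linarith [Real.pi_le_four])
    calc s ^ (ℓ - 1) * (2 / ℓ * |δ|) ≤ s ^ (ℓ - 1) * (2 / Real.pi * |δ|) := by gcongr
      _ ≤ 1 := h5

open Complex in
theorem injOn_exp_pow_of_near {φ η : ℝ} {ℓ j L : ℕ} (hℓ : ℓ.Prime) (hj0 : 0 < j) (hjℓ : j < ℓ)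
    (hL : L ≤ ℓ) (h : |2 * φ - Real.pi / ℓ * j| ≤ η) (hη : L * ℓ * η < 1) :
    Set.InjOn (fun l : ℕ => exp (I * ((2 * φ : ℝ) : ℂ)) ^ l) (Set.Iio L) := by
  have hπ := Real.pi_pos
  have hℓ0 : (0 : ℝ) < ℓ := by exact_mod_cast hℓ.pos
  have key : ∀ l l' : ℕ, l < L → l' < l →
      exp (I * ((2 * φ : ℝ) : ℂ)) ^ l = exp (I * ((2 * φ : ℝ) : ℂ)) ^ l' → False := by
    intro l l' hl hl' he
    rw [← exp_nat_mul, ← exp_nat_mul, exp_eq_exp_iff_exists_int] at he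
    obtain ⟨n, hn⟩ := he
    have h1 : (l : ℝ) * (2 * φ) = l' * (2 * φ) + n * (2 * Real.pi) := by
      have h2 : I * ((l : ℂ) * (2 * φ)) = I * (l' * (2 * φ) + n * (2 * Real.pi)) := by
        push_cast at hn
        linear_combination hn
      exact_mod_cast mul_left_cancel₀ I_ne_zero h2
    obtain ⟨d, rfl⟩ := Nat.exists_eq_add_of_lt hl'
    have h3 : ((d + 1 : ℕ) : ℝ) * (2 * φ) = n * (2 * Real.pi) := by
      push_cast at h1 ⊢; linarith
    have h4 : |((2 * n * ℓ - j * (d + 1 : ℕ) : ℤ) : ℝ)| < 1 := by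
      have h5 : ((2 * n * ℓ - j * (d + 1 : ℕ) : ℤ) : ℝ) =
          ((d + 1 : ℕ) : ℝ) * (ℓ / Real.pi) * (2 * φ - Real.pi / ℓ * j) := by
        push_cast at h3 ⊢
        field_simp
        linear_combination (-(ℓ : ℝ)) * h3
      rw [h5, abs_mul, abs_of_pos (by positivity)]
      refine lt_of_le_of_lt ?_ hη
      have hd : ((d + 1 : ℕ) : ℝ) ≤ L := by exact_mod_cast (by omega : d + 1 ≤ L)
      have hp : (ℓ : ℝ) / Real.pi ≤ ℓ := div_le_self hℓ0.le (by linarith [Real.pi_gt_three])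
      exact mul_le_mul (mul_le_mul hd hp (by positivity) (by positivity)) h (abs_nonneg _)
        (by positivity)
    have h5 : (2 * n * ℓ - j * (d + 1 : ℕ) : ℤ) = 0 := by
      rw [← Int.abs_lt_one_iff]; exact_mod_cast h4
    have h6 : (ℓ : ℤ) ∣ ((j * (d + 1) : ℕ) : ℤ) := ⟨2 * n, by push_cast at h5 ⊢; linarith⟩
    have h7 : ℓ ∣ j * (d + 1) := by exact_mod_cast h6
    rcases hℓ.dvd_mul.mp h7 with h8 | h8
    · exact absurd (Nat.le_of_dvd hj0 h8) (by omega)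
    · exact absurd (Nat.le_of_dvd (by omega) h8) (by omega)
  intro l hl l' hl' he
  rcases lt_trichotomy l l' with h1 | h1 | h1
  · exact (key l' l hl' h1 he.symm).elim
  · exact h1
  · exact (key l l' hl h1 he).elim

open Complex in
theorem one_le_norm_of_mem_range_lift {E : ℕ}
    (f : { r : ℂ // r * r = ((-(E : ℤ) : ℤ) : ℂ) }) (hf : (f : ℂ) = (√E : ℝ) * I) {x : ℂ}
    (hx : x ∈ (Zsqrtd.lift f).range) (hx0 : x ≠ 0) : 1 ≤ ‖x‖ := by
  obtain ⟨a, rfl⟩ := hx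
  rw [Zsqrtd.lift_apply_apply, hf] at hx0 ⊢
  have h1 : ‖(a.re : ℂ) + a.im * ((√E : ℝ) * I)‖ ^ 2 = ((a.re ^ 2 + E * a.im ^ 2 : ℤ) : ℝ) := by
    rw [← normSq_eq_norm_sq, normSq_apply]
    have h2 : √(E : ℝ) * √E = E := Real.mul_self_sqrt (Nat.cast_nonneg E)
    simp
    linear_combination ((a.im : ℝ) ^ 2) * h2
  have h2 : (0 : ℝ) < ((a.re ^ 2 + E * a.im ^ 2 : ℤ) : ℝ) := by
    rw [← h1]; positivity
  have h3 : (0 : ℤ) < a.re ^ 2 + E * a.im ^ 2 := by exact_mod_cast h2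
  have h4 : (1 : ℝ) ≤ ((a.re ^ 2 + E * a.im ^ 2 : ℤ) : ℝ) := by exact_mod_cast h3
  rw [← h1] at h4
  exact (one_le_sq_iff₀ (norm_nonneg _)).mp h4

open Complex in
/-- If `ℓ` is a large prime, the real part of the `ℓ`-th power of the quadratic integer
`A + √(-E)` does not equal `±A`. -/
theorem abs_re_pow_ne {A E ℓ : ℕ} (hA : 0 < A) (hE : 0 < E) (hℓ : ℓ.Prime) (h20 : 2 ^ 20 ≤ ℓ)
    (hN : 2 ^ 30 ≤ A ^ 2 + E) (hN' : 4 * (A ^ 2 + E) ≤ ℓ ^ 2) :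
    |(((A : ℂ) + (√E : ℝ) * I) ^ ℓ).re| ≠ A := by
  intro hre
  set N := A ^ 2 + E with hNdef
  set s : ℝ := √N with hs
  have hsN : s ^ 2 = N := Real.sq_sqrt (Nat.cast_nonneg _)
  have hs15 : (2 : ℝ) ^ 15 ≤ s := by
    apply Real.le_sqrt_of_sq_le
    rw [← pow_mul]
    exact_mod_cast hN
  have hs1 : 1 ≤ s := le_trans (by norm_num) hs15
  have hs0 : 0 < s := by linarith
  have hE2 : √(E : ℝ) ^ 2 = E := Real.sq_sqrt (Nat.cast_nonneg _)
  have hE0 : 0 < √(E : ℝ) := Real.sqrt_pos.mpr (by exact_mod_cast hE)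
  have hAs : (A : ℝ) < s := by
    apply Real.lt_sqrt_of_sq_lt
    exact_mod_cast (by omega : A ^ 2 < N)
  have hA1 : (1 : ℝ) ≤ A := by exact_mod_cast hA
  set β : ℂ := (A : ℂ) + (√E : ℝ) * I with hβ
  have hβre : β.re = A := by simp [hβ]
  have hβim : β.im = √E := by simp [hβ]
  have hβnorm : ‖β‖ = s := by
    rw [← sq_eq_sq₀ (norm_nonneg _) hs0.le, ← normSq_eq_norm_sq, normSq_apply, hβre, hβim, hsN,
      hNdef]
    push_cast
    linear_combination hE2
  set φ := arg β with hφ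
  have hβexp : (s : ℂ) * exp (I * φ) = β := by
    rw [← hβnorm, mul_comm I, norm_mul_exp_arg_mul_I]
  have hβexp' : (s : ℂ) * exp (-(I * φ)) = (A : ℂ) - (√E : ℝ) * I := by
    have h := congrArg (starRingEnd ℂ) hβexp
    rw [map_mul, conj_ofReal, ← exp_conj, map_mul, conj_I, conj_ofReal, neg_mul] at h
    rw [h, hβ]
    simp [sub_eq_add_neg]
  have hφ0 : 0 ≤ φ := arg_nonneg_iff.mpr (by rw [hβim]; exact hE0.le)
  have hφ1 : φ < Real.pi / 2 := by
    refine (le_abs_self _).trans_lt (abs_arg_lt_pi_div_two_iff.mpr (Or.inl ?_))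
    rw [hβre]; linarith
  have hcosφ : s * Real.cos φ = A := by
    rw [← hβre, ← hβnorm, norm_mul_cos_arg]
  have hcos : s ^ ℓ * |Real.cos (ℓ * φ)| ≤ s := by
    have h1 : β ^ ℓ = ((s ^ ℓ : ℝ) : ℂ) * exp (((ℓ * φ : ℝ) : ℂ) * I) := by
      rw [← hβexp, mul_pow, ← exp_nat_mul]
      push_cast
      congr 2
      ring
    rw [h1, re_ofReal_mul, exp_ofReal_mul_I_re, abs_mul, abs_of_pos (by positivity)] at hre
    rw [hre]; exact hAs.le
  have hℓodd : Odd ℓ := hℓ.odd_of_ne_two (by omega)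
  obtain ⟨j, hj0, hjℓ, hj⟩ := exists_odd_mul_pi_div_near hℓodd (by omega) hs1 hφ0 hφ1 hcos
  have hjlt : j < ℓ := by
    refine lt_of_le_of_ne hjℓ ?_
    rintro rfl
    have hj0' : (j : ℝ) ≠ 0 := by exact_mod_cast hj0.ne'
    rw [div_mul_cancel₀ _ hj0'] at hj
    have h1 : Real.cos φ ≤ Real.pi / 2 - φ := by
      rw [← Real.sin_pi_div_two_sub]
      exact Real.sin_le (by linarith)
    have h2 : 2 * Real.cos φ ≤ |2 * φ - Real.pi| := by
      rw [abs_sub_comm]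
      exact le_trans (by linarith) (le_abs_self _)
    have h3 : s ≤ s ^ (j - 1) := le_self_pow₀ hs1 (by omega)
    have h4 : s * (2 * Real.cos φ) ≤ s ^ (j - 1) * |2 * φ - Real.pi| :=
      mul_le_mul h3 h2 (by nlinarith) (by positivity)
    nlinarith
  have hcop : IsCoprime (j : ℤ) ℓ := by
    rw [Nat.isCoprime_iff_coprime]
    exact ((Nat.Prime.coprime_iff_not_dvd hℓ).mpr (Nat.not_dvd_of_pos_of_lt hj0 hjlt)).symm
  set t := Nat.log 2 ℓ with ht
  have ht20 : 20 ≤ t := (Nat.le_log_iff_pow_le one_lt_two (by omega)).mpr h20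
  have htℓ : 2 ^ t ≤ ℓ := Nat.pow_log_le_self 2 (by omega)
  have hℓt : ℓ < 2 ^ (t + 1) := Nat.lt_pow_succ_log_self one_lt_two ℓ
  have hNt : N ≤ 2 ^ (2 * t) := by
    have h1 : ℓ ^ 2 ≤ (2 ^ (t + 1)) ^ 2 := Nat.pow_le_pow_left hℓt.le 2
    have h2 : (2 ^ (t + 1)) ^ 2 = 4 * 2 ^ (2 * t) := by ring
    omega
  have hb1 := size_bound_one ht20
  have hb2 := size_bound_two ht20
  obtain ⟨S, hS⟩ : ∃ S, S = 42 * t + 20 := ⟨_, rfl⟩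
  obtain ⟨R, hR⟩ : ∃ R, R = t * (2 * t + 1) := ⟨_, rfl⟩
  obtain ⟨K, hK⟩ : ∃ K, K = 82 * t * (2 * t + 1) := ⟨_, rfl⟩
  obtain ⟨M, hM⟩ : ∃ M, M = K * (2 * t + 1) := ⟨_, rfl⟩
  have hMval : 3 * M = 246 * t * (2 * t + 1) ^ 2 := by rw [hM, hK]; ring
  have htS : t * S ≤ 2 ^ t := by rw [hS]; nlinarith
  have hSt : 2 * S + 1 ≤ 2 ^ t := by rw [hS]; nlinarith
  have hH : (2 : ℝ) ^ (3 * M + t) ≤ s ^ (ℓ - 1) := by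
    calc (2 : ℝ) ^ (3 * M + t) ≤ 2 ^ (15 * (ℓ - 1)) :=
          pow_le_pow_right₀ one_le_two (by omega)
      _ = (2 ^ 15) ^ (ℓ - 1) := pow_mul _ _ _
      _ ≤ s ^ (ℓ - 1) := by gcongr
  have hη : |2 * φ - Real.pi / ℓ * j| ≤ 1 / s ^ (ℓ - 1) := by
    rw [le_div_iff₀ (by positivity), mul_comm]; exact hj
  have hω : Set.InjOn (fun l : ℕ => exp (I * ((2 * φ : ℝ) : ℂ)) ^ l) (Set.Iio (2 * t + 1)) := by
    refine injOn_exp_pow_of_near hℓ hj0 hjlt (by omega) hη ?_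
    rw [mul_one_div, div_lt_one (by positivity)]
    refine lt_of_lt_of_le ?_ hH
    have h1 : (2 * t + 1) * ℓ < 2 ^ (3 * M + t) := by
      calc (2 * t + 1) * ℓ < 2 ^ t * 2 ^ (t + 1) :=
            Nat.mul_lt_mul_of_le_of_lt (by omega) hℓt (by positivity)
        _ = 2 ^ (t + (t + 1)) := (pow_add _ _ _).symm
        _ ≤ 2 ^ (3 * M + t) := Nat.pow_le_pow_right two_pos (by nlinarith)
    exact_mod_cast h1
  have hclose : (8 : ℝ) ^ (K * (2 * t + 1)) * (t * S * |2 * φ - Real.pi / ℓ * j|) ≤ 1 := by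
    rw [← hM]
    have h1 : (8 : ℝ) ^ M * (t * S) ≤ s ^ (ℓ - 1) := by
      refine le_trans ?_ hH
      rw [pow_add, pow_mul]
      have : ((t : ℝ) * S) ≤ 2 ^ t := by exact_mod_cast htS
      norm_num
      gcongr
    calc (8 : ℝ) ^ M * (t * S * |2 * φ - Real.pi / ℓ * j|)
        = 8 ^ M * (t * S) * |2 * φ - Real.pi / ℓ * j| := by ring
      _ ≤ s ^ (ℓ - 1) * |2 * φ - Real.pi / ℓ * j| := by gcongr
      _ ≤ 1 := hj
  have hcard : (K - 1) * (2 * t + 1) < (2 * R + 1) * (2 * S + 1 + 1 - (2 * t + 1)) := by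
    have h1 : 2 * S + 1 + 1 - (2 * t + 1) = 41 * (2 * t + 1) := by omega
    rw [h1]
    have h2 : K - 1 < (2 * R + 1) * 41 := by
      have : K = 82 * R := by rw [hK, hR]; ring
      omega
    calc (K - 1) * (2 * t + 1) < (2 * R + 1) * 41 * (2 * t + 1) :=
          Nat.mul_lt_mul_of_pos_right h2 (by omega)
      _ = _ := by ring
  let f : { r : ℂ // r * r = ((-(E : ℤ) : ℤ) : ℂ) } := ⟨(√E : ℝ) * I, by
    have h : ((√E : ℝ) : ℂ) ^ 2 = E := by exact_mod_cast hE2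
    push_cast
    linear_combination I ^ 2 * h + (E : ℂ) * I_sq⟩
  have hmem : ∀ a : ℤ√(-(E : ℤ)), (a.re : ℂ) + a.im * ((√E : ℝ) * I) ∈ (Zsqrtd.lift f).range :=
    fun a => ⟨a, Zsqrtd.lift_apply_apply f a⟩
  have hle := interpolation_inequality (O := (Zsqrtd.lift f).range)
    (fun x hx hx0 => one_le_norm_of_mem_range_lift f rfl hx hx0) hsN (by omega)
    (by rw [hβexp]; simpa using hmem ⟨A, 1⟩)
    (by rw [hβexp']; simpa [sub_eq_add_neg] using hmem ⟨A, -1⟩)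
    hcop hjℓ hℓ.pos (hSt.trans htℓ) (by omega) hω hcard (by norm_num : (1 : ℝ) ≤ 8) hclose
  exact absurd hle (not_le.mpr (interpolation_parameters_lt ht20 hℓt.le hNt hS hR hK))

namespace Zsqrtd

theorem add_star {d : ℤ} (z : ℤ√d) : z + star z = ((2 * z.re : ℤ) : ℤ√d) := by
  ext
  · simp; ring
  · simp

theorem re_dvd_re_pow {d : ℤ} (z : ℤ√d) {n : ℕ} (hn : Odd n) : z.re ∣ (z ^ n).re := by
  have h := Odd.add_dvd_pow_add_pow z (star z) hn
  rw [← star_pow, add_star, add_star, intCast_dvd_intCast] at h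
  exact (mul_dvd_mul_iff_left two_ne_zero).mp h

theorem odd_re_pow {d : ℤ} {z : ℤ√d} (hre : Odd z.re) (him : Even (d * z.im)) (n : ℕ) :
    Odd (z ^ n).re := by
  induction n with
  | zero => simp
  | succ n ih =>
    rw [pow_succ, re_mul, show d * (z ^ n).im * z.im = d * z.im * (z ^ n).im by ring]
    exact (ih.mul hre).add_even (him.mul_right _)

theorem _root_.mul_dvd_add_pow_sub {R : Type*} [CommRing R] (x y : R) (n : ℕ) :
    x * y ∣ (x + y) ^ (n + 1) - (x ^ (n + 1) + y ^ (n + 1)) := by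
  induction n with
  | zero => simp
  | succ n ih =>
    have h : (x + y) ^ (n + 2) - (x ^ (n + 2) + y ^ (n + 2)) =
        (x + y) * ((x + y) ^ (n + 1) - (x ^ (n + 1) + y ^ (n + 1))) +
          x * y * (x ^ n + y ^ n) := by ring
    rw [h]
    exact dvd_add (Dvd.dvd.mul_left ih _) (dvd_mul_right _ _)

theorem norm_dvd_two_mul_re_pow_sub {d : ℤ} (z : ℤ√d) {n : ℕ} (hn : n ≠ 0) :
    z.norm ∣ (2 * z.re) ^ n - 2 * (z ^ n).re := by
  obtain ⟨n, rfl⟩ := Nat.exists_eq_add_one_of_ne_zero hn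
  have h := mul_dvd_add_pow_sub z (star z) n
  rw [← norm_eq_mul_conj, ← star_pow, add_star, add_star, ← Int.cast_pow, ← Int.cast_sub,
    intCast_dvd_intCast] at h
  exact h

open Complex in
theorem abs_re_pow_eq {D : ℕ} (z : ℤ√(-(D : ℤ))) (n : ℕ) :
    |(((z.re.natAbs : ℂ) + (√((D * z.im.natAbs ^ 2 : ℕ) : ℝ) : ℝ) * I) ^ n).re| =
      |((z ^ n).re : ℝ)| := by
  have hD : √(D : ℝ) ^ 2 = D := Real.sq_sqrt (Nat.cast_nonneg D)
  let f : { r : ℂ // r * r = ((-(D : ℤ) : ℤ) : ℂ) } := ⟨(√D : ℝ) * I, by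
    have h : ((√D : ℝ) : ℂ) ^ 2 = D := by exact_mod_cast hD
    push_cast
    linear_combination I ^ 2 * h + (D : ℂ) * I_sq⟩
  have hf : ∀ w : ℤ√(-(D : ℤ)), lift f w = (w.re : ℂ) + w.im * ((√D : ℝ) * I) :=
    fun w => lift_apply_apply f w
  have hfre : ∀ w : ℤ√(-(D : ℤ)), (lift f w).re = w.re := fun w => by rw [hf]; simp
  rw [← hfre, map_pow, hf]
  have hs : (√((D * z.im.natAbs ^ 2 : ℕ) : ℝ) : ℝ) = z.im.natAbs * √D := by
    rw [Nat.cast_mul, Nat.cast_pow, Real.sqrt_mul (Nat.cast_nonneg D),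
      Real.sqrt_sq (Nat.cast_nonneg _), mul_comm]
  rw [hs]
  have hconj : ∀ x : ℂ, |((starRingEnd ℂ x) ^ n).re| = |(x ^ n).re| := fun x => by
    rw [← map_pow, conj_re]
  have hneg : ∀ x : ℂ, |((-x) ^ n).re| = |(x ^ n).re| := fun x => by
    rcases n.even_or_odd with h | h
    · rw [h.neg_pow]
    · rw [h.neg_pow, neg_re, abs_neg]
  obtain ⟨a, b⟩ := z
  rcases Int.natAbs_eq a with ha | ha <;> rcases Int.natAbs_eq b with hb | hb <;>
    generalize a.natAbs = a' at ha ⊢ <;> generalize b.natAbs = b' at hb ⊢ <;> subst ha hb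
  · push_cast; ring_nf
  · rw [← hconj]; simp only [map_add, map_mul, conj_I, conj_ofReal, map_natCast]; push_cast; ring_nf
  · rw [← hconj, ← hneg]; simp only [map_add, map_mul, conj_I, conj_ofReal, map_natCast]
    push_cast; ring_nf
  · rw [← hneg]; push_cast; ring_nf

end Zsqrtd

theorem pow_dvd_of_pow_dvd_pow_sub_one {p h n : ℕ} (hp : p.Prime) (hp2 : p ≠ 2) {a : ℤ}
    (ha : ¬ (p : ℤ) ∣ a) (hap : ¬ (p : ℤ) ^ 2 ∣ a ^ (p - 1) - 1)
    (h1 : (p : ℤ) ^ (h + 1) ∣ a ^ n - 1) : p ^ h ∣ n := by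
  have hP : Prime (p : ℤ) := Nat.prime_iff_prime_int.mp hp
  have : Fact p.Prime := ⟨hp⟩
  have hfermat : (p : ℤ) ∣ a ^ (p - 1) - 1 := by
    rw [← Int.modEq_iff_dvd]
    exact (Int.ModEq.pow_card_sub_one_eq_one hp
      ((Prime.coprime_iff_not_dvd hP).mpr ha).symm).symm
  have hmul : emultiplicity (p : ℤ) (a ^ (p - 1) - 1) = 1 := by
    have := (emultiplicity_eq_coe (a := (p : ℤ)) (b := a ^ (p - 1) - 1) (n := 1)).mpr
      ⟨by simpa using hfermat, by simpa using hap⟩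
    simpa using this
  have hlte := Int.emultiplicity_pow_sub_pow (x := a ^ (p - 1)) (y := 1) hp
    (hp.odd_of_ne_two hp2) hfermat (fun h => ha (hP.dvd_of_dvd_pow h)) n
  rw [one_pow, hmul] at hlte
  have h2 : (p : ℤ) ^ (h + 1) ∣ (a ^ (p - 1)) ^ n - 1 := by
    refine h1.trans ?_
    rw [← pow_mul, mul_comm, pow_mul]
    exact sub_one_dvd_pow_sub_one _ _
  have h3 := le_emultiplicity_of_pow_dvd h2
  rw [hlte, Nat.cast_add, Nat.cast_one, add_comm] at h3
  exact pow_dvd_of_le_emultiplicity ((ENat.add_le_add_iff_left (by simp)).mp h3)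

theorem Int.pow_prime_sub_one_four_mul {p q : ℕ} (hw : 2 ^ (p - 1) ≡ 1 [MOD p ^ 2])
    (hqw : ¬ q ^ (p - 1) ≡ 1 [MOD p ^ 2]) : ¬ (p : ℤ) ^ 2 ∣ (4 * q : ℤ) ^ (p - 1) - 1 := by
  intro h
  apply hqw
  have h4 : 4 ^ (p - 1) ≡ 1 [MOD p ^ 2] := by
    have := hw.pow 2
    rwa [← pow_mul, mul_comm, pow_mul, one_pow] at this
  have h1 : (4 * q) ^ (p - 1) ≡ 1 [MOD p ^ 2] := by
    refine ((Nat.modEq_iff_dvd).mpr ?_).symm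
    push_cast
    exact h
  rw [mul_pow] at h1
  calc q ^ (p - 1) = 1 * q ^ (p - 1) := (one_mul _).symm
    _ ≡ 4 ^ (p - 1) * q ^ (p - 1) [MOD p ^ 2] := h4.symm.mul_right _
    _ ≡ 1 [MOD p ^ 2] := h1

namespace Zsqrtd

theorem abs_re_pow_ne_two_mul {p q h ℓ D : ℕ} (hp : p.Prime) (hmod : p % 4 = 1)
    (hw : 2 ^ (p - 1) ≡ 1 [MOD p ^ 2]) (hq : q.Prime) (hqp : q ∣ p - 2)
    (hqw : ¬ q ^ (p - 1) ≡ 1 [MOD p ^ 2]) (hh : 2 ≤ h) (hℓ : ℓ.Prime)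
    {z : ℤ√(-(D : ℤ))} (hz : z.norm = p ^ h) : |(z ^ ℓ).re| ≠ 2 * q := by
  intro hre
  have hP : Prime (p : ℤ) := Nat.prime_iff_prime_int.mp hp
  have hp5 : 5 ≤ p := by have := hp.two_le; omega
  have hpodd : Odd p := Nat.odd_iff.mpr (by omega)
  have hqodd : Odd q := by
    rw [← Nat.not_even_iff_odd]
    intro hqe
    have := (hqe.two_dvd.trans hqp)
    omega
  have hqlt : q < p := by have := Nat.le_of_dvd (by omega) hqp; omega
  have hpq : ¬ (p : ℤ) ∣ 4 * q := by
    intro h1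
    have h2 : p ∣ 2 ^ 2 * q := by exact_mod_cast h1
    rcases (Nat.Prime.dvd_mul hp).mp h2 with h3 | h3
    · have := Nat.le_of_dvd (by norm_num) (hp.dvd_of_dvd_pow h3); omega
    · have := Nat.le_of_dvd hq.pos h3; omega
  have hpow := Int.pow_prime_sub_one_four_mul hw hqw
  have hnormodd : Odd (z.norm) := by
    rw [hz]; exact (by exact_mod_cast hpodd : Odd (p : ℤ)).pow
  have hnorm := norm_neg_natCast z
  have heven : Even ((z ^ ℓ).re) := by
    rw [← even_abs, hre]; exact even_two_mul _
  have hℓodd : Odd ℓ := by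
    rw [← Nat.not_even_iff_odd]
    intro he
    obtain rfl := (hℓ.even_iff).mp he
    rw [← Int.not_even_iff_odd] at hnormodd
    apply hnormodd
    have : z.norm = (z ^ 2).re + 2 * (D * z.im ^ 2) := by
      rw [hnorm, sq z, re_mul]; ring
    rw [this]
    exact heven.add (even_two_mul _)
  have hreeven : Even z.re := by
    rw [← Int.not_odd_iff_even]
    intro ho
    refine (Int.not_odd_iff_even.mpr heven) (odd_re_pow ho ?_ ℓ)
    have h1 : Even (D * z.im ^ 2 : ℤ) := by
      rw [hnorm, Int.odd_add] at hnormodd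
      exact hnormodd.mp ho.pow
    rw [sq, ← mul_assoc, Int.even_mul] at h1
    rw [neg_mul, even_neg]
    rcases h1 with h1 | h1
    · exact h1
    · exact h1.mul_left _
  have hcongr : (p : ℤ) ^ h ∣ (2 * z.re) ^ (2 * ℓ) - (4 * q) ^ 2 := by
    have h1 := norm_dvd_two_mul_re_pow_sub z hℓ.ne_zero
    rw [hz] at h1
    have h2 : (4 * q : ℤ) ^ 2 = (2 * (z ^ ℓ).re) ^ 2 := by
      rw [mul_pow 2, ← sq_abs (z ^ ℓ).re, hre]; ring
    rw [h2, mul_comm 2 ℓ, pow_mul]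
    exact h1.trans (sub_dvd_pow_sub_pow _ _ 2)
  have hdvd : z.re.natAbs ∣ 2 * q := by
    have h1 : z.re.natAbs ∣ (z ^ ℓ).re.natAbs := Int.natAbs_dvd_natAbs.mpr (re_dvd_re_pow z hℓodd)
    have h2 : (z ^ ℓ).re.natAbs = 2 * q := by
      rw [Int.abs_eq_natAbs] at hre
      exact_mod_cast hre
    rwa [h2] at h1
  have hcases : z.re.natAbs = 2 ∨ z.re.natAbs = 2 * q := by
    obtain ⟨a, b, ha, hb, hab⟩ := (Nat.dvd_mul).mp hdvd
    have hodd : ¬ Odd z.re.natAbs := by rwa [Int.natAbs_odd, Int.not_odd_iff_even]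
    rcases (Nat.dvd_prime Nat.prime_two).mp ha with rfl | rfl <;>
      rcases (Nat.dvd_prime hq).mp hb with rfl | rfl
    · exact (hodd (by rw [← hab]; decide)).elim
    · exact (hodd (by rw [← hab, one_mul]; exact hqodd)).elim
    · left; omega
    · right; omega
  rcases hcases with hu | hu
  · apply hpow
    have h0 : (2 * z.re) ^ 2 = 4 ^ 2 := by
      rw [mul_pow, ← Int.natAbs_sq z.re, hu]; norm_num
    rw [pow_mul, h0, ← pow_mul, mul_comm 2 ℓ, pow_mul] at hcongr
    have h1 : (p : ℤ) ^ 2 ∣ (4 * q) ^ 2 - (4 ^ ℓ) ^ 2 :=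
      (pow_dvd_pow _ hh).trans ((dvd_sub_comm).mp hcongr)
    obtain ⟨k, hk⟩ : ∃ k, p - 1 = 2 * k := ⟨(p - 1) / 2, by omega⟩
    have h2 : (p : ℤ) ^ 2 ∣ (4 * q) ^ (p - 1) - (4 ^ ℓ) ^ (p - 1) := by
      rw [hk, pow_mul, pow_mul _ 2 k]
      exact h1.trans (sub_dvd_pow_sub_pow _ _ k)
    have h3 : (p : ℤ) ^ 2 ∣ (4 ^ ℓ) ^ (p - 1) - 1 := by
      have h4 : (p : ℤ) ^ 2 ∣ 2 ^ (p - 1) - 1 := by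
        have := (Nat.modEq_iff_dvd).mp hw.symm
        push_cast at this
        exact this
      refine h4.trans ?_
      have : ((4 : ℤ) ^ ℓ) ^ (p - 1) = (2 ^ (p - 1)) ^ (2 * ℓ) := by
        rw [show (4 : ℤ) = 2 ^ 2 by norm_num, ← pow_mul, ← pow_mul, ← pow_mul]
        congr 1
        ring
      rw [this]
      exact sub_one_dvd_pow_sub_one _ _
    simpa using dvd_add h2 h3
  · have h0 : (2 * z.re) ^ 2 = (4 * q) ^ 2 := by
      rw [mul_pow, ← Int.natAbs_sq z.re, hu]; push_cast; ring
    rw [pow_mul, h0, ← pow_mul] at hcongr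
    have hℓ2 := hℓ.two_le
    have h1 : (p : ℤ) ^ (h - 1 + 1) ∣ (4 * q) ^ (2 * (ℓ - 1)) - 1 := by
      rw [Nat.sub_add_cancel (by omega)]
      have h2 : (4 * q : ℤ) ^ (2 * ℓ) - (4 * q) ^ 2 =
          (4 * q) ^ 2 * ((4 * q) ^ (2 * (ℓ - 1)) - 1) := by
        rw [mul_sub, ← pow_add, mul_one]
        congr 2
        omega
      rw [h2] at hcongr
      refine IsCoprime.dvd_of_dvd_mul_left ?_ hcongr
      exact ((Prime.coprime_iff_not_dvd hP).mpr hpq).pow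
    have h2 := pow_dvd_of_pow_dvd_pow_sub_one hp (by omega) hpq hpow h1
    have h3 : 2 * p ^ (h - 1) ∣ ℓ - 1 := by
      have hcop : Nat.Coprime (p ^ (h - 1)) 2 := by
        rw [Nat.coprime_two_right]; exact hpodd.pow
      have h4 : p ^ (h - 1) ∣ ℓ - 1 := hcop.dvd_of_dvd_mul_left h2
      refine hcop.symm.mul_dvd_of_dvd_of_dvd ?_ h4
      obtain ⟨k, hk⟩ := hℓodd
      omega
    have h4 := Nat.le_of_dvd (by omega) h3
    have hpos : 0 < p ^ (h - 1) := pow_pos hp.pos _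
    set E := D * z.im.natAbs ^ 2 with hE
    have hNE : (2 * q) ^ 2 + E = p ^ h := by
      have : ((z.re.natAbs ^ 2 + D * z.im.natAbs ^ 2 : ℕ) : ℤ) = ((p ^ h : ℕ) : ℤ) := by
        push_cast
        rw [sq_abs, sq_abs, ← hnorm, hz]
      rw [hu] at this
      exact_mod_cast this
    have hE0 : 0 < E := by
      rw [Nat.pos_iff_ne_zero]
      intro h0
      rw [h0, add_zero] at hNE
      have : Odd ((2 * q) ^ 2) := by rw [hNE]; exact hpodd.pow
      rw [← Nat.not_even_iff_odd] at this
      exact this ((even_two_mul q).pow_of_ne_zero two_ne_zero)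
    have hbig : 2 ^ 20 ≤ ℓ ∧ 2 ^ 30 ≤ p ^ h := by
      by_cases hsmall : p < 2 ^ 19
      · obtain rfl := wieferich_eq_1093 hp hmod hw hsmall
        have hh3 : 3 ≤ h := by
          by_contra hlt
          obtain rfl : h = 2 := by omega
          have hq1091 : q = 1091 :=
            (Nat.prime_dvd_prime_iff_eq hq (by norm_num)).mp hqp
          rw [hq1091] at hNE
          omega
        have h5 : 1093 ^ 2 ≤ 1093 ^ (h - 1) := Nat.pow_le_pow_right (by norm_num) (by omega)
        have h6 : 1093 ^ 3 ≤ 1093 ^ h := Nat.pow_le_pow_right (by norm_num) hh3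
        norm_num at h5 h6 ⊢
        omega
      · push Not at hsmall
        have h5 : p ^ 1 ≤ p ^ (h - 1) := Nat.pow_le_pow_right hp.pos (by omega)
        have h6 : p ^ 2 ≤ p ^ h := Nat.pow_le_pow_right hp.pos hh
        have h7 : (2 ^ 19) ^ 2 ≤ p ^ 2 := Nat.pow_le_pow_left hsmall 2
        norm_num at *
        omega
    have hN' : 4 * p ^ h ≤ ℓ ^ 2 := by
      calc 4 * p ^ h ≤ 4 * p ^ ((h - 1) * 2) :=
            Nat.mul_le_mul_left 4 (Nat.pow_le_pow_right hp.pos (by omega))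
        _ = (2 * p ^ (h - 1)) ^ 2 := by rw [mul_pow, ← pow_mul]; norm_num
        _ ≤ ℓ ^ 2 := Nat.pow_le_pow_left (by omega) 2
    refine abs_re_pow_ne (A := 2 * q) (E := E) (by have := hq.pos; omega) hE0 hℓ hbig.1
      (by rw [hNE]; exact hbig.2) (by rw [hNE]; exact hN') ?_
    have h8 := abs_re_pow_eq z ℓ
    rw [hu] at h8
    rw [h8, ← Int.cast_abs, hre]
    push_cast
    rfl

end Zsqrtd

open IntermediateField in
theorem exists_eq_ratCast_add_mul_of_mem_adjoin {b : ℚ} {z w : ℂ} (hw : w ^ 2 = b)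
    (h : z ∈ adjoin ℚ {w}) : ∃ x y : ℚ, z = x + y * w := by
  have halg : IsAlgebraic ℚ w := by
    refine ⟨Polynomial.X ^ 2 - Polynomial.C b, Polynomial.X_pow_sub_C_ne_zero two_pos b, ?_⟩
    simp [hw]
  rw [← mem_toSubalgebra, adjoin_simple_toSubalgebra_of_isAlgebraic halg] at h
  induction h using Algebra.adjoin_induction with
  | mem x hx => exact ⟨0, 1, by simp_all⟩
  | algebraMap r => exact ⟨r, 0, by simp⟩
  | add u v _ _ hu hv =>
    obtain ⟨x, y, rfl⟩ := hu
    obtain ⟨x', y', rfl⟩ := hv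
    exact ⟨x + x', y + y', by push_cast; ring⟩
  | mul u v _ _ hu hv =>
    obtain ⟨x, y, rfl⟩ := hu
    obtain ⟨x', y', rfl⟩ := hv
    exact ⟨x * x' + y * y' * b, x * y' + y * x', by push_cast; linear_combination (y * y' : ℂ) * hw⟩

/-- Square roots of negative rational numbers generating the same field have a rational
quotient. -/
theorem exists_ratCast_sq_mul_eq {a b : ℚ} (ha : a < 0) (hb : b < 0) {z w : ℂ} (hz : z ^ 2 = a)
    (hw : w ^ 2 = b) (h : z ∈ IntermediateField.adjoin ℚ {w}) : ∃ y : ℚ, a = y ^ 2 * b := by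
  obtain ⟨x, y, rfl⟩ := exists_eq_ratCast_add_mul_of_mem_adjoin hw h
  have hnsq : ∀ c : ℚ, c < 0 → ∀ r : ℚ, c ≠ r ^ 2 := fun c hc r h => by nlinarith [sq_nonneg r]
  have h1 : ((2 * x * y : ℚ) : ℂ) * w = ((a - x ^ 2 - y ^ 2 * b : ℚ) : ℂ) := by
    push_cast
    linear_combination hz - (y : ℂ) ^ 2 * hw
  have hxy : 2 * x * y = 0 := by
    by_contra hne
    have h2 : w = ((a - x ^ 2 - y ^ 2 * b) / (2 * x * y) : ℚ) := by
      rw [Rat.cast_div, eq_div_iff (by exact_mod_cast hne), mul_comm]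
      exact h1
    rw [h2] at hw
    exact hnsq b hb _ (by exact_mod_cast hw.symm)
  rw [hxy, Rat.cast_zero, zero_mul] at h1
  have h3 : a - x ^ 2 - y ^ 2 * b = 0 := by exact_mod_cast h1.symm
  rcases mul_eq_zero.mp hxy with h | h
  · have hx : x = 0 := by linarith
    exact ⟨y, by rw [hx] at h3; linarith⟩
  · exact absurd (by rw [h] at h3; linarith) (hnsq a ha x)

open IntermediateField in
theorem adjoin_eq_adjoin_I {a : ℕ} (ha : a ≠ 0) {z : ℂ} (hz : z ^ 2 = -(a : ℂ) ^ 2) :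
    adjoin ℚ {z} = adjoin ℚ {Complex.I} := by
  have ha0 : (a : ℂ) ≠ 0 := by exact_mod_cast ha
  have h0 : ∃ e : ℚ, e ^ 2 = 1 ∧ z = (e * a : ℚ) * Complex.I := by
    have h1 : z ^ 2 = (a * Complex.I) ^ 2 := by rw [hz, mul_pow, Complex.I_sq]; ring
    rcases sq_eq_sq_iff_eq_or_eq_neg.mp h1 with h | h
    · exact ⟨1, by simp, by simp [h]⟩
    · exact ⟨-1, by simp, by simp [h]⟩
  obtain ⟨e, he, h0⟩ := h0
  have hmem : ∀ (K : IntermediateField ℚ ℂ) (r : ℚ), (r : ℂ) ∈ K := fun K r =>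
    K.algebraMap_mem r
  apply le_antisymm
  · rw [adjoin_simple_le_iff, h0]
    exact mul_mem (hmem _ _) (mem_adjoin_simple_self ℚ _)
  · rw [adjoin_simple_le_iff]
    have h2 : Complex.I = ((e / a : ℚ) : ℂ) * z := by
      have he' : (e : ℂ) ^ 2 = 1 := by exact_mod_cast he
      rw [h0]
      push_cast
      field_simp
      linear_combination -he'
    rw [h2]
    exact mul_mem (hmem _ _) (mem_adjoin_simple_self ℚ _)

/-- Natural numbers whose quotient is a rational square have the same squarefree part. -/
theorem exists_squarefree_mul_sq {m n : ℕ} {y : ℚ}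
    (h : (m : ℚ) = y ^ 2 * n) : ∃ D a b : ℕ, Squarefree D ∧ m = D * a ^ 2 ∧ n = D * b ^ 2 := by
  obtain ⟨D, b, hDb, hsq⟩ := Nat.sq_mul_squarefree n
  have hD : D ≠ 0 := hsq.ne_zero
  have h1 : IsSquare (((m * D : ℕ) : ℚ)) := by
    refine ⟨y * (b * D), ?_⟩
    rw [← hDb] at h
    push_cast at h ⊢
    rw [h]; ring
  rw [Rat.isSquare_natCast_iff] at h1
  obtain ⟨c, hc⟩ := h1
  have hdvd : D ∣ c := (hsq.dvd_pow_iff_dvd two_ne_zero).mp ⟨m, by rw [sq, ← hc, mul_comm]⟩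
  obtain ⟨a, rfl⟩ := hdvd
  refine ⟨D, a, b, hsq, ?_, by rw [← hDb, mul_comm]⟩
  apply Nat.eq_of_mul_eq_mul_right (Nat.pos_of_ne_zero hD)
  rw [hc]; ring

theorem not_lt_of_four_mul_sq_add_eq_pow {p q : ℕ} (hp : p.Prime) (hmod : p % 4 = 1)
    (hw : 2 ^ (p - 1) ≡ 1 [MOD p ^ 2]) (hq : q.Prime) (hqp : q ∣ p - 2)
    (hqw : ¬ q ^ (p - 1) ≡ 1 [MOD p ^ 2]) {D a b m n : ℕ} (hD : 1 < D) (hm : 0 < m)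
    (hn : ¬ n.Prime) (h1 : 4 * q ^ 2 + D * a ^ 2 = p ^ m) (h2 : 4 * q ^ 2 + D * b ^ 2 = p ^ n) :
    ¬ m < n := by
  intro hmn
  have hp5 : 5 ≤ p := by have := hp.two_le; omega
  have hqlt : q < p := by have := Nat.le_of_dvd (by omega) hqp; omega
  have hp2q : ¬ p ∣ 2 * q := by
    intro h
    rcases (Nat.Prime.dvd_mul hp).mp h with h3 | h3
    · have := Nat.le_of_dvd (by norm_num) h3; omega
    · have := Nat.le_of_dvd hq.pos h3; omega
  have hpD : ¬ p ∣ D := by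
    intro h
    apply hp2q
    have h3 : p ∣ 4 * q ^ 2 + D * a ^ 2 := by rw [h1]; exact dvd_pow_self p hm.ne'
    have h4 := (Nat.dvd_add_left (Dvd.dvd.mul_right h _)).mp h3
    exact hp.dvd_of_dvd_pow (n := 2) (by rwa [mul_pow])
  have hprim : ¬ (p : ℤ) ∣ 2 * q := by exact_mod_cast hp2q
  have hnorm : ∀ {c k : ℕ}, 4 * q ^ 2 + D * c ^ 2 = p ^ k →
      (⟨2 * q, c⟩ : ℤ√(-(D : ℤ))).norm = p ^ k := by
    intro c k h
    rw [Zsqrtd.norm_neg_natCast]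
    have h' : (4 * q ^ 2 + D * c ^ 2 : ℤ) = p ^ k := by exact_mod_cast h
    linear_combination h'
  classical
  have hex : ∃ k, 0 < k ∧ ∃ y : ℤ√(-(D : ℤ)), y.norm = p ^ k ∧ ¬ (p : ℤ) ∣ y.re :=
    ⟨m, hm, ⟨2 * q, a⟩, hnorm h1, hprim⟩
  obtain ⟨hg, α, hα, hpα⟩ := Nat.find_spec hex
  have hmin : ∀ k, 0 < k → ∀ y : ℤ√(-(D : ℤ)), y.norm = p ^ k → ¬ (p : ℤ) ∣ y.re →
      Nat.find hex ≤ k := fun k hk y hy hpy => Nat.find_min' hex ⟨hk, y, hy, hpy⟩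
  generalize Nat.find hex = g at hg hα hmin
  obtain ⟨k', hk', -⟩ := Zsqrtd.eq_pow_of_norm_eq_prime_pow hp (by omega) hD hpD hg hα hpα hmin hm
    (hnorm h1) hprim
  obtain ⟨k, hk, hy⟩ := Zsqrtd.eq_pow_of_norm_eq_prime_pow hp (by omega) hD hpD hg hα hpα hmin
    (by omega) (hnorm h2) hprim
  have hk1 : k ≠ 1 := by
    rintro rfl
    have : k' ≠ 0 := by rintro rfl; omega
    have := Nat.mul_le_mul_left g (Nat.one_le_iff_ne_zero.mpr this)
    omega
  have hℓ := Nat.minFac_prime hk1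
  obtain ⟨e, he⟩ := Nat.minFac_dvd k
  generalize k.minFac = ℓ at hℓ he
  have hz : (α ^ e).norm = p ^ (g * e) := by
    rw [pow_mul, ← hα]
    exact map_pow Zsqrtd.normMonoidHom α e
  have hge : 2 ≤ g * e := by
    by_contra hlt
    have h3 : g * e = 0 ∨ g * e = 1 := by omega
    have h4 : n = ℓ * (g * e) := by rw [hk, he]; ring
    rcases h3 with h3 | h3
    · rw [h3] at h4; omega
    · rw [h3, mul_one] at h4
      exact hn (h4 ▸ hℓ)
  refine Zsqrtd.abs_re_pow_ne_two_mul hp hmod hw hq hqp hqw hge hℓ hz ?_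
  have hq0 : (0 : ℤ) ≤ 2 * q := by positivity
  rw [← pow_mul, mul_comm e, ← he]
  rcases hy with h | h | h | h
  · rw [← h]; exact abs_of_nonneg hq0
  · rw [← neg_eq_iff_eq_neg] at h
    rw [← h, Zsqrtd.re_neg, abs_neg]; exact abs_of_nonneg hq0
  · rw [← h, Zsqrtd.re_star]; exact abs_of_nonneg hq0
  · rw [← neg_eq_iff_eq_neg] at h
    rw [← h, Zsqrtd.re_neg, abs_neg, Zsqrtd.re_star]; exact abs_of_nonneg hq0

/-- Let `p` be a prime with `p ≡ 1 (mod 4)` and `2^(p−1) ≡ 1 (mod p^2)`, and let `q1` be a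
prime factor of `p − 2` such that `q1^(p−1) ≢ 1 (mod p^2)`. If `n1` and `n2` are positive
composite numbers such that `ℚ(√(4q1^2 − p^n1)) ≠ ℚ(i)`, `ℚ(√(4q1^2 − p^n2)) ≠ ℚ(i)`, and
`ℚ(√(4q1^2 − p^n1)) = ℚ(√(4q1^2 − p^n2))`, then `n1 = n2`. -/
theorem stmt_6 (p : ℕ) (hp : p.Prime) (hmod : p % 4 = 1)
    (hw : 2 ^ (p - 1) ≡ 1 [MOD p ^ 2])
    (q1 : ℕ) (hq1 : q1.Prime) (hq1dvd : q1 ∣ p - 2)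
    (hq1nw : ¬ (q1 ^ (p - 1) ≡ 1 [MOD p ^ 2]))
    (n1 n2 : ℕ) (hpos1 : 0 < n1) (hpos2 : 0 < n2)
    (hc1 : 1 < n1 ∧ ¬ n1.Prime) (hc2 : 1 < n2 ∧ ¬ n2.Prime)
    (z1 z2 : ℂ) (hz1 : z1 ^ 2 = 4 * (q1 : ℂ) ^ 2 - (p : ℂ) ^ n1)
    (hz2 : z2 ^ 2 = 4 * (q1 : ℂ) ^ 2 - (p : ℂ) ^ n2)
    (hni1 : IntermediateField.adjoin ℚ {z1} ≠ IntermediateField.adjoin ℚ {Complex.I})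
    (hni2 : IntermediateField.adjoin ℚ {z2} ≠ IntermediateField.adjoin ℚ {Complex.I})
    (heq : IntermediateField.adjoin ℚ {z1} = IntermediateField.adjoin ℚ {z2}) :
    n1 = n2 := by
  have hp5 : 5 ≤ p := by have := hp.two_le; omega
  have hqlt : 2 * q1 < p ^ 2 := by
    have h1 := Nat.le_of_dvd (by omega) hq1dvd
    have h2 : q1 ≤ p := by omega
    nlinarith
  have hpos : ∀ n : ℕ, 1 < n → ¬ n.Prime → ∃ E, 0 < E ∧ 4 * q1 ^ 2 + E = p ^ n := by
    intro n hn hnp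
    have hn4 : 4 ≤ n := by
      by_contra hlt
      interval_cases n
      · exact hnp Nat.prime_two
      · exact hnp Nat.prime_three
    have h1 : p ^ 4 ≤ p ^ n := Nat.pow_le_pow_right hp.pos hn4
    have h2 : 4 * q1 ^ 2 < p ^ 4 := by nlinarith
    exact ⟨p ^ n - 4 * q1 ^ 2, by omega, by omega⟩
  obtain ⟨E1, hE1, h1⟩ := hpos n1 hc1.1 hc1.2
  obtain ⟨E2, hE2, h2⟩ := hpos n2 hc2.1 hc2.2
  have hcast : ∀ {E n : ℕ}, 4 * q1 ^ 2 + E = p ^ n →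
      4 * (q1 : ℂ) ^ 2 - (p : ℂ) ^ n = -(E : ℂ) := by
    intro E n h
    have h' : 4 * (q1 : ℂ) ^ 2 + E = (p : ℂ) ^ n := by exact_mod_cast h
    linear_combination h'
  rw [hcast h1] at hz1
  rw [hcast h2] at hz2
  obtain ⟨y, hy⟩ := exists_ratCast_sq_mul_eq (a := -(E1 : ℚ)) (b := -(E2 : ℚ))
    (by simpa using hE1) (by simpa using hE2) (by simpa using hz1) (by simpa using hz2)
    (heq ▸ IntermediateField.mem_adjoin_simple_self ℚ z1)
  obtain ⟨D, a, b, hD, rfl, rfl⟩ :=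
    exists_squarefree_mul_sq (m := E1) (n := E2) (y := y) (by linarith)
  have hD1 : 1 < D := by
    have hD0 := hD.ne_zero
    by_contra hlt
    obtain rfl : D = 1 := by omega
    refine hni1 (adjoin_eq_adjoin_I (a := a) ?_ (by rw [hz1]; push_cast; ring))
    rintro rfl
    simp at hE1
  exact le_antisymm
    (not_lt.mp (not_lt_of_four_mul_sq_add_eq_pow hp hmod hw hq1 hq1dvd hq1nw hD1 hpos2 hc1.2 h2 h1))
    (not_lt.mp (not_lt_of_four_mul_sq_add_eq_pow hp hmod hw hq1 hq1dvd hq1nw hD1 hpos1 hc2.2 h1 h2))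
end

section
/- Let p be a prime with p ≡ 3 (mod 4), p ≠ 3, and let n be an odd integer greater than 1. Then p splits in the imaginary quadratic field K = ℚ(√(1 − p^n)), and for any prime ideal ℘ of the ring of integers of K lying over p, the order of the ideal class of ℘ in the ideal class group of K is exactly n. -/
/-- The powers of `√d` with even exponent are integers, the others are multiples of `√d`. -/
theorem Zsqrtd.re_sqrtd_pow (d : ℤ) (i : ℕ) :
    ((Zsqrtd.sqrtd : ℤ√d) ^ i).re = if Even i then d ^ (i / 2) else 0 := by
  obtain ⟨k, rfl | rfl⟩ := i.even_or_odd'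
  · have h : (Zsqrtd.sqrtd : ℤ√d) ^ (2 * k) = ((d ^ k : ℤ) : ℤ√d) := by
      rw [pow_mul, pow_two, Zsqrtd.dmuld]; push_cast; rfl
    rw [h, Zsqrtd.re_intCast]; simp
  · have h : (Zsqrtd.sqrtd : ℤ√d) ^ (2 * k + 1) = ((d ^ k : ℤ) : ℤ√d) * Zsqrtd.sqrtd := by
      rw [pow_succ, pow_mul, pow_two, Zsqrtd.dmuld]; push_cast; rfl
    rw [h, Zsqrtd.re_smul]; simp

theorem Zsqrtd.re_one_add_sqrtd_pow (d : ℤ) (t : ℕ) :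
    ((1 + Zsqrtd.sqrtd : ℤ√d) ^ t).re =
      ∑ i ∈ Finset.range (t + 1), if Even i then (t.choose i : ℤ) * d ^ (i / 2) else 0 := by
  have hre (s : Finset ℕ) (f : ℕ → ℤ√d) : (∑ i ∈ s, f i).re = ∑ i ∈ s, (f i).re := by
    induction s using Finset.induction_on with
    | empty => simp
    | insert a s ha ih => rw [Finset.sum_insert ha, Finset.sum_insert ha, Zsqrtd.re_add, ih]
  rw [add_comm, add_pow, hre]
  refine Finset.sum_congr rfl fun i _ => ?_
  rw [one_pow, mul_one, mul_comm, ← Int.cast_natCast, Zsqrtd.re_smul, Zsqrtd.re_sqrtd_pow]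
  split_ifs <;> simp

theorem choose_two_mul_mul (t k : ℕ) (hk : 1 ≤ k) (ht : 2 ≤ t) :
    k * (2 * k - 1) * t.choose (2 * k) = t.choose 2 * (t - 2).choose (2 * k - 2) := by
  obtain ⟨k, rfl⟩ := Nat.exists_eq_add_of_le hk
  obtain ⟨t, rfl⟩ := Nat.exists_eq_add_of_le ht
  have h1 := Nat.add_one_mul_choose_eq (t + 1) (2 * k + 1)
  have h2 := Nat.add_one_mul_choose_eq t (2 * k)
  have h3 := Nat.choose_two_right (2 + t)
  have h4 := Nat.add_one_mul_choose_eq (t + 1) 1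
  simp only [Nat.choose_one_right] at h4
  rw [show 2 * (1 + k) = 2 * k + 1 + 1 by ring, show 2 * k + 1 + 1 - 1 = 2 * k + 1 by omega,
    show 2 * k + 1 + 1 - 2 = 2 * k by omega, show 2 + t - 2 = t by omega,
    show 2 + t = t + 1 + 1 by ring]
  have h5 : (t+1+1) * (t+1) = 2 * (t+1+1).choose 2 := by linarith
  have : 2 * ((1 + k) * (2 * k + 1) * (t+1+1).choose (2 * k + 1 + 1)) =
      2 * ((t+1+1).choose 2 * t.choose (2 * k)) := by
    calc _ = ((t+1+1).choose (2 * k + 1 + 1) * (2 * k + 1 + 1)) * (2*k+1) := by ring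
      _ = (t+1+1) * ((t+1).choose (2*k+1) * (2 * k + 1)) := by rw [← h1]; ring
      _ = ((t+1+1) * (t+1)) * t.choose (2*k) := by rw [← h2]; ring
      _ = _ := by rw [h5]; ring
  exact Nat.eq_of_mul_eq_mul_left two_pos this

theorem two_mul_sub_one_lt_pow {g k : ℕ} (hg : 5 ≤ g) (hk : 2 ≤ k) : 2 * k - 1 < g ^ (k - 1) := by
  obtain ⟨k, rfl⟩ := Nat.exists_eq_add_of_le hk
  have : 2 * k + 3 < 5 ^ (k + 1) := by
    induction k with
    | zero => norm_num
    | succ k ih => rw [pow_succ]; have := ih (by omega); omega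
  have h2 := Nat.pow_le_pow_left hg (k + 1)
  rw [show 2 + k - 1 = k + 1 by omega]
  omega

/-- If a prime power `r ^ j ≥ 5` divides `D`, then in the expansion of the real part of
`(1 + √-D) ^ t` the quadratic term has the smallest positive `r`-adic valuation. -/
theorem pow_padicValNat_succ_dvd_choose_mul_pow {r j D t k : ℕ} (hr : r.Prime) (hg : 5 ≤ r ^ j)
    (hD : r ^ j ∣ D) (hD0 : D ≠ 0) (ht : 2 ≤ t) (hk : 2 ≤ k) :
    r ^ (padicValNat r (t.choose 2 * D) + 1) ∣ t.choose (2 * k) * D ^ k := by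
  have := Fact.mk hr
  by_cases hX : t.choose (2 * k) * D ^ k = 0
  · rw [hX]; exact dvd_zero _
  have hN : t.choose 2 * D ≠ 0 := mul_ne_zero (Nat.choose_pos ht).ne' hD0
  have hu : k * (2 * k - 1) ≠ 0 := mul_ne_zero (by omega) (by omega)
  have key : k * (2 * k - 1) * (t.choose (2 * k) * D ^ k) =
      (t.choose 2 * D) * ((t - 2).choose (2 * k - 2) * D ^ (k - 1)) := by
    rw [← mul_assoc, choose_two_mul_mul t k (by omega) ht]
    obtain ⟨k, rfl⟩ := Nat.exists_eq_add_of_le hk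
    rw [show 2 + k - 1 = k + 1 by omega]
    ring
  have hY : (t - 2).choose (2 * k - 2) * D ^ (k - 1) ≠ 0 := by
    intro h
    rw [h, mul_zero] at key
    exact mul_ne_zero hu hX key
  have hval := congrArg (padicValNat r) key
  rw [padicValNat.mul hu hX, padicValNat.mul hN hY] at hval
  have h1 : j * (k - 1) ≤ padicValNat r ((t - 2).choose (2 * k - 2) * D ^ (k - 1)) := by
    rw [← padicValNat_dvd_iff_le hY, pow_mul]
    exact (pow_dvd_pow_of_dvd hD _).mul_left _
  have h2 : padicValNat r (k * (2 * k - 1)) < j * (k - 1) := by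
    rw [← Nat.pow_lt_pow_iff_right hr.one_lt, pow_mul]
    refine lt_of_le_of_lt ?_ (two_mul_sub_one_lt_pow hg hk)
    have hdvd : r ^ padicValNat r (k * (2 * k - 1)) ∣ k * (2 * k - 1) := pow_padicValNat_dvd
    have hcop : Nat.Coprime k (2 * k - 1) := by
      rw [Nat.coprime_iff_gcd_eq_one, ← Nat.dvd_one]
      have ha := Nat.gcd_dvd_left k (2 * k - 1)
      have hb := Nat.gcd_dvd_right k (2 * k - 1)
      have := Nat.dvd_sub (ha.mul_left 2) hb
      rwa [show 2 * k - (2 * k - 1) = 1 by omega] at this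
    have hor : r ^ padicValNat r (k * (2 * k - 1)) ∣ k ∨
        r ^ padicValNat r (k * (2 * k - 1)) ∣ 2 * k - 1 := by
      by_cases h0 : padicValNat r (k * (2 * k - 1)) = 0
      · simp [h0]
      · exact (hcop.isPrimePow_dvd_mul (hr.isPrimePow.pow h0)).1 hdvd
    rcases hor with h | h
    · exact (Nat.le_of_dvd (by omega) h).trans (by omega)
    · exact Nat.le_of_dvd (by omega) h
  rw [padicValNat_dvd_iff_le hX]
  omega

theorem Zsqrtd.re_one_add_sqrtd_pow_ne_one_of_prime_pow_dvd {r j D t : ℕ} (hr : r.Prime)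
    (hg : 5 ≤ r ^ j) (hD : r ^ j ∣ D) (hD0 : D ≠ 0) (ht : 2 ≤ t) :
    ((1 + Zsqrtd.sqrtd : ℤ√(-(D : ℤ))) ^ t).re ≠ 1 := by
  have := Fact.mk hr
  intro h
  set e := padicValNat r (t.choose 2 * D) with he
  have hN : t.choose 2 * D ≠ 0 := mul_ne_zero (Nat.choose_pos ht).ne' hD0
  rw [Zsqrtd.re_one_add_sqrtd_pow] at h
  obtain ⟨t, rfl⟩ := Nat.exists_eq_add_of_le ht
  rw [show 2 + t + 1 = t + 1 + 1 + 1 by ring, Finset.sum_range_succ', Finset.sum_range_succ',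
    Finset.sum_range_succ'] at h
  have hdvd : ((r ^ (e + 1) : ℕ) : ℤ) ∣ ∑ i ∈ Finset.range t, if Even (i + 1 + 1 + 1) then
      ((2 + t).choose (i + 1 + 1 + 1) : ℤ) * (-(D : ℤ)) ^ ((i + 1 + 1 + 1) / 2) else 0 := by
    refine Finset.dvd_sum fun i _ => ?_
    split_ifs with hi
    · obtain ⟨k, hk⟩ := hi
      rw [hk, ← two_mul, Nat.mul_div_cancel_left _ two_pos, neg_pow, mul_left_comm]
      refine Dvd.dvd.mul_left ?_ _
      exact_mod_cast pow_padicValNat_succ_dvd_choose_mul_pow hr hg hD hD0 ht (by omega)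
    · exact dvd_zero _
  have h2 : ((r ^ (e + 1) : ℕ) : ℤ) ∣ ((2 + t).choose 2 * D : ℕ) := by
    convert hdvd using 1
    simp at h
    push_cast
    linarith
  rw [Int.natCast_dvd_natCast, padicValNat_dvd_iff_le hN] at h2
  omega

/-- The `2`-adic shape of the powers of `(1 + √-6) ^ 4 = 1 - 20√-6`. -/
theorem Zsqrtd.exists_one_add_sqrtd_pow_two_pow (e : ℕ) :
    ∃ a c : ℤ, ((1 + Zsqrtd.sqrtd : ℤ√(-6)) ^ (2 ^ (e + 2))) =
      ⟨1 + 2 ^ (e + 4) * a, 2 ^ (e + 2) * (2 * c + 1)⟩ := by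
  induction e with
  | zero =>
    refine ⟨0, -3, ?_⟩
    have : (1 + Zsqrtd.sqrtd : ℤ√(-6)) = ⟨1, 1⟩ := by ext <;> simp
    rw [this]
    norm_num
    decide
  | succ e ih =>
    obtain ⟨a, c, h⟩ := ih
    rw [show 2 ^ (e + 1 + 2) = 2 ^ (e + 2) * 2 by ring, pow_mul, h, pow_two]
    refine ⟨a + 2 ^ (e + 3) * a ^ 2 - 3 * 2 ^ e * (2 * c + 1) ^ 2,
      c + 2 ^ (e + 3) * (2 * c + 1) * a, ?_⟩
    ext
    · simp; ring
    · simp; ring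

theorem Zsqrtd.exists_one_add_sqrtd_pow_two_pow_mul_odd (e m : ℕ) :
    ∃ a c : ℤ, ((1 + Zsqrtd.sqrtd : ℤ√(-6)) ^ (2 ^ (e + 2) * (2 * m + 1))) =
      ⟨1 + 2 ^ (e + 4) * a, 2 ^ (e + 2) * (2 * c + 1)⟩ := by
  induction m with
  | zero => simpa using Zsqrtd.exists_one_add_sqrtd_pow_two_pow e
  | succ m ih =>
    obtain ⟨a, c, h⟩ := ih
    obtain ⟨a', c', h'⟩ := Zsqrtd.exists_one_add_sqrtd_pow_two_pow (e + 1)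
    rw [show 2 ^ (e + 2) * (2 * (m + 1) + 1) = 2 ^ (e + 2) * (2 * m + 1) + 2 ^ (e + 1 + 2) by ring,
      pow_add, h, h']
    refine ⟨a + 2 * a' + 2 ^ (e + 5) * a * a' - 3 * 2 ^ (e + 2) * (2 * c + 1) * (2 * c' + 1),
      c + 2 ^ (e + 4) * a' * (2 * c + 1) + (2 * c' + 1) + 2 ^ (e + 4) * a * (2 * c' + 1), ?_⟩
    ext
    · simp; ring
    · simp; ring

theorem Zsqrtd.re_one_add_sqrtd_neg_six_pow_ne_one {t : ℕ} (ht : 1 < t) (hodd : Odd t) :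
    ((1 + Zsqrtd.sqrtd : ℤ√(-6)) ^ t).re ≠ 1 := by
  have h1 : (1 + Zsqrtd.sqrtd : ℤ√(-6)) = ⟨1, 1⟩ := by ext <;> simp
  intro h
  have hcases : t % 4 = 1 ∨ t % 4 = 3 := by obtain ⟨k, rfl⟩ := hodd; omega
  rcases hcases with h4 | h4
  · obtain ⟨e, m, hm, hk⟩ := Nat.exists_eq_two_pow_mul_odd (n := t / 4) (by omega)
    obtain ⟨m, rfl⟩ := hm
    obtain ⟨a, c, hac⟩ := Zsqrtd.exists_one_add_sqrtd_pow_two_pow_mul_odd e m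
    rw [show t = 2 ^ (e + 2) * (2 * m + 1) + 1 by rw [pow_add, mul_right_comm, ← hk]; omega,
      pow_succ, hac, h1] at h
    simp at h
    have : (2 : ℤ) ^ (e + 3) * (2 * a - 3 * (2 * c + 1)) = 0 := by
      have : (2 : ℤ) ^ (e + 3) * (2 * a - 3 * (2 * c + 1)) =
        1 + 2 ^ (e + 4) * a + -(6 * (2 ^ (e + 2) * (2 * c + 1))) - 1 := by ring
      rw [this, h]; ring
    rcases mul_eq_zero.1 this with h | h
    · exact absurd h (by positivity)
    · omega
  · have hrep (k : ℕ) : ∃ a c : ℤ, ((1 + Zsqrtd.sqrtd : ℤ√(-6)) ^ (4 * k)) =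
        ⟨1 + 4 * a, 4 * c⟩ := by
      induction k with
      | zero => exact ⟨0, 0, by ext <;> simp⟩
      | succ k ih =>
        obtain ⟨a, c, ih⟩ := ih
        obtain ⟨a', c', h'⟩ := Zsqrtd.exists_one_add_sqrtd_pow_two_pow 0
        refine ⟨a + 4 * a' + 16 * a * a' - 24 * c * (2 * c' + 1),
          c + (2 * c' + 1) + 4 * a * (2 * c' + 1) + 16 * a' * c, ?_⟩
        rw [show 4 * (k + 1) = 4 * k + 2 ^ (0 + 2) by ring, pow_add, ih, h']
        ext
        · simp; ring
        · simp; ring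
    obtain ⟨a, c, hac⟩ := hrep (t / 4)
    have h3 : (1 + Zsqrtd.sqrtd : ℤ√(-6)) ^ 3 = ⟨-17, -3⟩ := by rw [h1]; decide
    rw [show t = 4 * (t / 4) + 3 by omega, pow_add, hac, h3] at h
    simp at h
    omega

theorem Zsqrtd.re_one_add_sqrtd_pow_ne_one {D t : ℕ} (hD : D % 4 = 2) (hD2 : D ≠ 2) (ht : 1 < t)
    (hodd : Odd t) : ((1 + Zsqrtd.sqrtd : ℤ√(-(D : ℤ))) ^ t).re ≠ 1 := by
  by_cases hD6 : D = 6
  · subst hD6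
    exact Zsqrtd.re_one_add_sqrtd_neg_six_pow_ne_one ht hodd
  have hex : ∃ r j : ℕ, r.Prime ∧ 5 ≤ r ^ j ∧ r ^ j ∣ D := by
    by_contra! hno
    have h9 : ¬ 9 ∣ D := fun h => hno 3 2 Nat.prime_three (by norm_num) h
    have : D ∣ 6 := by
      refine (Nat.dvd_iff_prime_pow_dvd_dvd 6 D).2 fun r k hr hrk => ?_
      have hlt : r ^ k < 5 := by
        by_contra! h
        exact hno r k hr h hrk
      generalize r ^ k = g at hlt hrk
      interval_cases g <;> omega
    have := Nat.le_of_dvd (by norm_num) this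
    interval_cases D <;> omega
  obtain ⟨r, j, hr, hg, hdvd⟩ := hex
  exact Zsqrtd.re_one_add_sqrtd_pow_ne_one_of_prime_pow_dvd hr hg hdvd (by omega) ht

/-- If the norm of `a + √-c` is `≡ 3 (mod 4)` and different from `3`, then no power of it with
odd exponent `t > 1` has real part `±1`. -/
theorem Zsqrtd.re_pow_ne_of_norm {a : ℤ} {c q t : ℕ} (hq : a ^ 2 + c = q) (hq4 : q % 4 = 3)
    (hq3 : q ≠ 3) (ht : 1 < t) (hodd : Odd t) :
    |(((a : ℤ√(-(c : ℤ))) + Zsqrtd.sqrtd) ^ t).re| ≠ 1 := by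
  intro h
  have ha : |a| = 1 := by
    have hdvd : (a : ℤ√(-(c : ℤ))) ∣ ((a : ℤ√(-(c : ℤ))) + Zsqrtd.sqrtd) ^ t -
        Zsqrtd.sqrtd ^ t := by
      have := sub_dvd_pow_sub_pow ((a : ℤ√(-(c : ℤ))) + Zsqrtd.sqrtd) Zsqrtd.sqrtd t
      rwa [add_sub_cancel_right] at this
    have h1 := ((Zsqrtd.intCast_dvd _ _).1 hdvd).1
    rw [Zsqrtd.re_sub, Zsqrtd.re_sqrtd_pow, if_neg (Nat.not_even_iff_odd.2 hodd), sub_zero] at h1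
    have h2 : a ∣ 1 := by rw [← h]; exact (dvd_abs _ _).2 h1
    exact Int.isUnit_iff_abs_eq.1 (isUnit_of_dvd_one h2)
  have hc : c + 1 = q := by
    have : a ^ 2 = 1 := by rw [← sq_abs, ha]; rfl
    zify; linarith
  have hsgn : |((1 + Zsqrtd.sqrtd : ℤ√(-(c : ℤ))) ^ t).re| = 1 := by
    rcases (abs_eq one_pos.le).1 ha with rfl | rfl
    · simpa using h
    · have hstar : ((-1 : ℤ) : ℤ√(-(c : ℤ))) + Zsqrtd.sqrtd = -star (1 + Zsqrtd.sqrtd) := by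
        ext <;> simp
      rw [hstar, hodd.neg_pow, ← star_pow] at h
      rwa [Zsqrtd.re_neg, Zsqrtd.re_star, abs_neg] at h
  have hmod : (c : ℤ) ∣ ((1 + Zsqrtd.sqrtd : ℤ√(-(c : ℤ))) ^ t).re - 1 := by
    rw [Zsqrtd.re_one_add_sqrtd_pow, Finset.sum_range_succ']
    simp only [Nat.choose_zero_right]
    simp
    refine Finset.dvd_sum fun i _ => ?_
    split_ifs with hi
    · refine Dvd.dvd.mul_left ?_ _
      refine dvd_pow ((dvd_neg).2 dvd_rfl) ?_
      obtain ⟨k, hk⟩ := hi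
      omega
    · exact dvd_zero _
  rcases (abs_eq one_pos.le).1 hsgn with h1 | h1
  · exact Zsqrtd.re_one_add_sqrtd_pow_ne_one (by omega) (by omega) ht hodd h1
  · rw [h1] at hmod
    have := Int.le_of_dvd (by norm_num) ((dvd_neg).2 hmod)
    omega

theorem ideal_span_pair_mul_span_pair {R : Type*} [CommRing R] {p n : ℕ} (hodd : Odd p)
    (hn : 1 < n) {α α' : R} (hadd : α + α' = 2) (hmul : α * α' = (p : R) ^ n) :
    Ideal.span {(p : R), α} * Ideal.span {(p : R), α'} = Ideal.span {(p : R)} := by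
  apply le_antisymm
  · rw [Ideal.span_pair_mul_span_pair, Ideal.span_le]
    rintro x (rfl | rfl | rfl | rfl) <;> rw [SetLike.mem_coe, Ideal.mem_span_singleton]
    · exact dvd_mul_right _ _
    · exact dvd_mul_right _ _
    · exact dvd_mul_left _ _
    · rw [hmul]; exact dvd_pow_self _ (by omega)
  · rw [Ideal.span_singleton_le_iff_mem]
    have hp1 : (p : R) ∈ Ideal.span {(p : R), α} := Ideal.subset_span (by simp)
    have hp2 : (p : R) ∈ Ideal.span {(p : R), α'} := Ideal.subset_span (by simp)
    have hα : α ∈ Ideal.span {(p : R), α} := Ideal.subset_span (by simp)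
    have hα' : α' ∈ Ideal.span {(p : R), α'} := Ideal.subset_span (by simp)
    obtain ⟨k, rfl⟩ := hodd
    have h : ((2 * k + 1 : ℕ) : R) = ((2 * k + 1 : ℕ) : R) * ((2 * k + 1 : ℕ) : R) -
        (k : R) * (α * ((2 * k + 1 : ℕ) : R) + ((2 * k + 1 : ℕ) : R) * α') := by
      have : α' = 2 - α := by linear_combination hadd
      rw [this]; push_cast; ring
    refine (congrArg (· ∈ _) h).mpr ?_
    exact Ideal.sub_mem _ (Ideal.mul_mem_mul hp1 hp2) (Ideal.mul_mem_left _ _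
      (Ideal.add_mem _ (Ideal.mul_mem_mul hα hp2) (Ideal.mul_mem_mul hp1 hα')))

theorem isCoprime_span_pair_span_singleton {R : Type*} [CommRing R] {p : ℕ} (hodd : Odd p)
    {α α' : R} (hadd : α + α' = 2) :
    IsCoprime (Ideal.span {(p : R), α}) (Ideal.span {α'}) := by
  rw [Ideal.isCoprime_iff_exists]
  obtain ⟨k, rfl⟩ := hodd
  refine ⟨((2 * k + 1 : ℕ) : R) - k * α, ?_, -(k * α'), ?_, ?_⟩
  · exact Ideal.sub_mem _ (Ideal.subset_span (by simp))
      (Ideal.mul_mem_left _ _ (Ideal.subset_span (by simp)))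
  · exact neg_mem (Ideal.mul_mem_left _ _ (Ideal.subset_span (by simp)))
  · push_cast; linear_combination (-(k : R)) * hadd

theorem span_pair_ne_span_pair {R : Type*} [CommRing R] {p : ℕ} (hodd : Odd p)
    {α α' : R} (hadd : α + α' = 2) (hP : (Ideal.span {(p : R), α}).IsPrime) :
    Ideal.span {(p : R), α} ≠ Ideal.span {(p : R), α'} := by
  intro h
  have hle : Ideal.span {α'} ≤ Ideal.span {(p : R), α} := by
    rw [h]; exact Ideal.span_mono (by simp)
  have := Ideal.isCoprime_iff_sup_eq.1 (isCoprime_span_pair_span_singleton hodd hadd)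
  rw [sup_eq_left.2 hle] at this
  exact hP.ne_top this

section

variable {R : Type*} [CommRing R] [IsDedekindDomain R] [CharZero R] {p n : ℕ}

theorem span_pair_pow_eq_span_singleton (hodd : Odd p) (hn : 1 < n) {α α' : R}
    (hadd : α + α' = 2) (hmul : α * α' = (p : R) ^ n) :
    Ideal.span {(p : R), α} ^ n = Ideal.span {α} := by
  have hp0 : (p : R) ≠ 0 := by
    rw [Nat.cast_ne_zero]; rintro rfl; exact absurd hodd (by decide)
  have hprod : Ideal.span {(p : R), α} ^ n * Ideal.span {(p : R), α'} ^ n =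
      Ideal.span {α} * Ideal.span {α'} := by
    rw [← mul_pow, ideal_span_pair_mul_span_pair hodd hn hadd hmul, Ideal.span_singleton_pow,
      Ideal.span_singleton_mul_span_singleton, hmul]
  have h1 : Ideal.span {(p : R), α} ^ n ∣ Ideal.span {α} :=
    (isCoprime_span_pair_span_singleton hodd hadd).pow_left.dvd_of_dvd_mul_right
      (hprod ▸ dvd_mul_right _ _)
  have h2 : Ideal.span {(p : R), α'} ^ n ∣ Ideal.span {α'} :=
    (isCoprime_span_pair_span_singleton hodd (by rwa [add_comm])).pow_left.dvd_of_dvd_mul_left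
      (hprod ▸ dvd_mul_left _ _)
  refine dvd_antisymm h1 ?_
  have hα' : Ideal.span {α'} ≠ 0 := by
    rw [Ne, Ideal.zero_eq_bot, Ideal.span_singleton_eq_bot]
    rintro rfl
    rw [mul_zero] at hmul
    exact pow_ne_zero n hp0 hmul.symm
  refine (mul_dvd_mul_iff_right hα').1 ?_
  rw [← hprod]
  exact mul_dvd_mul_left _ h2

theorem isPrime_span_pair [Module.Free ℤ R] [Module.Finite ℤ R] (hrank : Module.finrank ℤ R = 2)
    (hp : p.Prime) (hodd : Odd p) (hn : 1 < n) {α α' : R} (hadd : α + α' = 2)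
    (hmul : α * α' = (p : R) ^ n) (hα : ¬ IsUnit α) (hα' : ¬ IsUnit α') :
    (Ideal.span {(p : R), α}).IsPrime := by
  have hne {α α' : R} (hadd : α + α' = 2) (hmul : α * α' = (p : R) ^ n) (hα : ¬ IsUnit α) :
      Ideal.absNorm (Ideal.span {(p : R), α}) ≠ 1 := by
    rw [Ne, Ideal.absNorm_eq_one_iff]
    intro h
    have := span_pair_pow_eq_span_singleton hodd hn hadd hmul
    rw [h, Ideal.top_pow, eq_comm, Ideal.span_singleton_eq_top] at this
    exact hα this
  have h := congrArg Ideal.absNorm (ideal_span_pair_mul_span_pair hodd hn hadd hmul)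
  rw [map_mul, Ideal.absNorm_span_natCast, hrank] at h
  refine Ideal.isPrime_of_irreducible_absNorm ?_
  have := (hp.mul_eq_prime_sq_iff (hne hadd hmul hα)
    (hne (by rwa [add_comm]) (by rwa [mul_comm]) hα')).1 h
  rw [this.1]
  exact hp

theorem eq_span_pair_or_eq_span_pair (hp : p.Prime) {α α' : R} (hmul : α * α' = (p : R) ^ n)
    (hn : n ≠ 0)
    (hP₁ : (Ideal.span {(p : R), α}).IsPrime) (hP₂ : (Ideal.span {(p : R), α'}).IsPrime)
    {P : Ideal R} (hP : P.IsPrime) (hpP : (p : R) ∈ P) :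
    P = Ideal.span {(p : R), α} ∨ P = Ideal.span {(p : R), α'} := by
  have hmax {α : R} (h : (Ideal.span {(p : R), α}).IsPrime) (hα : α ∈ P) :
      P = Ideal.span {(p : R), α} := by
    have hne : Ideal.span {(p : R), α} ≠ ⊥ := by
      intro h0
      have : (p : R) ∈ Ideal.span {(p : R), α} := Ideal.subset_span (by simp)
      rw [h0, Ideal.mem_bot, Nat.cast_eq_zero] at this
      exact hp.ne_zero this
    refine ((h.isMaximal hne).eq_of_le hP.ne_top ?_).symm
    rw [Ideal.span_le]
    rintro x (rfl | rfl) <;> assumption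
  have : α * α' ∈ P := hmul ▸ Ideal.pow_mem_of_mem _ hpP _ (Nat.pos_of_ne_zero hn)
  rcases hP.mem_or_mem this with h | h
  · exact Or.inl (hmax hP₁ h)
  · exact Or.inr (hmax hP₂ h)

end

/-- A positive integer `M ≡ 2 (mod 4)` times a rational square is never an odd integer. -/
theorem mul_sq_ne_odd {M : ℤ} (hM : M % 4 = 2) {N : ℤ} (hN : Odd N) (b : ℚ) :
    (M : ℚ) * b ^ 2 ≠ N := by
  intro h
  have hd : (b.den : ℚ) ≠ 0 := by exact_mod_cast b.den_nz
  have h1 : M * b.num ^ 2 = N * b.den ^ 2 := by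
    have : (M : ℚ) * b.num ^ 2 = N * b.den ^ 2 := by
      rw [← h]
      nth_rw 2 [← Rat.num_div_den b]
      field_simp
    exact_mod_cast this
  obtain ⟨m, hm⟩ : ∃ m, M = 2 * (2 * m + 1) := ⟨M / 4, by omega⟩
  have h2 : Even (N * (b.den : ℤ) ^ 2) := by
    rw [← h1, hm, mul_assoc]; exact even_two_mul _
  have h3 : Even (b.den : ℤ) := by
    rcases Int.even_mul.1 h2 with h | h
    · exact absurd h (Int.not_even_iff_odd.2 hN)
    · exact (Int.even_pow.1 h).1
  obtain ⟨y, hy⟩ := h3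
  have h4 : (2 * m + 1) * b.num ^ 2 = 2 * (N * y ^ 2) := by
    rw [hy, hm] at h1; linarith
  have h5 : Even b.num := by
    have : Even ((2 * m + 1) * b.num ^ 2) := by rw [h4]; exact even_two_mul _
    rcases Int.even_mul.1 this with h | h
    · exact absurd h (by simp)
    · exact (Int.even_pow.1 h).1
  have h6 := b.reduced
  have h7 : 2 ∣ b.num.natAbs := Int.natCast_dvd.1 h5.two_dvd
  have h8 : 2 ∣ b.den := by omega
  have := Nat.dvd_gcd h7 h8
  rw [h6] at this
  omega

theorem exists_int_of_isIntegral_ratCast {q : ℚ} (h : IsIntegral ℤ (q : ℂ)) : ∃ k : ℤ, q = k := by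
  have h' : IsIntegral ℤ q := by
    have : (q : ℂ) = algebraMap ℚ ℂ q := rfl
    rw [this] at h
    exact (isIntegral_algebraMap_iff (algebraMap ℚ ℂ).injective).1 h
  obtain ⟨k, hk⟩ := IsIntegrallyClosed.isIntegral_iff.1 h'
  exact ⟨k, by simpa using hk.symm⟩

/-- Integers of `ℚ(√-M)` with `M ≡ 2 (mod 4)` have integral real part. -/
theorem exists_eq_add_of_isIntegral {M : ℕ} (hM : M % 4 = 2) {z : ℂ} (hz : z ^ 2 = -(M : ℂ))
    (hzs : star z = -z) {a b : ℚ} (hβ : IsIntegral ℤ ((a : ℂ) + b * z)) :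
    ∃ (k : ℤ) (c : ℕ), a = k ∧ (M : ℚ) * b ^ 2 = c := by
  have hconj : IsIntegral ℤ ((a : ℂ) - b * z) := by
    have := hβ.map ((starRingEnd ℂ : ℂ →+* ℂ).toIntAlgHom)
    have hzs' : (starRingEnd ℂ) z = -z := hzs
    simpa [hzs', ← sub_eq_add_neg] using this
  obtain ⟨A, hA⟩ := exists_int_of_isIntegral_ratCast (q := 2 * a) (by
    rw [show ((2 * a : ℚ) : ℂ) = (a + b * z) + (a - b * z) by push_cast; ring]
    exact hβ.add hconj)
  obtain ⟨N, hN⟩ := exists_int_of_isIntegral_ratCast (q := a ^ 2 + M * b ^ 2) (by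
    have : ((a ^ 2 + M * b ^ 2 : ℚ) : ℂ) = (a + b * z) * (a - b * z) := by
      push_cast; linear_combination (b : ℂ) ^ 2 * hz
    rw [this]
    exact hβ.mul hconj)
  have hAeven : Even A := by
    by_contra hodd
    rw [Int.not_even_iff_odd] at hodd
    refine mul_sq_ne_odd (M := M) (by omega) (N := 4 * N - A ^ 2) ?_ (2 * b) ?_
    · exact Even.sub_odd (by simp [Int.even_mul]; left; decide) hodd.pow
    · push_cast
      rw [← hA, ← hN]; ring
  obtain ⟨k, hk⟩ := hAeven
  have hak : a = k := by
    rw [hk] at hA; push_cast at hA; linarith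
  have hc : (M : ℚ) * b ^ 2 = ((N - k ^ 2 : ℤ) : ℚ) := by
    push_cast; rw [← hN, hak]; ring
  have hpos : 0 ≤ N - k ^ 2 := by
    have : (0 : ℚ) ≤ M * b ^ 2 := by positivity
    rw [hc] at this
    exact_mod_cast this
  exact ⟨k, (N - k ^ 2).toNat, hak, by rw [hc]; exact_mod_cast (Int.toNat_of_nonneg hpos).symm⟩

theorem exists_rat_add_mul_of_mem_adjoin {z : ℂ} {m : ℚ} (hz : z ^ 2 = m) {x : ℂ}
    (hx : x ∈ IntermediateField.adjoin ℚ {z}) : ∃ a b : ℚ, x = a + b * z := by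
  have hint : IsIntegral ℚ z :=
    IsIntegral.of_pow two_pos (by rw [hz]; exact isIntegral_algebraMap (R := ℚ) (x := m))
  rw [← IntermediateField.mem_toSubalgebra,
    IntermediateField.adjoin_simple_toSubalgebra_of_isAlgebraic hint.isAlgebraic] at hx
  induction hx using Algebra.adjoin_induction with
  | mem x hx => exact ⟨0, 1, by rw [Set.mem_singleton_iff.1 hx]; simp⟩
  | algebraMap r => exact ⟨r, 0, by simp⟩
  | add x y _ _ h1 h2 =>
    obtain ⟨a, b, rfl⟩ := h1
    obtain ⟨c, d, rfl⟩ := h2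
    exact ⟨a + c, b + d, by push_cast; ring⟩
  | mul x y _ _ h1 h2 =>
    obtain ⟨a, b, rfl⟩ := h1
    obtain ⟨c, d, rfl⟩ := h2
    exact ⟨a * c + b * d * m, a * d + b * c, by push_cast; linear_combination (b * d : ℂ) * hz⟩

theorem finrank_adjoin_eq_two {z : ℂ} {m : ℚ} (hz : z ^ 2 = m) (hm : m < 0) :
    Module.finrank ℚ (IntermediateField.adjoin ℚ {z}) = 2 := by
  have hint : IsIntegral ℚ z :=
    IsIntegral.of_pow two_pos (by rw [hz]; exact isIntegral_algebraMap (R := ℚ) (x := m))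
  have hirr : Irreducible (Polynomial.X ^ 2 - Polynomial.C m) := by
    rw [← pow_one (2 : ℕ)]
    refine (X_pow_sub_C_irreducible_iff_of_prime Nat.prime_two).2 fun b hb => ?_
    nlinarith [sq_nonneg b]
  rw [IntermediateField.adjoin.finrank hint, ← minpoly.eq_of_irreducible_of_monic hirr ?_
    (Polynomial.monic_X_pow_sub_C m two_ne_zero)]
  · exact Polynomial.natDegree_X_pow_sub_C
  · simp [hz]

theorem star_eq_neg_of_sq_eq_neg {w : ℂ} {c : ℝ} (hc : 0 ≤ c) (hw : w ^ 2 = -(c : ℂ)) :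
    star w = -w := by
  have h1 := congrArg Complex.re hw
  have h2 := congrArg Complex.im hw
  simp [pow_two] at h1 h2
  have hre : w.re = 0 := by
    by_contra h0
    have him : w.im = 0 := by
      have : w.re * w.im = 0 := by linarith
      exact (mul_eq_zero.1 this).resolve_left h0
    rw [him] at h1
    have := mul_self_pos.2 h0
    linarith
  apply Complex.ext <;> simp [hre]

/-- For `M ≡ 2 (mod 4)`, an integer of `ℚ(√-M)` has the form `k + √-c` with `k`, `c` integers,
and `c ≠ 1`. -/
theorem exists_int_add_sqrt {M : ℕ} (hM : M % 4 = 2) {z : ℂ} (hz : z ^ 2 = -(M : ℂ)) {β : ℂ}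
    (hβ : β ∈ IntermediateField.adjoin ℚ {z}) (hint : IsIntegral ℤ β) :
    ∃ (k : ℤ) (c : ℕ) (w : ℂ), β = k + w ∧ w ^ 2 = -(c : ℂ) ∧ c ≠ 1 := by
  obtain ⟨a, b, rfl⟩ := exists_rat_add_mul_of_mem_adjoin (m := -(M : ℚ)) (by simpa using hz) hβ
  have hzs : star z = -z :=
    star_eq_neg_of_sq_eq_neg (c := (M : ℝ)) (by positivity) (by simpa using hz)
  obtain ⟨k, c, rfl, hc⟩ := exists_eq_add_of_isIntegral hM hz hzs hint
  refine ⟨k, c, b * z, by simp, ?_, ?_⟩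
  · have : (M : ℂ) * b ^ 2 = c := by exact_mod_cast congrArg (Rat.cast : ℚ → ℂ) hc
    rw [mul_pow, hz, ← this]; ring
  · rintro rfl
    exact mul_sq_ne_odd (M := M) (by omega) odd_one b (by simpa using hc)

theorem normSq_int_add {k : ℤ} {c : ℕ} {w : ℂ} (hw : w ^ 2 = -(c : ℂ)) :
    Complex.normSq (k + w) = ((k ^ 2 + c : ℤ) : ℝ) := by
  have hs : star w = -w :=
    star_eq_neg_of_sq_eq_neg (c := (c : ℝ)) (by positivity) (by simpa using hw)
  have hs' : (starRingEnd ℂ) w = -w := hs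
  have : ((Complex.normSq (k + w) : ℝ) : ℂ) = (((k ^ 2 + c : ℤ) : ℝ) : ℂ) := by
    rw [Complex.normSq_eq_conj_mul_self]
    simp [hs']
    linear_combination -hw
  exact_mod_cast this

theorem re_int_add_pow {k : ℤ} {c : ℕ} {w : ℂ} (hw : w ^ 2 = -(c : ℂ)) (t : ℕ) :
    ((k + w) ^ t).re = (((((k : ℤ√(-(c : ℤ))) + Zsqrtd.sqrtd) ^ t).re : ℤ) : ℝ) := by
  have hs : star w = -w :=
    star_eq_neg_of_sq_eq_neg (c := (c : ℝ)) (by positivity) (by simpa using hw)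
  have hre : w.re = 0 := by
    have := congrArg Complex.re hs
    simp at this
    linarith
  let φ : ℤ√(-(c : ℤ)) →+* ℂ := Zsqrtd.lift ⟨w, by rw [← pow_two, hw]; simp⟩
  have hφ (x : ℤ√(-(c : ℤ))) : (φ x).re = x.re := by
    simp [φ, hre]
  rw [← hφ, map_pow, map_add, map_intCast]
  simp [φ]

/-- For `z = √(1 - p ^ n)`, the elements `±(1 + z)` are not proper `t`-th powers with `t ∣ n`. -/
theorem eq_one_of_pow_eq {p n s t M : ℕ} (hp : p.Prime) (hmod : p % 4 = 3) (hne : p ≠ 3)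
    (hodd : Odd n) (hst : n = s * t) (hMp : M + 1 = p ^ n) {z : ℂ} (hz : z ^ 2 = -(M : ℂ))
    {k : ℤ} {c : ℕ} {w : ℂ} (hw : w ^ 2 = -(c : ℂ))
    (hpow : (k + w) ^ t = 1 + z ∨ (k + w) ^ t = -(1 + z)) : t = 1 := by
  by_contra ht1
  have hs : Odd s := (Nat.odd_mul.1 (hst ▸ hodd)).1
  have ht : Odd t := (Nat.odd_mul.1 (hst ▸ hodd)).2
  have hre : |((k + w) ^ t).re| = 1 := by
    have h1 := re_int_add_pow (k := 1) hz 1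
    simp at h1
    rcases hpow with h | h <;> rw [h] <;> simp [h1]
  have hnorm : (k ^ 2 + c : ℤ) = (p ^ s : ℕ) := by
    have h1 : Complex.normSq ((k + w) ^ t) = Complex.normSq (1 + z) := by
      rcases hpow with h | h <;> rw [h]
      exact Complex.normSq_neg _
    have h2 := normSq_int_add (k := 1) hz
    rw [map_pow, normSq_int_add hw] at h1
    rw [Int.cast_one] at h2
    rw [h2] at h1
    have h3 : (k ^ 2 + c : ℤ) ^ t = ((p ^ s : ℕ) : ℤ) ^ t := by
      have : (k ^ 2 + c : ℤ) ^ t = 1 ^ 2 + M := by exact_mod_cast h1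
      rw [this, ← Nat.cast_pow, ← pow_mul, ← hst, ← hMp]
      push_cast; ring
    exact (pow_left_inj₀ (by positivity) (by positivity) (by rintro rfl; simp at ht)).1 h3
  rw [re_int_add_pow hw] at hre
  refine Zsqrtd.re_pow_ne_of_norm hnorm ?_ ?_ (by obtain ⟨m, rfl⟩ := ht; omega) ht
    (by exact_mod_cast hre)
  · obtain ⟨m, rfl⟩ := hs
    rw [pow_succ, pow_mul, Nat.mul_mod, Nat.pow_mod, Nat.pow_mod p, hmod]
    simp
  · intro h3
    have : p ∣ 3 := h3 ▸ dvd_pow_self p (by rintro rfl; simp at hs)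
    exact hne ((Nat.prime_dvd_prime_iff_eq hp Nat.prime_three).1 this)

theorem coe_isIntegral {K : IntermediateField ℚ ℂ} (β : NumberField.RingOfIntegers K) :
    IsIntegral ℤ ((β : K) : ℂ) :=
  (NumberField.RingOfIntegers.isIntegral_coe β).map (K.val.restrictScalars ℤ)

theorem unit_eq_one_or_neg_one {K : IntermediateField ℚ ℂ} {M : ℕ} {z : ℂ} (hM : M % 4 = 2)
    (hz : z ^ 2 = -(M : ℂ)) (hK : K = IntermediateField.adjoin ℚ {z})
    {u : NumberField.RingOfIntegers K} (hu : IsUnit u) :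
    u = 1 ∨ u = -1 := by
  have hrep (β : NumberField.RingOfIntegers K) := exists_int_add_sqrt hM hz
    (hK ▸ (β : K).2) (coe_isIntegral β)
  obtain ⟨v, huv⟩ := hu.exists_right_inv
  obtain ⟨k, c, w, hu', hw, hc⟩ := hrep u
  obtain ⟨k', c', w', hv', hw', -⟩ := hrep v
  have h1 : ((u : K) : ℂ) * ((v : K) : ℂ) = 1 := by
    simpa using congrArg (fun x : NumberField.RingOfIntegers K => ((x : K) : ℂ)) huv
  have h2 := congrArg Complex.normSq h1
  rw [hu', hv', map_mul, normSq_int_add hw, normSq_int_add hw', map_one] at h2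
  have h3 : (k ^ 2 + c : ℤ) * (k' ^ 2 + c') = 1 := by exact_mod_cast h2
  have h4 : (k ^ 2 + c : ℤ) = 1 := Int.eq_one_of_mul_eq_one_right (by positivity) h3
  have h5 : c = 0 := by
    have := sq_nonneg k
    omega
  subst h5
  have hw0 : w = 0 := by simpa using hw
  have hk : k = 1 ∨ k = -1 := by simpa using h4
  rw [hw0, add_zero] at hu'
  rcases hk with rfl | rfl
  · left
    apply NumberField.RingOfIntegers.ext
    apply Subtype.ext
    simpa using hu'
  · right
    apply NumberField.RingOfIntegers.ext
    apply Subtype.ext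
    simpa using hu'

theorem orderOf_mk0_eq {K : IntermediateField ℚ ℂ} [NumberField K] {M : ℕ} {z : ℂ} {p n : ℕ}
    (hp : p.Prime) (hmod : p % 4 = 3) (hne : p ≠ 3) (hodd : Odd n) (hM : M % 4 = 2)
    (hMp : M + 1 = p ^ n) (hz : z ^ 2 = -(M : ℂ))
    (hK : K = IntermediateField.adjoin ℚ {z}) {α : NumberField.RingOfIntegers K}
    (hα : ((α : K) : ℂ) = 1 + z) {P : Ideal (NumberField.RingOfIntegers K)} (hP0 : P ≠ 0)
    (hP : P ^ n = Ideal.span {α}) :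
    orderOf (ClassGroup.mk0 ⟨P, mem_nonZeroDivisors_of_ne_zero hP0⟩) = n := by
  have hpow (m : ℕ) : ClassGroup.mk0 ⟨P, mem_nonZeroDivisors_of_ne_zero hP0⟩ ^ m = 1 ↔
      (P ^ m).IsPrincipal := by
    rw [← map_pow, SubmonoidClass.mk_pow, ClassGroup.mk0_eq_one_iff]
  obtain ⟨t, ht⟩ := orderOf_dvd_of_pow_eq_one ((hpow n).2 ⟨α, hP⟩)
  obtain ⟨β, hβ⟩ := (hpow _).1 (pow_orderOf_eq_one
    (ClassGroup.mk0 ⟨P, mem_nonZeroDivisors_of_ne_zero hP0⟩))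
  set s := orderOf (ClassGroup.mk0 ⟨P, mem_nonZeroDivisors_of_ne_zero hP0⟩)
  have hβt : Ideal.span {β ^ t} = Ideal.span {α} := by
    rw [← hP, ht, pow_mul, hβ, ← Ideal.span_singleton_pow]
  obtain ⟨u, hu⟩ := Ideal.span_singleton_eq_span_singleton.1 hβt.symm
  obtain ⟨k, c, w, hβ', hw, -⟩ := exists_int_add_sqrt hM hz (hK ▸ (β : K).2) (coe_isIntegral β)
  have hβα : β ^ t = α ∨ β ^ t = -α := by
    rcases unit_eq_one_or_neg_one hM hz hK u.isUnit with h | h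
    · left; rw [← hu, h, mul_one]
    · right; rw [← hu, h, mul_neg_one]
  have ht1 : t = 1 := by
    refine eq_one_of_pow_eq (k := k) hp hmod hne hodd ht hMp hz hw ?_
    rw [← hβ', ← hα]
    refine hβα.imp (fun h => ?_) (fun h => ?_)
    · simpa using congrArg (fun x : NumberField.RingOfIntegers K => ((x : K) : ℂ)) h
    · have := congrArg (fun x : NumberField.RingOfIntegers K => ((x : K) : ℂ)) h
      simpa using this
  rw [ht1, mul_one] at ht
  exact ht.symm

/-- Let `p` be a prime with `p ≡ 3 (mod 4)`, `p ≠ 3`, and let `n` be an odd integer greater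
than `1`. Then `p` splits in the imaginary quadratic field `K = ℚ(√(1 − p^n))`, and for any
prime ideal `℘` of the ring of integers of `K` lying over `p`, the order of the ideal class
of `℘` in the ideal class group of `K` is exactly `n`. -/
theorem stmt_7 (p : ℕ) (hp : p.Prime) (hmod : p % 4 = 3) (hne : p ≠ 3)
    (n : ℕ) (hn : 1 < n) (hodd : Odd n)
    (z : ℂ) (hz : z ^ 2 = 1 - (p : ℂ) ^ n)
    (K : IntermediateField ℚ ℂ) (hK : K = IntermediateField.adjoin ℚ {z})
    [NumberField K] :
    (∃ P Q : Ideal (NumberField.RingOfIntegers K), P ≠ Q ∧ P.IsPrime ∧ Q.IsPrime ∧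
        P * Q = Ideal.span {(p : NumberField.RingOfIntegers K)}) ∧
    ∀ (P : Ideal (NumberField.RingOfIntegers K)), P.IsPrime →
      (p : NumberField.RingOfIntegers K) ∈ P → ∀ (hP0 : P ≠ 0),
      orderOf (ClassGroup.mk0 ⟨P, mem_nonZeroDivisors_of_ne_zero hP0⟩) = n := by
  have hpodd : Odd p := Nat.odd_iff.2 (by omega)
  have hpn : p ^ n % 4 = 3 := by
    obtain ⟨m, rfl⟩ := hodd
    rw [pow_succ, pow_mul, Nat.mul_mod, Nat.pow_mod, Nat.pow_mod p, hmod]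
    simp
  obtain ⟨M, hMp⟩ : ∃ M, M + 1 = p ^ n := ⟨p ^ n - 1, by omega⟩
  have hM : M % 4 = 2 := by omega
  have hzM : z ^ 2 = -(M : ℂ) := by
    have : (M : ℂ) + 1 = (p : ℂ) ^ n := by exact_mod_cast hMp
    rw [hz, ← this]; ring
  have hzM' : (-z) ^ 2 = -(M : ℂ) := by rw [neg_sq, hzM]
  have hK' : K = IntermediateField.adjoin ℚ {-z} := by
    rw [hK]
    apply le_antisymm <;> rw [IntermediateField.adjoin_simple_le_iff]
    · simpa using neg_mem (IntermediateField.mem_adjoin_simple_self ℚ (-z))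
    · exact neg_mem (IntermediateField.mem_adjoin_simple_self ℚ z)
  have hzint : IsIntegral ℤ z :=
    IsIntegral.of_pow two_pos (by
      rw [hzM]; simpa using isIntegral_algebraMap (R := ℤ) (A := ℂ) (x := -(M : ℤ)))
  have hzK : z ∈ K := hK ▸ IntermediateField.mem_adjoin_simple_self ℚ z
  have hzK_int : IsIntegral ℤ (⟨z, hzK⟩ : K) :=
    (isIntegral_algHom_iff (K.val.restrictScalars ℤ) Subtype.val_injective).1 hzint
  let ζ : NumberField.RingOfIntegers K := ⟨⟨z, hzK⟩, hzK_int⟩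
  have hζ : ((ζ : K) : ℂ) = z := rfl
  have hα : (((1 + ζ : NumberField.RingOfIntegers K) : K) : ℂ) = 1 + z := by simp [hζ]
  have hα' : (((1 - ζ : NumberField.RingOfIntegers K) : K) : ℂ) = 1 + -z := by
    simp [hζ, sub_eq_add_neg]
  have hadd : (1 + ζ) + (1 - ζ) = 2 := by ring
  have hmul : (1 + ζ) * (1 - ζ) = (p : NumberField.RingOfIntegers K) ^ n := by
    apply NumberField.RingOfIntegers.ext
    apply Subtype.ext
    simp [hζ]
    linear_combination -hz
  have hrank : Module.finrank ℤ (NumberField.RingOfIntegers K) = 2 := by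
    rw [NumberField.RingOfIntegers.rank]
    subst hK
    exact finrank_adjoin_eq_two (m := -(M : ℚ)) (by simpa using hzM)
      (by rw [neg_lt_zero, Nat.cast_pos]; omega)
  have hnu {y : ℂ} (hy : y ^ 2 = -(M : ℂ)) {a : NumberField.RingOfIntegers K}
      (ha : ((a : K) : ℂ) = 1 + y) : ¬ IsUnit a := by
    intro hu
    have h1 : Complex.normSq ((a : K) : ℂ) = 1 := by
      rcases unit_eq_one_or_neg_one hM hzM hK hu with rfl | rfl <;> simp
    have h2 := normSq_int_add (k := 1) hy
    rw [Int.cast_one, ← ha, h1] at h2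
    have : (1 : ℤ) = 1 ^ 2 + M := by exact_mod_cast h2
    omega
  have hP₁ := isPrime_span_pair hrank hp hpodd hn hadd hmul (hnu hzM hα) (hnu hzM' hα')
  have hP₂ := isPrime_span_pair hrank hp hpodd hn (by rwa [add_comm]) (by rwa [mul_comm])
    (hnu hzM' hα') (hnu hzM hα)
  refine ⟨⟨_, _, span_pair_ne_span_pair hpodd hadd hP₁, hP₁, hP₂,
    ideal_span_pair_mul_span_pair hpodd hn hadd hmul⟩, fun P hP hpP hP0 => ?_⟩
  rcases eq_span_pair_or_eq_span_pair hp hmul (by omega) hP₁ hP₂ hP hpP with h | h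
  · refine orderOf_mk0_eq hp hmod hne hodd hM hMp hzM hK hα hP0 ?_
    rw [h, span_pair_pow_eq_span_singleton hpodd hn hadd hmul]
  · refine orderOf_mk0_eq hp hmod hne hodd hM hMp hzM' hK' hα' hP0 ?_
    rw [h, span_pair_pow_eq_span_singleton hpodd hn (by rwa [add_comm]) (by rwa [mul_comm])]
end

section
/- Let p = 3 and let n be an odd integer greater than 1 with n ≠ 5. Then 3 splits in the imaginary quadratic field K = ℚ(√(1 − 3^n)), and for any prime ideal ℘ of the ring of integers of K lying over 3, the order of the ideal class of ℘ in the ideal class group of K is exactly n. -/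
/-- The positive solutions of `x * X ^ 2 - (x - 1) * Y ^ 2 = 1`, i.e. the coefficients of the
odd powers of `√x + √(x - 1)`. -/
def pellIterate (x : ℤ) : ℕ → ℤ × ℤ
  | 0 => (1, 1)
  | i + 1 => ((2 * x - 1) * (pellIterate x i).1 + 2 * (x - 1) * (pellIterate x i).2,
      2 * x * (pellIterate x i).1 + (2 * x - 1) * (pellIterate x i).2)

theorem exists_eq_pellIterate {x : ℤ} (hx : 2 ≤ x) (N : ℕ) :
    ∀ X Y : ℤ, X ≤ N → 0 < X → 0 < Y → x * X ^ 2 - (x - 1) * Y ^ 2 = 1 →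
      ∃ i, pellIterate x i = (X, Y) := by
  induction N with
  | zero => intro X Y h1 h2; simp at h1; omega
  | succ N ih =>
    intro X Y hXN hX hY h
    rcases (show X = 1 ∨ 1 < X by omega) with rfl | hX1
    · refine ⟨0, ?_⟩
      have h1 : (x - 1) * (Y ^ 2 - 1) = 0 := by linarith
      rcases mul_eq_zero.1 h1 with h2 | h2
      · omega
      · have : Y = 1 := by nlinarith
        simp [pellIterate, this]
    have hYX : X < Y := by
      by_contra! hle
      have h1 : Y ^ 2 ≤ X ^ 2 := by nlinarith
      nlinarith
    set X' := (2 * x - 1) * X - 2 * (x - 1) * Y with hX'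
    set Y' := (2 * x - 1) * Y - 2 * x * X with hY'
    have h' : x * X' ^ 2 - (x - 1) * Y' ^ 2 = 1 := by
      rw [hX', hY']; linear_combination h
    have hX'pos : 0 < X' := by
      have h1 : (2 * (x - 1) * Y) ^ 2 < ((2 * x - 1) * X) ^ 2 := by nlinarith
      have h2 := lt_of_pow_lt_pow_left₀ 2 (by nlinarith) h1
      linarith
    have hX'lt : X' < X := by rw [hX']; nlinarith
    have hsum : 0 < Y' + X' := by rw [hX', hY']; linarith
    have hY'pos : 0 < Y' := by
      by_contra! hle
      have h1 : Y' ^ 2 < X' ^ 2 := by nlinarith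
      nlinarith
    obtain ⟨i, hi⟩ := ih X' Y' (by push_cast at hXN; omega) hX'pos hY'pos h'
    refine ⟨i + 1, ?_⟩
    simp only [pellIterate, hi, Prod.mk.injEq]
    constructor
    · rw [hX', hY']; ring
    · rw [hX', hY']; ring

theorem pellIterate_norm (x : ℤ) (i : ℕ) :
    x * (pellIterate x i).1 ^ 2 - (x - 1) * (pellIterate x i).2 ^ 2 = 1 := by
  induction i with
  | zero => simp [pellIterate]
  | succ i ih => simp only [pellIterate]; linear_combination ih

theorem pellIterate_pos {x : ℤ} (hx : 2 ≤ x) (i : ℕ) :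
    0 < (pellIterate x i).1 ∧ 0 < (pellIterate x i).2 := by
  induction i with
  | zero => simp [pellIterate]
  | succ i ih =>
    obtain ⟨h1, h2⟩ := ih
    have h3 : 0 < 2 * x - 1 := by omega
    have h4 : 0 < x - 1 := by omega
    have h5 : 0 < x := by omega
    constructor <;> simp only [pellIterate] <;> positivity

theorem pellIterate_triple (x : ℤ) (l : ℕ) :
    pellIterate x (3 * l + 1) =
      (x * (pellIterate x l).1 ^ 3 +
          3 * (x - 1) * (pellIterate x l).1 * (pellIterate x l).2 ^ 2,
        3 * x * (pellIterate x l).1 ^ 2 * (pellIterate x l).2 +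
          (x - 1) * (pellIterate x l).2 ^ 3) := by
  induction l with
  | zero => ext <;> simp [pellIterate] <;> ring
  | succ l ih =>
    rw [show 3 * (l + 1) + 1 = 3 * l + 1 + 1 + 1 + 1 by ring]
    generalize 3 * l + 1 = k at ih
    simp only [pellIterate, ih, Prod.mk.injEq]
    constructor <;> ring

theorem pellIterate_triple_fst (x : ℤ) (l : ℕ) :
    (pellIterate x (3 * l + 1)).1 =
      (pellIterate x l).1 * (4 * x * (pellIterate x l).1 ^ 2 - 3) := by
  rw [pellIterate_triple]
  linear_combination (-3) * (pellIterate x l).1 * pellIterate_norm x l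

theorem pellIterate_fst_modEq_three {x : ℤ} (hx : 3 ∣ x) (i : ℕ) :
    (3 : ℤ) ∣ (pellIterate x i).1 - (-1) ^ i * (1 - i) ∧
      (3 : ℤ) ∣ (pellIterate x i).2 - (-1) ^ i := by
  obtain ⟨c, rfl⟩ := hx
  induction i with
  | zero => simp [pellIterate]
  | succ i ih =>
    obtain ⟨⟨u, hu⟩, ⟨v, hv⟩⟩ := ih
    have hu' := eq_add_of_sub_eq hu
    have hv' := eq_add_of_sub_eq hv
    constructor
    · simp only [pellIterate, hu', hv', pow_succ, Nat.cast_add, Nat.cast_one]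
      refine ⟨(2 * (3 * c) - 1) * u + 2 * c * ((-1) ^ i * (1 - i)) +
        2 * (3 * c - 1) * v + 2 * c * (-1) ^ i - (-1) ^ i, ?_⟩
      ring
    · simp only [pellIterate, hu', hv', pow_succ]
      refine ⟨2 * (3 * c) * u + 2 * c * ((-1) ^ i * (1 - i)) +
        (2 * (3 * c) - 1) * v + 2 * c * (-1) ^ i, ?_⟩
      ring

theorem exists_eq_three_pow_of_dvd {X : ℤ} {j : ℕ} (hX : 0 < X) (h : X ∣ 3 ^ j) :
    ∃ a, X = 3 ^ a := by
  lift X to ℕ using hX.le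
  have h1 : X ∣ 3 ^ j := by exact_mod_cast h
  obtain ⟨a, -, ha⟩ := (Nat.dvd_prime_pow Nat.prime_three).1 h1
  exact ⟨a, by exact_mod_cast ha⟩

/-- If `(3 ^ (s + 2 * j) - 1) / (3 ^ s - 1)` is a square then `j = 0` or `(s, j) = (1, 2)`. -/
theorem eq_zero_or_of_three_pow_sub_one_eq {s j : ℕ} (hs : 0 < s) {Y : ℤ}
    (h : (3 : ℤ) ^ (s + 2 * j) - 1 = (3 ^ s - 1) * Y ^ 2) : j = 0 ∨ s = 1 ∧ j = 2 := by
  have hx3 : (3 : ℤ) ∣ 3 ^ s := dvd_pow_self _ hs.ne'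
  have hx : (3 : ℤ) ≤ 3 ^ s := Int.le_of_dvd (by positivity) hx3
  have hY : Y ≠ 0 := by
    rintro rfl
    have h1 : (3 : ℤ) ≤ 3 ^ (s + 2 * j) :=
      Int.le_of_dvd (by positivity) (dvd_pow_self _ (by omega))
    simp at h
    omega
  have heq : (3 : ℤ) ^ s * (3 ^ j) ^ 2 - (3 ^ s - 1) * |Y| ^ 2 = 1 := by
    rw [sq_abs, ← h]; ring
  obtain ⟨i, hi⟩ := exists_eq_pellIterate (by omega) (3 ^ j) (3 ^ j) |Y| (by simp)
    (by positivity) (by positivity) heq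
  have hi1 : (pellIterate (3 ^ s) i).1 = 3 ^ j := by rw [hi]
  by_cases hj : j = 0
  · exact Or.inl hj
  right
  have hmod := (pellIterate_fst_modEq_three hx3 i).1
  have h3j : (3 : ℤ) ∣ 3 ^ j := dvd_pow_self _ hj
  rw [hi1, dvd_sub_right h3j] at hmod
  have h1i : (3 : ℤ) ∣ 1 - i := by
    rcases neg_one_pow_eq_or ℤ i with h1 | h1 <;> rw [h1] at hmod <;> omega
  obtain ⟨l, rfl⟩ : ∃ l, i = 3 * l + 1 := ⟨i / 3, by omega⟩
  rw [pellIterate_triple_fst] at hi1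
  have hXpos := (pellIterate_pos (x := 3 ^ s) (by omega) l).1
  set X := (pellIterate (3 ^ s) l).1
  obtain ⟨a, ha⟩ := exists_eq_three_pow_of_dvd hXpos (Dvd.intro _ hi1)
  have hpos : 0 < 4 * (3 : ℤ) ^ s * X ^ 2 - 3 := by nlinarith
  obtain ⟨b, hb⟩ := exists_eq_three_pow_of_dvd hpos (Dvd.intro_left _ hi1)
  have hsa : s + 2 * a < 2 := by
    by_contra! hge
    obtain ⟨c, hc⟩ := Nat.exists_eq_add_of_le hge
    have h9 : (3 : ℤ) ^ s * X ^ 2 = 9 * 3 ^ c := by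
      rw [ha, ← pow_mul, ← pow_add, mul_comm a, hc, pow_add]; norm_num
    have hcpos : (0 : ℤ) < 3 ^ c := by positivity
    rcases b with _ | _ | b
    · simp at hb; nlinarith
    · simp at hb; nlinarith
    · rw [pow_add] at hb
      have : 4 * (3 : ℤ) ^ s * X ^ 2 = 4 * (9 * 3 ^ c) := by rw [← h9]; ring
      rw [this] at hb
      omega
  have hs1 : s = 1 := by omega
  have ha0 : a = 0 := by omega
  subst hs1 ha0
  refine ⟨rfl, ?_⟩
  rw [ha] at hi1
  have : (3 : ℤ) ^ j = 3 ^ 2 := by rw [← hi1]; norm_num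
  exact pow_right_injective₀ (by norm_num) (by norm_num) this

open ComplexConjugate

theorem exists_intCast_eq_of_isIntegral {q : ℚ} (h : IsIntegral ℤ (q : ℂ)) :
    ∃ k : ℤ, (k : ℚ) = q := by
  have h1 : IsIntegral ℤ (algebraMap ℚ ℂ q) := by simpa using h
  have h2 := (isIntegral_algebraMap_iff (algebraMap ℚ ℂ).injective).1 h1
  obtain ⟨k, hk⟩ := IsIntegrallyClosed.isIntegral_iff.1 h2
  exact ⟨k, by simpa using hk⟩

theorem exists_intCast_eq_of_sq_eq {r : ℚ} {c : ℤ} (h : r ^ 2 = c) : ∃ k : ℤ, (k : ℚ) = r := by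
  have h1 : IsIntegral ℤ (r ^ 2) := by rw [h]; exact isIntegral_algebraMap
  obtain ⟨k, hk⟩ := IsIntegrallyClosed.isIntegral_iff.1 (IsIntegral.of_pow two_pos h1)
  exact ⟨k, by simpa using hk⟩

theorem three_pow_emod_sixteen {n : ℕ} (hodd : Odd n) :
    (3 : ℤ) ^ n % 16 = 3 ∨ (3 : ℤ) ^ n % 16 = 11 := by
  obtain ⟨k, rfl⟩ := hodd
  induction k with
  | zero => simp
  | succ k ih =>
    rw [show 2 * (k + 1) + 1 = 2 * k + 1 + 2 by ring, pow_add]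
    generalize (3 : ℤ) ^ (2 * k + 1) = t at ih ⊢
    omega

theorem sq_emod_sixteen (W : ℤ) :
    W ^ 2 % 16 = 0 ∨ W ^ 2 % 16 = 1 ∨ W ^ 2 % 16 = 4 ∨ W ^ 2 % 16 = 9 := by
  have h := Int.emod_nonneg W (show (16 : ℤ) ≠ 0 by norm_num)
  have h' := Int.emod_lt_of_pos W (show (0 : ℤ) < 16 by norm_num)
  rw [pow_two, Int.mul_emod]
  generalize W % 16 = r at h h'
  interval_cases r <;> simp

section QuadraticIntegers

variable {n : ℕ} {z : ℂ}

theorem conj_eq_neg_of_sq_eq (hn : 0 < n) (hz : z ^ 2 = 1 - (3 : ℂ) ^ n) : conj z = -z := by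
  have h1 : (conj z - z) * (conj z + z) = 0 := by
    have : conj z ^ 2 = z ^ 2 := by rw [← map_pow, hz]; simp [map_ofNat (starRingEnd ℂ) 3]
    linear_combination this
  rcases mul_eq_zero.1 h1 with h | h
  · obtain ⟨r, rfl⟩ := Complex.conj_eq_iff_real.1 (sub_eq_zero.1 h)
    have h2 : r ^ 2 = 1 - 3 ^ n := by exact_mod_cast hz
    have h3 : (1 : ℝ) < 3 ^ n := one_lt_pow₀ (by norm_num) hn.ne'
    nlinarith
  · exact eq_neg_of_add_eq_zero_left h

theorem exists_rat_add_rat_mul_of_mem_adjoin (hn : 0 < n) (hz : z ^ 2 = 1 - (3 : ℂ) ^ n) {w : ℂ}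
    (hw : w ∈ IntermediateField.adjoin ℚ {z}) : ∃ a b : ℚ, w = a + b * z := by
  induction hw using IntermediateField.adjoin_induction with
  | mem x hx => exact ⟨0, 1, by simp_all⟩
  | algebraMap x => exact ⟨x, 0, by simp⟩
  | add x y _ _ hx hy =>
    obtain ⟨a, b, rfl⟩ := hx
    obtain ⟨c, d, rfl⟩ := hy
    exact ⟨a + c, b + d, by push_cast; ring⟩
  | mul x y _ _ hx hy =>
    obtain ⟨a, b, rfl⟩ := hx
    obtain ⟨c, d, rfl⟩ := hy
    exact ⟨a * c + b * d * (1 - 3 ^ n), a * d + b * c, by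
      push_cast; linear_combination (b * d : ℂ) * hz⟩
  | inv x _ hx =>
    obtain ⟨a, b, rfl⟩ := hx
    have h3 : (1 : ℚ) < 3 ^ n := one_lt_pow₀ (by norm_num) hn.ne'
    by_cases hab : a ^ 2 + b ^ 2 * (3 ^ n - 1) = 0
    · have hb : b = 0 := by
        by_contra hb
        have : 0 < b ^ 2 * (3 ^ n - 1) := mul_pos (by positivity) (by linarith)
        nlinarith [sq_nonneg a]
      have ha : a = 0 := by simpa [hb] using hab
      exact ⟨0, 0, by simp [ha, hb]⟩
    · refine ⟨a / (a ^ 2 + b ^ 2 * (3 ^ n - 1)), -b / (a ^ 2 + b ^ 2 * (3 ^ n - 1)), ?_⟩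
      have hab' : (a : ℂ) ^ 2 + b ^ 2 * (3 ^ n - 1) ≠ 0 := by exact_mod_cast hab
      push_cast
      refine inv_eq_of_mul_eq_one_left ?_
      field_simp
      linear_combination (-b ^ 2 : ℂ) * hz

variable {O : Type*} [CommRing O] {φ : O →+* ℂ}

/-- Trace and norm of an integer of `ℚ(z)`. -/
theorem exists_trace_norm (hn : 0 < n) (hz : z ^ 2 = 1 - (3 : ℂ) ^ n)
    (hφi : Function.Injective φ)
    (hφ : ∀ w, (∃ x, φ x = w) ↔ IsIntegral ℤ w ∧ ∃ a b : ℚ, w = a + b * z) (β : O) :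
    ∃ (γ : O) (T N : ℤ) (b : ℚ), φ γ = conj (φ β) ∧ β + γ = T ∧ β * γ = N ∧
      φ β = T / 2 + b * z ∧ (4 * N - T ^ 2 : ℚ) = (2 * b) ^ 2 * (3 ^ n - 1) := by
  obtain ⟨hβ, a, b, hab⟩ := (hφ (φ β)).1 ⟨β, rfl⟩
  have hconj : conj (φ β) = a - b * z := by
    rw [hab]; simp [conj_eq_neg_of_sq_eq hn hz]; ring
  have hint : IsIntegral ℤ (conj (φ β)) := hβ.map (Complex.conjAe.toRingHom.toIntAlgHom)
  obtain ⟨γ, hγ⟩ := (hφ (conj (φ β))).2 ⟨hint, a, -b, by rw [hconj]; push_cast; ring⟩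
  obtain ⟨T, hT⟩ := exists_intCast_eq_of_isIntegral (q := 2 * a) (by
    have := hβ.add hint
    rwa [hconj, hab, show (a + b * z + (a - b * z) : ℂ) = ((2 * a : ℚ) : ℂ) by
      push_cast; ring] at this)
  obtain ⟨N, hN⟩ := exists_intCast_eq_of_isIntegral (q := a ^ 2 + b ^ 2 * (3 ^ n - 1)) (by
    have := hβ.mul hint
    rwa [hconj, hab, show ((a + b * z) * (a - b * z) : ℂ) =
        ((a ^ 2 + b ^ 2 * (3 ^ n - 1) : ℚ) : ℂ) by
      push_cast; linear_combination (-b ^ 2 : ℂ) * hz] at this)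
  have hT' : (T : ℂ) = 2 * a := by exact_mod_cast congrArg (Rat.cast : ℚ → ℂ) hT
  have hN' : (N : ℂ) = a ^ 2 + b ^ 2 * (3 ^ n - 1) := by
    exact_mod_cast congrArg (Rat.cast : ℚ → ℂ) hN
  refine ⟨γ, T, N, b, hγ, hφi ?_, hφi ?_, ?_, ?_⟩
  · rw [map_add, hγ, hconj, hab, map_intCast, hT']; ring
  · rw [map_mul, hγ, hconj, hab, map_intCast, hN']
    linear_combination (-b ^ 2 : ℂ) * hz
  · rw [hab, hT']; ring
  · rw [hT, hN]; ring

theorem eq_one_or_neg_one_of_isUnit (hn : 0 < n) (hodd : Odd n) (hz : z ^ 2 = 1 - (3 : ℂ) ^ n)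
    (hφi : Function.Injective φ)
    (hφ : ∀ w, (∃ x, φ x = w) ↔ IsIntegral ℤ w ∧ ∃ a b : ℚ, w = a + b * z) {u : O}
    (hu : IsUnit u) : u = 1 ∨ u = -1 := by
  have h3 : (3 : ℚ) ≤ 3 ^ n := le_self_pow₀ (by norm_num) hn.ne'
  have hnn : ∀ T N : ℤ, ∀ b : ℚ, (4 * N - T ^ 2 : ℚ) = (2 * b) ^ 2 * (3 ^ n - 1) → 0 ≤ N := by
    intro T N b h
    have : (0 : ℚ) ≤ (2 * b) ^ 2 * (3 ^ n - 1) := mul_nonneg (sq_nonneg _) (by linarith)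
    have : (0 : ℚ) ≤ N := by nlinarith
    exact_mod_cast this
  obtain ⟨v, huv⟩ := hu.exists_right_inv
  obtain ⟨γ, T, N, b, hγ, hT, hN, hβ, hTN⟩ := exists_trace_norm hn hz hφi hφ u
  obtain ⟨γ', T', N', b', hγ', hT', hN', hβ', hTN'⟩ := exists_trace_norm hn hz hφi hφ v
  have hNN : N * N' = 1 := by
    have : φ (u * γ * (v * γ')) = 1 := by
      rw [map_mul, map_mul, map_mul, hγ, hγ',
        show φ u * conj (φ u) * (φ v * conj (φ v)) = φ (u * v) * conj (φ (u * v)) by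
          rw [map_mul, map_mul]; ring, huv]
      simp
    rw [hN, hN', map_mul, map_intCast, map_intCast] at this
    exact_mod_cast this
  have hN1 : N = 1 := by
    rcases Int.mul_eq_one_iff_eq_one_or_neg_one.1 hNN with h | h
    · exact h.1
    · have := hnn _ _ _ hTN; omega
  subst hN1
  have hsq : ((2 * b) * (3 ^ n - 1)) ^ 2 = (((4 - T ^ 2) * (3 ^ n - 1) : ℤ) : ℚ) := by
    push_cast; push_cast at hTN; linear_combination (-(3 ^ n - 1 : ℚ)) * hTN
  obtain ⟨W, hW⟩ := exists_intCast_eq_of_sq_eq hsq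
  rw [← hW] at hsq
  have hsq' : W ^ 2 = (4 - T ^ 2) * (3 ^ n - 1) := by exact_mod_cast hsq
  have h3' : (3 : ℤ) ≤ 3 ^ n := by exact_mod_cast h3
  have hT4 : T ^ 2 ≤ 4 := by
    by_contra! hlt
    nlinarith [sq_nonneg W]
  have hTl : -2 ≤ T := by nlinarith
  have hTu : T ≤ 2 := by nlinarith
  have hW16 := sq_emod_sixteen W
  have hn16 := three_pow_emod_sixteen hodd
  have hT2 : T = 2 ∨ T = -2 := by
    have : T = 2 ∨ T = -2 ∨ T = 1 ∨ T = -1 ∨ T = 0 := by omega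
    rcases this with h | h | rfl | rfl | rfl
    · exact Or.inl h
    · exact Or.inr h
    all_goals omega
  have hb : b = 0 := by
    have h0 : (4 * (1 : ℤ) - T ^ 2 : ℚ) = 0 := by rcases hT2 with rfl | rfl <;> norm_num
    rw [h0] at hTN
    have h1 : (3 ^ n - 1 : ℚ) ≠ 0 := by linarith
    simpa [h1] using hTN.symm
  rcases hT2 with rfl | rfl
  · exact Or.inl (hφi (by rw [hβ, hb]; simp))
  · exact Or.inr (hφi (by rw [hβ, hb]; simp))

/-- For `n ≠ 5`, the element `1 + z` of norm `3 ^ n` is not a proper power `β ^ m` with `m ∣ n`. -/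
theorem eq_of_pow_eq_one_add (hodd : Odd n) (hne : n ≠ 5) (hz : z ^ 2 = 1 - (3 : ℂ) ^ n)
    (hφi : Function.Injective φ)
    (hφ : ∀ w, (∃ x, φ x = w) ↔ IsIntegral ℤ w ∧ ∃ a b : ℚ, w = a + b * z)
    {s m : ℕ} (hsm : n = s * m) {β : O} (hβm : φ (β ^ m) = 1 + z) : s = n := by
  have hn : 0 < n := hodd.pos
  have hsodd : Odd s := Nat.Odd.of_mul_left (hsm ▸ hodd)
  have hmodd : Odd m := Nat.Odd.of_mul_right (hsm ▸ hodd)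
  have hspos : 0 < s := hsodd.pos
  have h3 : (3 : ℤ) ≤ 3 ^ n := le_self_pow₀ (by norm_num) hn.ne'
  have h3s : (3 : ℤ) ≤ 3 ^ s := le_self_pow₀ (by norm_num) hspos.ne'
  obtain ⟨γ, T, N, b, hγ, hT, hN, hβ, hTN⟩ := exists_trace_norm hn hz hφi hφ β
  have hγm : φ (γ ^ m) = 1 - z := by
    rw [map_pow, hγ, ← map_pow, ← map_pow, hβm]
    simp [conj_eq_neg_of_sq_eq hn hz]
    ring
  have hNs : N = 3 ^ s := by
    have h1 : φ ((β * γ) ^ m) = 3 ^ n := by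
      rw [mul_pow, map_mul, hβm, hγm]; linear_combination -hz
    rw [hN, map_pow, map_intCast] at h1
    have h2 : N ^ m = (3 ^ s) ^ m := by rw [← pow_mul, ← hsm]; exact_mod_cast h1
    exact hmodd.strictMono_pow.injective h2
  have hTdvd : T ∣ 2 := by
    obtain ⟨c, hc⟩ := hmodd.add_dvd_pow_add_pow β γ
    have h1 : (2 : ℂ) = T * φ c := by
      rw [hT] at hc
      have := congrArg φ hc
      rw [map_add, hβm, hγm, map_mul, map_intCast] at this
      linear_combination this
    have hT0 : (T : ℂ) ≠ 0 := by rintro h0; simp [h0] at h1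
    have hc2 : φ c = ((2 / T : ℚ) : ℂ) := by push_cast; field_simp; linear_combination -h1
    obtain ⟨k, hk⟩ := exists_intCast_eq_of_isIntegral (q := 2 / T)
      (hc2 ▸ ((hφ (φ c)).1 ⟨c, rfl⟩).1)
    have hT0' : (T : ℚ) ≠ 0 := by exact_mod_cast hT0
    refine ⟨k, ?_⟩
    rw [eq_div_iff hT0'] at hk
    have : k * T = 2 := by exact_mod_cast hk
    linarith
  subst hNs
  have hsq : ((2 * b) * (3 ^ n - 1)) ^ 2 = (((4 * 3 ^ s - T ^ 2) * (3 ^ n - 1) : ℤ) : ℚ) := by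
    push_cast; push_cast at hTN; linear_combination (-(3 ^ n - 1 : ℚ)) * hTN
  obtain ⟨W, hW⟩ := exists_intCast_eq_of_sq_eq hsq
  rw [← hW] at hsq
  have hsq' : W ^ 2 = (4 * 3 ^ s - T ^ 2) * (3 ^ n - 1) := by exact_mod_cast hsq
  have hTabs : T ^ 2 = 1 ∨ T ^ 2 = 4 := by
    have h1 := Int.le_of_dvd (by norm_num) hTdvd
    have h2 := Int.le_of_dvd (by norm_num) ((neg_dvd).2 hTdvd)
    have h3 : T = -2 ∨ T = -1 ∨ T = 0 ∨ T = 1 ∨ T = 2 := by omega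
    rcases h3 with rfl | rfl | rfl | rfl | rfl <;> simp_all
  rcases hTabs with hT1 | hT4
  · exfalso
    rw [hT1] at hsq'
    have hW16 := sq_emod_sixteen W
    have h1 := three_pow_emod_sixteen hodd
    have h2 := three_pow_emod_sixteen hsodd
    rw [hsq', Int.mul_emod] at hW16
    have h3 : (4 * (3 : ℤ) ^ s - 1) % 16 = 11 := by omega
    have h4 : ((3 : ℤ) ^ n - 1) % 16 = 2 ∨ ((3 : ℤ) ^ n - 1) % 16 = 10 := by omega
    rcases h4 with h4 | h4 <;> rw [h3, h4] at hW16 <;> norm_num at hW16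
  · rw [hT4] at hsq'
    obtain ⟨M, hM⟩ : (3 ^ s - 1 : ℤ) ∣ 3 ^ n - 1 := by
      rw [hsm, pow_mul]; simpa using sub_one_dvd_pow_sub_one ((3 : ℤ) ^ s) m
    have h5 : W ^ 2 = (2 * (3 ^ s - 1)) ^ 2 * M := by rw [hsq', hM]; ring
    obtain ⟨Y, rfl⟩ : 2 * (3 ^ s - 1) ∣ W := (Int.pow_dvd_pow_iff two_ne_zero).1 ⟨M, h5⟩
    have hMY : M = Y ^ 2 := by
      rw [mul_pow] at h5
      exact (mul_left_cancel₀ (pow_ne_zero 2 (by omega)) h5).symm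
    obtain ⟨k, rfl⟩ := hmodd
    have hnj : n = s + 2 * (s * k) := by rw [hsm]; ring
    rw [hMY, hnj] at hM
    rcases eq_zero_or_of_three_pow_sub_one_eq hspos hM with h | ⟨h, h'⟩ <;> omega


theorem span_pair_mul_span_pair {α α' : O} (hn : 1 < n) (hadd : α + α' = 2)
    (hmul : α * α' = 3 ^ n) :
    Ideal.span {3, α} * Ideal.span {3, α'} = Ideal.span {3} := by
  rw [Ideal.span_pair_mul_span_pair]
  apply le_antisymm
  · rw [Ideal.span_le]
    rintro x (rfl | rfl | rfl | rfl)
    · exact Ideal.mem_span_singleton.2 (Dvd.intro _ rfl)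
    · exact Ideal.mem_span_singleton.2 (Dvd.intro _ rfl)
    · exact Ideal.mem_span_singleton.2 (Dvd.intro_left _ rfl)
    · rw [hmul]
      exact Ideal.mem_span_singleton.2 (dvd_pow_self _ (by omega))
  · rw [Ideal.span_singleton_le_iff_mem]
    have h9 : (3 * 3 : O) ∈ Ideal.span {3 * 3, 3 * α', α * 3, α * α'} :=
      Ideal.subset_span (by simp)
    have h1 : 3 * α' ∈ Ideal.span {3 * 3, 3 * α', α * 3, α * α'} :=
      Ideal.subset_span (by simp)
    have h2 : α * 3 ∈ Ideal.span {3 * 3, 3 * α', α * 3, α * α'} :=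
      Ideal.subset_span (by simp)
    have h3 := sub_mem h9 (add_mem h1 h2)
    rwa [show (3 * 3 - (3 * α' + α * 3) : O) = 3 by linear_combination (-3) * hadd] at h3

theorem span_pair_ne_top (hn : 0 < n) (hz : z ^ 2 = 1 - (3 : ℂ) ^ n)
    (hφi : Function.Injective φ)
    (hφ : ∀ w, (∃ x, φ x = w) ↔ IsIntegral ℤ w ∧ ∃ a b : ℚ, w = a + b * z) {α α' : O}
    (hadd : α + α' = 2) (hmul : α * α' = 3 ^ n) (hα' : φ α' = conj (φ α)) :
    Ideal.span {3, α} ≠ ⊤ := by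
  rw [Ne, Ideal.eq_top_iff_one, Ideal.mem_span_pair]
  rintro ⟨u, v, huv⟩
  obtain ⟨k, rfl⟩ : ∃ k, n = k + 1 := ⟨n - 1, by omega⟩
  obtain ⟨δ, rfl⟩ : 3 ∣ α' := ⟨u * α' + 3 ^ k * v, by linear_combination v * hmul - α' * huv⟩
  obtain ⟨γ, T, N, b, hγ, hT, -, -, -⟩ := exists_trace_norm hn hz hφi hφ δ
  have hα : φ α = 3 * φ γ := by
    rw [hγ, ← Complex.conj_conj (φ α), ← hα']
    simp only [map_mul, map_ofNat]
  have h4 : (2 : ℂ) = 3 * T := by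
    have h6 := congrArg φ hadd
    have h7 := congrArg φ hT
    simp only [map_add, map_mul, map_ofNat, map_intCast, hα] at h6 h7
    linear_combination 3 * h7 - h6
  have h5 : (2 : ℤ) = 3 * T := by exact_mod_cast h4
  omega

variable [IsDedekindDomain O]

theorem span_pair_pow_eq {α α' : O} (hn : 1 < n) (hadd : α + α' = 2)
    (hmul : α * α' = 3 ^ n) :
    Ideal.span {3, α} ^ n = Ideal.span {α} := by
  have hcop : ∀ I J : Ideal O, 3 ∈ I → α ∈ I → α' ∈ J → IsCoprime I J := by
    intro I J h3 hα hα'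
    rw [Ideal.isCoprime_iff_exists]
    exact ⟨3 - α, sub_mem h3 hα, α' * (-1), J.mul_mem_right _ hα', by linear_combination -hadd⟩
  have hcop' : ∀ I J : Ideal O, 3 ∈ J → α ∈ I → α' ∈ J → IsCoprime I J := by
    intro I J h3 hα hα'
    rw [Ideal.isCoprime_iff_exists]
    exact ⟨-α, neg_mem hα, 3 - α', sub_mem h3 hα', by linear_combination -hadd⟩
  have hprod : Ideal.span {3, α} ^ n * Ideal.span {3, α'} ^ n =
      Ideal.span {α} * Ideal.span {α'} := by
    rw [← mul_pow, span_pair_mul_span_pair hn hadd hmul, Ideal.span_singleton_mul_span_singleton,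
      hmul, Ideal.span_singleton_pow]
  apply dvd_antisymm
  · refine IsCoprime.dvd_of_dvd_mul_right (z := Ideal.span {α'}) ?_ ⟨_, hprod.symm⟩
    exact IsCoprime.pow_left (hcop _ _ (Ideal.subset_span (by simp))
      (Ideal.subset_span (by simp)) (Ideal.subset_span (by simp)))
  · refine IsCoprime.dvd_of_dvd_mul_right (z := Ideal.span {3, α'} ^ n) ?_ ⟨_, hprod⟩
    exact IsCoprime.pow_right (hcop' _ _ (Ideal.subset_span (by simp))
      (Ideal.subset_span (by simp)) (Ideal.subset_span (by simp)))

theorem orderOf_mk0_span_pair (hn : 1 < n) (hodd : Odd n) (hne : n ≠ 5)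
    (hz : z ^ 2 = 1 - (3 : ℂ) ^ n) (hφi : Function.Injective φ)
    (hφ : ∀ w, (∃ x, φ x = w) ↔ IsIntegral ℤ w ∧ ∃ a b : ℚ, w = a + b * z) {α α' : O}
    (hadd : α + α' = 2) (hmul : α * α' = 3 ^ n) (hα : φ α = 1 + z)
    (hP : Ideal.span {3, α} ∈ nonZeroDivisors (Ideal O)) :
    orderOf (ClassGroup.mk0 ⟨Ideal.span {3, α}, hP⟩) = n := by
  have hmk : ∀ k, ClassGroup.mk0 ⟨Ideal.span {3, α}, hP⟩ ^ k = 1 ↔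
      (Ideal.span {3, α} ^ k).IsPrincipal := by
    intro k
    rw [← map_pow, SubmonoidClass.mk_pow, ClassGroup.mk0_eq_one_iff]
  have hpow := span_pair_pow_eq hn hadd hmul
  obtain ⟨m, hm⟩ : orderOf (ClassGroup.mk0 ⟨Ideal.span {3, α}, hP⟩) ∣ n :=
    orderOf_dvd_of_pow_eq_one ((hmk n).2 ⟨α, hpow⟩)
  obtain ⟨β, hβ⟩ := (hmk _).1 (pow_orderOf_eq_one _)
  set s := orderOf (ClassGroup.mk0 ⟨Ideal.span {3, α}, hP⟩)
  have hmodd : Odd m := Nat.Odd.of_mul_right (hm ▸ hodd)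
  have hassoc : Associated (β ^ m) α := by
    rw [← Ideal.span_singleton_eq_span_singleton, ← Ideal.span_singleton_pow, ← hpow, hm,
      pow_mul, hβ]
  obtain ⟨u, hu⟩ := hassoc
  rcases eq_one_or_neg_one_of_isUnit (by omega) hodd hz hφi hφ u.isUnit with h | h
  · exact eq_of_pow_eq_one_add hodd hne hz hφi hφ hm (β := β) (by rw [← hα, ← hu, h, mul_one])
  · exact eq_of_pow_eq_one_add hodd hne hz hφi hφ hm (β := -β) (by
      rw [← hα, ← hu, h, hmodd.neg_pow, mul_neg_one])

end QuadraticIntegers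

theorem finrank_adjoin_le_two {n : ℕ} {z : ℂ} (hz : z ^ 2 = 1 - (3 : ℂ) ^ n) :
    Module.finrank ℚ (IntermediateField.adjoin ℚ {z}) ≤ 2 := by
  have hmonic : (Polynomial.X ^ 2 - Polynomial.C (1 - 3 ^ n : ℚ)).Monic :=
    Polynomial.monic_X_pow_sub_C _ two_ne_zero
  have hroot : Polynomial.aeval z (Polynomial.X ^ 2 - Polynomial.C (1 - 3 ^ n : ℚ)) = 0 := by
    simp [hz]
  rw [IntermediateField.adjoin.finrank ⟨_, hmonic, hroot⟩]
  refine (Polynomial.natDegree_le_natDegree (minpoly.min ℚ z hmonic hroot)).trans ?_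
  rw [Polynomial.natDegree_X_pow_sub_C]

/-- Let `p = 3` and let `n` be an odd integer greater than `1` with `n ≠ 5`. Then `3` splits
in the imaginary quadratic field `K = ℚ(√(1 − 3^n))`, and for any prime ideal `℘` of the ring
of integers of `K` lying over `3`, the order of the ideal class of `℘` in the ideal class
group of `K` is exactly `n`. -/
theorem stmt_8 (n : ℕ) (hn : 1 < n) (hodd : Odd n) (hne : n ≠ 5)
    (z : ℂ) (hz : z ^ 2 = 1 - (3 : ℂ) ^ n)
    (K : IntermediateField ℚ ℂ) (hK : K = IntermediateField.adjoin ℚ {z})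
    [NumberField K] :
    (∃ P Q : Ideal (NumberField.RingOfIntegers K), P ≠ Q ∧ P.IsPrime ∧ Q.IsPrime ∧
        P * Q = Ideal.span {(3 : NumberField.RingOfIntegers K)}) ∧
    ∀ (P : Ideal (NumberField.RingOfIntegers K)), P.IsPrime →
      (3 : NumberField.RingOfIntegers K) ∈ P → ∀ (hP0 : P ≠ 0),
      orderOf (ClassGroup.mk0 ⟨P, mem_nonZeroDivisors_of_ne_zero hP0⟩) = n := by
  have hn0 : 0 < n := by omega
  let φ : NumberField.RingOfIntegers K →+* ℂ :=
    (algebraMap K ℂ).comp (algebraMap (NumberField.RingOfIntegers K) K)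
  have hφi : Function.Injective φ :=
    (algebraMap K ℂ).injective.comp NumberField.RingOfIntegers.coe_injective
  have hzK : z ∈ K := hK ▸ IntermediateField.mem_adjoin_simple_self ℚ z
  have hφ : ∀ w, (∃ x, φ x = w) ↔ IsIntegral ℤ w ∧ ∃ a b : ℚ, w = a + b * z := by
    intro w
    constructor
    · rintro ⟨x, rfl⟩
      refine ⟨x.isIntegral_coe.map (algebraMap K ℂ).toIntAlgHom, ?_⟩
      refine exists_rat_add_rat_mul_of_mem_adjoin hn0 hz ?_
      rw [← hK]
      exact (algebraMap (NumberField.RingOfIntegers K) K x).2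
    · rintro ⟨hw, a, b, hab⟩
      have hwK : w ∈ K := by
        rw [hab]
        exact add_mem (K.algebraMap_mem a) (mul_mem (K.algebraMap_mem b) hzK)
      have hw' : IsIntegral ℤ (⟨w, hwK⟩ : K) :=
        (isIntegral_algHom_iff (algebraMap K ℂ).toIntAlgHom (algebraMap K ℂ).injective).1 hw
      exact ⟨⟨_, hw'⟩, rfl⟩
  have hzint : IsIntegral ℤ z := by
    refine IsIntegral.of_pow two_pos ?_
    rw [hz, show (1 - 3 ^ n : ℂ) = ((1 - 3 ^ n : ℤ) : ℂ) by push_cast; rfl]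
    exact isIntegral_algebraMap (R := ℤ) (A := ℂ)
  obtain ⟨ζ, hζ⟩ := (hφ z).2 ⟨hzint, 0, 1, by simp⟩
  have hconj := conj_eq_neg_of_sq_eq hn0 hz
  have hadd : (1 + ζ) + (1 - ζ) = 2 := by ring
  have hmul : (1 + ζ) * (1 - ζ) = 3 ^ n := hφi (by
    simp only [map_mul, map_add, map_sub, map_one, map_pow, map_ofNat, hζ]
    linear_combination -hz)
  have hα : φ (1 + ζ) = 1 + z := by rw [map_add, map_one, hζ]
  have hα' : φ (1 - ζ) = 1 + -z := by rw [map_sub, map_one, hζ, sub_eq_add_neg]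
  have hadd' : (1 - ζ) + (1 + ζ) = 2 := by ring
  have hmul' : (1 - ζ) * (1 + ζ) = 3 ^ n := by rw [mul_comm, hmul]
  have hPQ := span_pair_mul_span_pair hn hadd hmul
  have hPtop := span_pair_ne_top hn0 hz hφi hφ hadd hmul (by rw [hα, hα']; simp [hconj])
  have hQtop := span_pair_ne_top hn0 hz hφi hφ hadd' hmul' (by rw [hα, hα']; simp [hconj])
  set P : Ideal (NumberField.RingOfIntegers K) := Ideal.span {3, 1 + ζ} with hP
  set Q : Ideal (NumberField.RingOfIntegers K) := Ideal.span {3, 1 - ζ} with hQ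
  have hnorm : Ideal.absNorm P * Ideal.absNorm Q = 3 ^ Module.finrank ℚ K := by
    rw [← map_mul, hPQ, Ideal.absNorm_span_singleton,
      show (3 : NumberField.RingOfIntegers K) = algebraMap ℤ _ 3 by simp, Algebra.norm_algebraMap,
      NumberField.RingOfIntegers.rank]
    simp [Int.natAbs_pow]
  have hrank : Module.finrank ℚ K ≤ 2 := by rw [hK]; exact finrank_adjoin_le_two hz
  have hprime : P.IsPrime ∧ Q.IsPrime := by
    obtain ⟨a, -, ha⟩ := (Nat.dvd_prime_pow Nat.prime_three).1 (Dvd.intro _ hnorm)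
    obtain ⟨b, -, hb⟩ := (Nat.dvd_prime_pow Nat.prime_three).1 (Dvd.intro_left _ hnorm)
    have hab : a + b = Module.finrank ℚ K := by
      rw [ha, hb, ← pow_add] at hnorm
      exact Nat.pow_right_injective (by norm_num) hnorm
    have ha0 : a ≠ 0 := by
      rintro rfl; exact hPtop (Ideal.absNorm_eq_one_iff.1 (by simpa using ha))
    have hb0 : b ≠ 0 := by
      rintro rfl; exact hQtop (Ideal.absNorm_eq_one_iff.1 (by simpa using hb))
    obtain rfl : a = 1 := by omega
    obtain rfl : b = 1 := by omega
    constructor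
    · exact Ideal.isPrime_of_irreducible_absNorm (by rw [ha]; exact Nat.prime_three)
    · exact Ideal.isPrime_of_irreducible_absNorm (by rw [hb]; exact Nat.prime_three)
  have h3P : 3 ∈ P := Ideal.subset_span (by simp)
  have h3Q : 3 ∈ Q := Ideal.subset_span (by simp)
  have h30 : (3 : NumberField.RingOfIntegers K) ≠ 0 := by norm_num
  have hPbot : P ≠ ⊥ := fun h => h30 (by rwa [h, Ideal.mem_bot] at h3P)
  have hQbot : Q ≠ ⊥ := fun h => h30 (by rwa [h, Ideal.mem_bot] at h3Q)
  refine ⟨⟨P, Q, ?_, hprime.1, hprime.2, hPQ⟩, ?_⟩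
  · intro h
    have h1 : 1 + ζ ∈ P := Ideal.subset_span (by simp)
    have h2 : 1 - ζ ∈ P := h ▸ Ideal.subset_span (by simp)
    refine hPtop ((Ideal.eq_top_iff_one P).2 ?_)
    have := sub_mem h3P (add_mem h1 h2)
    rwa [hadd, show (3 - 2 : NumberField.RingOfIntegers K) = 1 by norm_num] at this
  · intro R hR h3R hR0
    have hle : P * Q ≤ R := by rw [hPQ, Ideal.span_singleton_le_iff_mem]; exact h3R
    rcases hR.mul_le.1 hle with h | h
    · obtain rfl := (hprime.1.isMaximal hPbot).eq_of_le hR.ne_top h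
      exact orderOf_mk0_span_pair hn hodd hne hz hφi hφ hadd hmul hα _
    · obtain rfl := (hprime.2.isMaximal hQbot).eq_of_le hR.ne_top h
      refine orderOf_mk0_span_pair hn hodd hne (z := -z) (by rw [neg_sq, hz]) hφi ?_ hadd' hmul'
        hα' _
      intro w
      rw [hφ w]
      refine and_congr_right fun _ => ⟨?_, ?_⟩
      · rintro ⟨a, b, h⟩; exact ⟨a, -b, by rw [h]; push_cast; ring⟩
      · rintro ⟨a, b, h⟩; exact ⟨a, -b, by rw [h]; push_cast; ring⟩
end
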